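/- Let k be a number field and n ∈ ℤ_{≥0}. Then the set k^× − k^{×2^n} of nonzero elements of k that are not 2^n-th powers is diophantine over k. -/

import Mathlib

/-- A subset `A ⊆ k^n` is diophantine over `k` if there exist `m ∈ ℕ` and finitely many
polynomials `f₁, …, f_r ∈ k[x₁, …, x_{n+m}]` such that
`A = {a ∈ k^n : ∃ b ∈ k^m, f_i(a,b) = 0 for all i}`. -/
def IsDiophantine (k : Type*) [Field k] {n : ℕ} (A : Set (Fin n → k)) : Prop :=
  ∃ (m r : ℕ) (f : Fin r → MvPolynomial (Fin (n + m)) k),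
    A = {a : Fin n → k | ∃ b : Fin m → k,
      ∀ i : Fin r, MvPolynomial.eval (Fin.append a b) (f i) = 0}

/-- A subset of `k` is diophantine if the corresponding subset of `k¹` is. -/
def IsDiophantineSet (k : Type*) [Field k] (A : Set k) : Prop :=
  IsDiophantine k {x : Fin 1 → k | x 0 ∈ A}

/-!
Choose primes `p`, `q` such that none of `p`, `q`, `pq` is a square in `k`, with `q ≡ 1 mod 8` and
`p` a square modulo `q`. Let `H ≤ kˣ` be the subgroup generated by the nonzero values of `x² - c y²`
for `c ∈ {p, q, pq}`; as a set it is diophantine. Since one of `p`, `q`, `pq` is a square modulo any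
given prime ideal, Thue's lemma and Dirichlet's unit theorem show that `H` has finite index.

If `t` is a nonzero square, then all nonzero values of `x² - q t y²` lie in `H`. Conversely, if none
of `t`, `pt`, `qt`, `pqt` is a square, then some nonzero value of `x² - q t y²` lies outside `H`.
Indeed, consider the sign character of `ℚˣ` that is `-1` exactly at the primes inert in both `ℚ(√p)`
and `ℚ(√q)`. By quadratic reciprocity its composition with the norm from `k` is trivial on `H`, so
it suffices to find an element of `M = k(√(qt))` at whose norm to `ℚ` it is `-1`. If there were
none, it would define a class group character `ψ` of `M`. Comparing the zeta functions of `M`, its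
quadratic extensions and `M(√p, √q)` shows that `ψ` is nontrivial and that the primes where it is
`-1` have density less than `1/2`; this contradicts the boundedness of `L(s, ψ)` near `s = 1`.

So a nonzero `t` is a non-square iff one of `pt`, `qt`, `pqt` is a square or `x² - q t y²`
represents an element of one of the finitely many cosets `dH ≠ H`. Finally, `s²` is a `2ⁿ⁺¹`-th
power iff `s` or `-s` is a `2ⁿ`-th power, so the non-`2ⁿ⁺¹`-th powers are the non-squares together
with the squares of those `s` for which neither `s` nor `-s` is a `2ⁿ`-th power.
-/

/-! ### Diophantine sets over an arbitrary type of coordinates -/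

/-- The version of `IsDiophantine` for an arbitrary type `σ` of coordinates, with witnesses and
equations indexed by finite types; it is stable under the usual set operations without any
reindexing by `Fin`. -/
def IsDiophantineIn {k σ : Type*} [Field k] (A : Set (σ → k)) : Prop :=
  ∃ (τ ι : Type) (_ : Finite τ) (_ : Finite ι) (f : ι → MvPolynomial (σ ⊕ τ) k),
    A = {a | ∃ b : τ → k, ∀ i, MvPolynomial.eval (Sum.elim a b) (f i) = 0}

namespace IsDiophantineIn

open MvPolynomial

variable {k σ : Type*} [Field k] {A B : Set (σ → k)}

lemma isDiophantine {n : ℕ} {A : Set (Fin n → k)} (hA : IsDiophantineIn A) :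
    IsDiophantine k A := by
  obtain ⟨τ, ι, _, _, f, rfl⟩ := hA
  obtain ⟨m, ⟨e⟩⟩ := Finite.exists_equiv_fin τ
  obtain ⟨r, ⟨e'⟩⟩ := Finite.exists_equiv_fin ι
  refine ⟨m, r, fun i ↦ rename (Sum.elim (Fin.castAdd m) (Fin.natAdd n ∘ e)) (f (e'.symm i)), ?_⟩
  have key (a : Fin n → k) (b : Fin m → k) :
      Fin.append a b ∘ Sum.elim (Fin.castAdd m) (Fin.natAdd n ∘ e) = Sum.elim a (b ∘ e) := by
    ext (i | i) <;> simp
  ext a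
  simp only [Set.mem_ofPred_eq, eval_rename, key]
  rw [← (e.arrowCongr (Equiv.refl k)).symm.exists_congr_right]
  refine exists_congr fun b ↦ ?_
  rw [← e'.symm.forall_congr_right]
  rfl

lemma zeroLocus {ι : Type} [Finite ι] (f : ι → MvPolynomial σ k) :
    IsDiophantineIn {a | ∀ i, eval a (f i) = 0} := by
  refine ⟨Empty, ι, inferInstance, inferInstance, fun i ↦ rename Sum.inl (f i), ?_⟩
  ext a
  simp [eval_rename, Sum.elim_comp_inl]

lemma union (hA : IsDiophantineIn A) (hB : IsDiophantineIn B) : IsDiophantineIn (A ∪ B) := by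
  obtain ⟨τ, ι, _, _, f, rfl⟩ := hA
  obtain ⟨τ', ι', _, _, g, rfl⟩ := hB
  refine ⟨τ ⊕ τ', ι × ι', inferInstance, inferInstance,
    fun i ↦ rename (Sum.map id Sum.inl) (f i.1) * rename (Sum.map id Sum.inr) (g i.2), ?_⟩
  ext a
  simp only [Set.mem_union, Set.mem_ofPred_eq, map_mul, eval_rename, mul_eq_zero, Sum.elim_comp_map,
    Function.comp_id]
  constructor
  · rintro (⟨b, hb⟩ | ⟨b, hb⟩)
    · exact ⟨Sum.elim b 0, fun i ↦ Or.inl (by simpa [Sum.elim_comp_inl] using hb i.1)⟩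
    · exact ⟨Sum.elim 0 b, fun i ↦ Or.inr (by simpa [Sum.elim_comp_inr] using hb i.2)⟩
  · rintro ⟨b, hb⟩
    by_contra! h
    obtain ⟨i, hi⟩ := h.1 (b ∘ Sum.inl)
    obtain ⟨j, hj⟩ := h.2 (b ∘ Sum.inr)
    exact (hb (i, j)).elim hi hj

lemma inter (hA : IsDiophantineIn A) (hB : IsDiophantineIn B) : IsDiophantineIn (A ∩ B) := by
  obtain ⟨τ, ι, _, _, f, rfl⟩ := hA
  obtain ⟨τ', ι', _, _, g, rfl⟩ := hB
  refine ⟨τ ⊕ τ', ι ⊕ ι', inferInstance, inferInstance,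
    Sum.elim (fun i ↦ rename (Sum.map id Sum.inl) (f i))
      (fun i ↦ rename (Sum.map id Sum.inr) (g i)), ?_⟩
  ext a
  simp only [Set.mem_inter_iff, Set.mem_ofPred_eq, Sum.forall, Sum.elim_inl, Sum.elim_inr,
    eval_rename, Sum.elim_comp_map, Function.comp_id]
  constructor
  · rintro ⟨⟨b, hb⟩, c, hc⟩
    exact ⟨Sum.elim b c, by simpa [Sum.elim_comp_inl, Sum.elim_comp_inr] using ⟨hb, hc⟩⟩
  · rintro ⟨b, hb, hc⟩
    exact ⟨⟨_, hb⟩, _, hc⟩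

lemma biUnion {ι : Type*} {s : Set ι} (hs : s.Finite) {A : ι → Set (σ → k)}
    (hA : ∀ i ∈ s, IsDiophantineIn (A i)) : IsDiophantineIn (⋃ i ∈ s, A i) := by
  induction s, hs using Set.Finite.induction_on with
  | empty => simpa using zeroLocus fun _ : Unit ↦ (1 : MvPolynomial σ k)
  | insert _ _ ih =>
    rw [Set.biUnion_insert]
    exact (hA _ (Set.mem_insert _ _)).union (ih fun i hi ↦ hA i (Set.mem_insert_of_mem _ hi))

lemma preimage {ρ : Type*} (hA : IsDiophantineIn A) (φ : σ → MvPolynomial ρ k) :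
    IsDiophantineIn {a : ρ → k | (fun i ↦ eval a (φ i)) ∈ A} := by
  obtain ⟨τ, ι, _, _, f, rfl⟩ := hA
  let g : σ ⊕ τ → MvPolynomial (ρ ⊕ τ) k :=
    Sum.elim (fun s ↦ rename Sum.inl (φ s)) fun t ↦ X (Sum.inr t)
  refine ⟨τ, ι, inferInstance, inferInstance, fun i ↦ bind₁ g (f i), ?_⟩
  ext a
  refine exists_congr fun b ↦ forall_congr' fun i ↦ ?_
  have hg : Sum.elim (fun i ↦ eval a (φ i)) b = fun s ↦ eval (Sum.elim a b) (g s) := by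
    ext (s | s) <;> simp [g, eval_rename, Sum.elim_comp_inl]
  have h : eval (Sum.elim a b) (bind₁ g (f i)) = eval (fun s ↦ eval (Sum.elim a b) (g s)) (f i) :=
    eval₂Hom_bind₁ _ _ _ _
  rw [hg, h]

lemma projection {τ : Type} [Finite τ] {A : Set (σ ⊕ τ → k)} (hA : IsDiophantineIn A) :
    IsDiophantineIn {a : σ → k | ∃ b : τ → k, Sum.elim a b ∈ A} := by
  obtain ⟨τ', ι, _, _, f, rfl⟩ := hA
  refine ⟨τ ⊕ τ', ι, inferInstance, inferInstance,
    fun i ↦ rename (Equiv.sumAssoc σ τ τ') (f i), ?_⟩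
  have key (a : σ → k) (b : τ → k) (c : τ' → k) :
      Sum.elim a (Sum.elim b c) ∘ Equiv.sumAssoc σ τ τ' = Sum.elim (Sum.elim a b) c := by
    ext ((i | i) | i) <;> rfl
  ext a
  simp only [Set.mem_ofPred_eq, eval_rename]
  constructor
  · rintro ⟨b, c, h⟩
    exact ⟨Sum.elim b c, by simpa only [key] using h⟩
  · rintro ⟨b, h⟩
    refine ⟨b ∘ Sum.inl, b ∘ Sum.inr, ?_⟩
    rwa [← key, Sum.elim_comp_inl_inr]

lemma exists_zeroLocus {τ ι : Type} [Finite τ] [Finite ι] (f : ι → MvPolynomial (σ ⊕ τ) k) :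
    IsDiophantineIn {a : σ → k | ∃ b : τ → k, ∀ i, eval (Sum.elim a b) (f i) = 0} :=
  ⟨τ, ι, inferInstance, inferInstance, f, rfl⟩

lemma ne_zero (i : σ) : IsDiophantineIn {a : σ → k | a i ≠ 0} := by
  convert exists_zeroLocus (τ := Unit) (ι := Unit)
    (fun _ ↦ X (Sum.inl i) * X (Sum.inr ()) - 1 : Unit → MvPolynomial (σ ⊕ Unit) k) using 1
  ext a
  simp only [Set.mem_ofPred_eq, map_sub, map_mul, map_one, eval_X, Sum.elim_inl, Sum.elim_inr,
    forall_const, sub_eq_zero]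
  exact ⟨fun h ↦ ⟨fun _ ↦ (a i)⁻¹, mul_inv_cancel₀ h⟩, fun ⟨b, h⟩ ↦ left_ne_zero_of_mul_eq_one h⟩

end IsDiophantineIn

/-! ### Inert primes and quadratic reciprocity -/

lemma exists_isCoprime_sq_sub_mul_sq {c x y : ℤ} (h : x ^ 2 - c * y ^ 2 ≠ 0) :
    ∃ g u v : ℤ, g ≠ 0 ∧ IsCoprime u v ∧
      x ^ 2 - c * y ^ 2 = g ^ 2 * (u ^ 2 - c * v ^ 2) := by
  have hxy : 0 < Int.gcd x y := Int.gcd_pos_iff.2 <| by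
    contrapose! h
    simp [h.1, h.2]
  obtain ⟨u, v, huv, hx, hy⟩ := Int.exists_gcd_one hxy
  refine ⟨Int.gcd x y, u, v, by exact_mod_cast hxy.ne', Int.isCoprime_iff_gcd_eq_one.2 huv, ?_⟩
  linear_combination (x + u * Int.gcd x y) * hx - c * (y + v * Int.gcd x y) * hy

lemma even_factorization_natAbs_sq_sub_mul_sq {c : ℤ} {p : ℕ} (hp : p.Prime)
    (hc : jacobiSym c p = -1) (x y : ℤ) :
    Even ((x ^ 2 - c * y ^ 2).natAbs.factorization p) := by
  have := Fact.mk hp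
  rcases eq_or_ne (x ^ 2 - c * y ^ 2) 0 with h0 | h0
  · simp [h0]
  obtain ⟨g, u, v, hg, huv, h⟩ := exists_isCoprime_sq_sub_mul_sq h0
  have hndvd : ¬ p ∣ (u ^ 2 - c * v ^ 2).natAbs := fun hdvd ↦ by
    rw [← jacobiSym.legendreSym.to_jacobiSym] at hc
    obtain ⟨hu, hv⟩ := legendreSym.prime_dvd_of_eq_neg_one hc (Int.natCast_dvd.2 hdvd)
    exact (Nat.prime_iff_prime_int.1 hp).not_isUnit (huv.isUnit_of_dvd' hu hv)
  rw [h] at h0 ⊢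
  rw [Int.natAbs_mul, Int.natAbs_pow, Nat.factorization_mul
    (pow_ne_zero 2 (Int.natAbs_ne_zero.2 hg)) (Int.natAbs_ne_zero.2 (right_ne_zero_of_mul h0)),
    Finsupp.add_apply, Nat.factorization_eq_zero_of_not_dvd hndvd, Nat.factorization_pow]
  simp

lemma jacobiSym_self_of_prime {p : ℕ} (hp : p.Prime) : jacobiSym p p = 0 := by
  have := Fact.mk hp
  rw [← jacobiSym.legendreSym.to_jacobiSym, legendreSym.eq_zero_iff]
  simp

lemma jacobiSym_eq_one_or_neg_one_of_not_dvd {l : ℕ} (hl : l.Prime) {c : ℤ} (hc : ¬ (l : ℤ) ∣ c) :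
    jacobiSym c l = 1 ∨ jacobiSym c l = -1 :=
  jacobiSym.eq_one_or_neg_one <| Int.isCoprime_iff_gcd_eq_one.1
    ((Nat.prime_iff_prime_int.1 hl).coprime_iff_not_dvd.2 hc).symm

lemma not_dvd_of_jacobiSym_ne_zero {l : ℕ} (hl : l.Prime) {c : ℤ} (hc : jacobiSym c l ≠ 0) :
    ¬ (l : ℤ) ∣ c := fun hdvd ↦ by
  have := Fact.mk hl
  rw [← jacobiSym.legendreSym.to_jacobiSym, ne_eq, legendreSym.eq_zero_iff,
    ZMod.intCast_zmod_eq_zero_iff_dvd] at hc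
  exact hc hdvd

lemma jacobiSym_mul_sq_of_not_dvd {q : ℕ} (hq : q.Prime) (z : ℤ) {w : ℤ} (hw : ¬ (q : ℤ) ∣ w) :
    jacobiSym (z * w ^ 2) q = jacobiSym z q := by
  have hcop : w.gcd q = 1 := Int.isCoprime_iff_gcd_eq_one.1
    ((Nat.prime_iff_prime_int.1 hq).coprime_iff_not_dvd.2 hw).symm
  rw [jacobiSym.mul_left, jacobiSym.sq_one' hcop, mul_one]

lemma jacobiSym_eq_of_dvd_sub {a b : ℤ} {q : ℕ} (h : (q : ℤ) ∣ a - b) :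
    jacobiSym a q = jacobiSym b q :=
  jacobiSym.mod_left' (Int.modEq_iff_dvd.2 h).symm

lemma jacobiSym_natCast_eq_factorization_prod (q : ℕ) {m : ℕ} (hm : m ≠ 0) :
    jacobiSym m q = m.factorization.prod fun p e ↦ jacobiSym p q ^ e := by
  conv_lhs => rw [← Nat.prod_factorization_pow_eq_self hm]
  unfold Finsupp.prod
  push_cast
  induction m.factorization.support using Finset.induction_on with
  | empty => simp [jacobiSym.one_left]
  | insert p s hp ih =>
    rw [Finset.prod_insert hp, Finset.prod_insert hp, jacobiSym.mul_left, ih, jacobiSym.pow_left]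

lemma jacobiSym_natAbs {q : ℕ} (hq : q % 4 = 1) (z : ℤ) :
    jacobiSym z.natAbs q = jacobiSym z q := by
  rcases Int.natAbs_eq z with h | h
  · rw [← h]
  · conv_rhs => rw [h, jacobiSym.neg _ (Nat.odd_iff.2 (by lia)),
      ZMod.χ₄_nat_one_mod_four hq, one_mul]

lemma jacobiSym_two_left {q : ℕ} (hq : q % 8 = 1) : jacobiSym 2 q = 1 := by
  rw [jacobiSym.at_two (Nat.odd_iff.2 (by lia)), ZMod.χ₈_nat_eq_if_mod_eight, hq]
  simp [show q % 2 ≠ 0 by lia]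

lemma jacobiSym_comm_of_prime {l q : ℕ} (hl : l.Prime) (hq : q % 8 = 1) :
    jacobiSym l q = jacobiSym q l := by
  rcases hl.eq_two_or_odd' with rfl | hl
  · rw [Nat.cast_two, jacobiSym_two_left hq,
      jacobiSym.mod_left' (a₂ := 1) (by lia), jacobiSym.one_left]
  · exact (jacobiSym.quadratic_reciprocity_one_mod_four (by lia) hl).symm

lemma pow_eq_one_of_even {R : Type*} [Monoid R] [HasDistribNeg R] {x : R} {n : ℕ} (hn : Even n)
    (hx : x = 1 ∨ x = -1) : x ^ n = 1 := by
  rcases hx with rfl | rfl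
  exacts [one_pow n, hn.neg_one_pow]

/-- The sign attached to a prime `p`: it is `-1` exactly when `p` is inert in both quadratic fields
`ℚ(√a)` and `ℚ(√b)`, as detected by the Jacobi symbol. -/
def inertSign (a b : ℤ) (p : ℕ) : ℤˣ :=
  if jacobiSym a p = -1 ∧ jacobiSym b p = -1 then -1 else 1

/-- The completely multiplicative function on positive integers extending `inertSign a b`. -/
def inertChar (a b : ℤ) (n : ℕ) : ℤˣ :=
  n.factorization.prod fun p e ↦ inertSign a b p ^ e

/-- The extension of `inertChar a b` to nonzero rational numbers. -/
def ratInertChar (a b : ℤ) (r : ℚ) : ℤˣ :=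
  inertChar a b r.num.natAbs / inertChar a b r.den

section InertChar

variable {a b : ℤ}

@[simp] lemma inertChar_one : inertChar a b 1 = 1 := by simp [inertChar]

lemma inertChar_prime {p : ℕ} (hp : p.Prime) : inertChar a b p = inertSign a b p := by
  simp [inertChar, hp.factorization]

lemma inertChar_mul {m n : ℕ} (hm : m ≠ 0) (hn : n ≠ 0) :
    inertChar a b (m * n) = inertChar a b m * inertChar a b n := by
  unfold inertChar
  rw [Nat.factorization_mul hm hn]
  exact Finsupp.prod_add_index' (fun _ ↦ pow_zero _) (fun _ _ _ ↦ pow_add _ _ _)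

lemma inertChar_sq_mul {m n : ℕ} (hm : m ≠ 0) (hn : n ≠ 0) :
    inertChar a b (m ^ 2 * n) = inertChar a b n := by
  rw [sq, inertChar_mul (mul_ne_zero hm hm) hn, inertChar_mul hm hm, Int.units_mul_self, one_mul]

lemma inertChar_eq_one_of_even {n : ℕ}
    (h : ∀ p : ℕ, p.Prime → jacobiSym a p = -1 → jacobiSym b p = -1 → Even (n.factorization p)) :
    inertChar a b n = 1 := by
  unfold inertChar Finsupp.prod inertSign
  refine Finset.prod_eq_one fun p hp ↦ ?_
  beta_reduce
  split_ifs with hab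
  · exact (h p (Nat.prime_of_mem_primeFactors hp) hab.1 hab.2).neg_one_pow
  · exact one_pow _

lemma inertChar_sq_sub_mul_sq_left (x y : ℤ) : inertChar a b (x ^ 2 - a * y ^ 2).natAbs = 1 :=
  inertChar_eq_one_of_even fun _ hp ha _ ↦ even_factorization_natAbs_sq_sub_mul_sq hp ha x y

lemma inertChar_sq_sub_mul_sq_right (x y : ℤ) : inertChar a b (x ^ 2 - b * y ^ 2).natAbs = 1 :=
  inertChar_eq_one_of_even fun _ hp _ hb ↦ even_factorization_natAbs_sq_sub_mul_sq hp hb x y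

lemma ratInertChar_intCast_div {m n : ℤ} (hm : m ≠ 0) (hn : n ≠ 0) :
    ratInertChar a b (m / n : ℚ) = inertChar a b m.natAbs / inertChar a b n.natAbs := by
  set r : ℚ := m / n with hr
  have hr0 : r ≠ 0 := by simp [hr, hm, hn]
  have hcross : r.num * n = m * r.den := by
    have h : (r.num : ℚ) / r.den = m / n := by rw [Rat.num_div_den]
    rw [div_eq_div_iff (by exact_mod_cast r.den_nz) (by exact_mod_cast hn)] at h
    exact_mod_cast h
  have habs : r.num.natAbs * n.natAbs = m.natAbs * r.den := by
    simpa only [Int.natAbs_mul, Int.natAbs_natCast] using congrArg Int.natAbs hcross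
  rw [ratInertChar, div_eq_div_iff_mul_eq_mul, ← inertChar_mul (by simpa using hr0) (by simpa),
    habs, inertChar_mul (by simpa) r.den_nz]

lemma ratInertChar_mul {r s : ℚ} (hr : r ≠ 0) (hs : s ≠ 0) :
    ratInertChar a b (r * s) = ratInertChar a b r * ratInertChar a b s := by
  have hrs : r * s = ((r.num * s.num : ℤ) : ℚ) / ((r.den * s.den : ℤ) : ℚ) := by
    conv_lhs => rw [← Rat.num_div_den r, ← Rat.num_div_den s]
    push_cast
    rw [div_mul_div_comm]
  have hr' : r.num ≠ 0 := Rat.num_ne_zero.2 hr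
  have hs' : s.num ≠ 0 := Rat.num_ne_zero.2 hs
  rw [hrs, ratInertChar_intCast_div (mul_ne_zero hr' hs')
    (by exact_mod_cast mul_ne_zero r.den_nz s.den_nz)]
  simp only [Int.natAbs_mul, Int.natAbs_natCast]
  rw [inertChar_mul (by simpa using hr) (by simpa using hs), inertChar_mul r.den_nz s.den_nz,
    ratInertChar, ratInertChar, div_mul_div_comm]

lemma ratInertChar_intCast (n : ℤ) : ratInertChar a b n = inertChar a b n.natAbs := by
  simp [ratInertChar]

lemma ratInertChar_sq_sub_mul_sq {c : ℤ}
    (hc : ∀ x y : ℤ, x ^ 2 - c * y ^ 2 ≠ 0 → inertChar a b (x ^ 2 - c * y ^ 2).natAbs = 1)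
    {x y : ℚ} (h : x ^ 2 - c * y ^ 2 ≠ 0) : ratInertChar a b (x ^ 2 - c * y ^ 2) = 1 := by
  set X : ℤ := x.num * y.den with hX
  set Y : ℤ := y.num * x.den with hY
  set D : ℤ := x.den * y.den with hD
  have hD0 : D ≠ 0 := by rw [hD]; exact_mod_cast mul_ne_zero x.den_nz y.den_nz
  have hform : x ^ 2 - c * y ^ 2 = ((X ^ 2 - c * Y ^ 2 : ℤ) : ℚ) / ((D ^ 2 : ℤ) : ℚ) := by
    have hx0 : (x.den : ℚ) ≠ 0 := by exact_mod_cast x.den_nz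
    have hy0 : (y.den : ℚ) ≠ 0 := by exact_mod_cast y.den_nz
    rw [hX, hY, hD]
    conv_lhs => rw [← Rat.num_div_den x, ← Rat.num_div_den y]
    push_cast
    field_simp
  have hN : X ^ 2 - c * Y ^ 2 ≠ 0 := fun h0 ↦ h (by rw [hform, h0, Int.cast_zero, zero_div])
  rw [hform, ratInertChar_intCast_div hN (pow_ne_zero 2 hD0), hc X Y hN, one_div, inv_eq_one,
    Int.natAbs_pow, ← mul_one (_ ^ 2), inertChar_sq_mul (by simpa using hD0) one_ne_zero,
    inertChar_one]

end InertChar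

/-- The conditions on two primes `p`, `q` under which, by quadratic reciprocity, the character
`inertChar p q` is trivial on the values of the form `x ^ 2 - p * q * y ^ 2`. -/
structure LinkedPrimes (p q : ℕ) : Prop where
  left_prime : p.Prime
  right_prime : q.Prime
  right_mod : q % 8 = 1
  left_square : jacobiSym p q = 1

namespace LinkedPrimes

variable {p q : ℕ}

lemma inertSign_eq_jacobiSym (h : LinkedPrimes p q) {l : ℕ} (hl : l.Prime) (hlq : l ≠ q)
    (hpq : jacobiSym (p * q) l ≠ -1) : (inertSign p q l : ℤ) = jacobiSym l q := by
  rcases eq_or_ne l p with rfl | hlp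
  · rw [h.left_square]
    simp [inertSign, jacobiSym_self_of_prime hl]
  have hdvd {r : ℕ} (hr : r.Prime) (hlr : l ≠ r) : ¬ (l : ℤ) ∣ r := by
    rw [Int.natCast_dvd_natCast, Nat.prime_dvd_prime_iff_eq hl hr]
    exact hlr
  rw [jacobiSym_comm_of_prime hl h.right_mod]
  rw [jacobiSym.mul_left] at hpq
  rcases jacobiSym_eq_one_or_neg_one_of_not_dvd hl (hdvd h.left_prime hlp) with hp1 | hp1 <;>
  rcases jacobiSym_eq_one_or_neg_one_of_not_dvd hl (hdvd h.right_prime hlq) with hq1 | hq1 <;>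
  simp_all [inertSign]

lemma inertChar_eq_jacobiSym (h : LinkedPrimes p q) {m : ℕ} (hm : ¬ q ∣ m)
    (hodd : ∀ l : ℕ, l.Prime → l ≠ q → Odd (m.factorization l) → jacobiSym (p * q) l ≠ -1) :
    (inertChar p q m : ℤ) = jacobiSym m q := by
  have hm0 : m ≠ 0 := by rintro rfl; exact hm (dvd_zero q)
  rw [jacobiSym_natCast_eq_factorization_prod q hm0, inertChar, Finsupp.prod, Finsupp.prod,
    Units.coe_prod]
  refine Finset.prod_congr rfl fun l hl ↦ ?_
  have hlp : l.Prime := Nat.prime_of_mem_primeFactors hl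
  have hlq : l ≠ q := by
    rintro rfl
    exact hm (Nat.dvd_of_mem_primeFactors hl)
  rw [Units.val_pow_eq_pow_val]
  rcases Nat.even_or_odd (m.factorization l) with heven | hodd'
  · have hql : ¬ (q : ℤ) ∣ l := by
      rw [Int.natCast_dvd_natCast, Nat.prime_dvd_prime_iff_eq h.right_prime hlp]
      exact hlq.symm
    have hsign : (inertSign p q l : ℤ) = 1 ∨ (inertSign p q l : ℤ) = -1 :=
      Int.isUnit_iff.1 (inertSign p q l).isUnit
    rw [pow_eq_one_of_even heven hsign,
      pow_eq_one_of_even heven (jacobiSym_eq_one_or_neg_one_of_not_dvd h.right_prime hql)]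
  · rw [h.inertSign_eq_jacobiSym hlp hlq (hodd l hlp hlq hodd')]

lemma right_mod_four (h : LinkedPrimes p q) : q % 4 = 1 := by
  have := h.right_mod
  lia

lemma inertChar_natAbs_eq_one (h : LinkedPrimes p q) {z : ℤ} (hz : jacobiSym z q = 1)
    (hodd : ∀ l : ℕ, l.Prime → l ≠ q → Odd (z.natAbs.factorization l) →
      jacobiSym (p * q) l ≠ -1) :
    inertChar p q z.natAbs = 1 := by
  have hqz : ¬ q ∣ z.natAbs := by
    rw [← Int.natCast_dvd]
    exact not_dvd_of_jacobiSym_ne_zero h.right_prime (hz ▸ one_ne_zero)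
  rw [← Units.val_eq_one, h.inertChar_eq_jacobiSym hqz hodd,
    jacobiSym_natAbs h.right_mod_four, hz]

lemma inertChar_sq_sub_mul_sq_of_isCoprime (h : LinkedPrimes p q) {u v : ℤ} (huv : IsCoprime u v)
    (h0 : u ^ 2 - (p * q : ℤ) * v ^ 2 ≠ 0) :
    inertChar p q (u ^ 2 - (p * q : ℤ) * v ^ 2).natAbs = 1 := by
  have hodd {l : ℕ} (hl : l.Prime)
      (hodd : Odd ((u ^ 2 - (p * q : ℤ) * v ^ 2).natAbs.factorization l)) :
      jacobiSym (p * q) l ≠ -1 := fun hpq ↦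
    Nat.not_even_iff_odd.2 hodd (even_factorization_natAbs_sq_sub_mul_sq hl hpq u v)
  by_cases hu : (q : ℤ) ∣ u
  · have hv : ¬ (q : ℤ) ∣ v := fun hv ↦
      (Nat.prime_iff_prime_int.1 h.right_prime).not_isUnit (huv.isUnit_of_dvd' hu hv)
    obtain ⟨w, rfl⟩ := hu
    have hfactor : (q * w) ^ 2 - (p * q : ℤ) * v ^ 2 = q * (q * w ^ 2 - p * v ^ 2) := by ring
    have hcof0 : q * w ^ 2 - p * v ^ 2 ≠ 0 := right_ne_zero_of_mul (hfactor ▸ h0)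
    have hcof : jacobiSym (q * w ^ 2 - p * v ^ 2) q = 1 := by
      rw [jacobiSym_eq_of_dvd_sub (b := -p * v ^ 2) ⟨w ^ 2, by ring⟩,
        jacobiSym_mul_sq_of_not_dvd h.right_prime _ hv, ← jacobiSym_natAbs h.right_mod_four,
        Int.natAbs_neg, Int.natAbs_natCast, h.left_square]
    rw [hfactor, Int.natAbs_mul, Int.natAbs_natCast] at hodd ⊢
    rw [inertChar_mul h.right_prime.ne_zero (Int.natAbs_ne_zero.2 hcof0),
      h.inertChar_natAbs_eq_one hcof fun l hl hlq hl' ↦ hodd hl ?_, inertChar_prime h.right_prime]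
    · simp [inertSign, jacobiSym_self_of_prime h.right_prime]
    · rw [Nat.factorization_mul h.right_prime.ne_zero (Int.natAbs_ne_zero.2 hcof0),
        h.right_prime.factorization, Finsupp.add_apply, Finsupp.single_eq_of_ne hlq, zero_add]
      exact hl'
  · refine h.inertChar_natAbs_eq_one ?_ fun l hl _ ↦ hodd hl
    rw [jacobiSym_eq_of_dvd_sub (b := 1 * u ^ 2) ⟨-p * v ^ 2, by ring⟩,
      jacobiSym_mul_sq_of_not_dvd h.right_prime _ hu, jacobiSym.one_left]

lemma inertChar_sq_sub_mul_sq (h : LinkedPrimes p q) {x y : ℤ}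
    (h0 : x ^ 2 - (p * q : ℤ) * y ^ 2 ≠ 0) :
    inertChar p q (x ^ 2 - (p * q : ℤ) * y ^ 2).natAbs = 1 := by
  obtain ⟨g, u, v, hg, huv, hxy⟩ := exists_isCoprime_sq_sub_mul_sq h0
  have huv0 : u ^ 2 - (p * q : ℤ) * v ^ 2 ≠ 0 := right_ne_zero_of_mul (hxy ▸ h0)
  rw [hxy, Int.natAbs_mul, Int.natAbs_pow,
    inertChar_sq_mul (Int.natAbs_ne_zero.2 hg) (Int.natAbs_ne_zero.2 huv0),
    h.inertChar_sq_sub_mul_sq_of_isCoprime huv huv0]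

end LinkedPrimes

/-! ### Finite index of the biquadratic norm subgroup -/

section FiniteIndex

lemma fg_quotient_of_sup_closure_eq_top {G : Type*} [Group G] {N : Subgroup G} [N.Normal]
    {S : Set G} (hS : S.Finite) (h : N ⊔ Subgroup.closure S = ⊤) : Group.FG (G ⧸ N) := by
  refine Group.fg_iff.2 ⟨QuotientGroup.mk' N '' S, ?_, hS.image _⟩
  rw [← MonoidHom.map_closure, ← Subgroup.map_top_of_surjective _ (QuotientGroup.mk'_surjective N),
    ← h, Subgroup.map_sup, QuotientGroup.map_mk'_self, bot_sup_eq]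

lemma fg_of_ker_fg {G T : Type*} [CommGroup G] [CommGroup T] [Group.FG T] (f : G →* T)
    (hf : f.ker.FG) : Group.FG G := by
  have : Module.Finite ℤ (Additive T) := Module.Finite.iff_addGroup_fg.2 inferInstance
  have := (Group.fg_iff_subgroup_fg _).2 hf
  have : Module.Finite ℤ (Additive f.ker) := Module.Finite.iff_addGroup_fg.2 inferInstance
  have : IsNoetherian ℤ (Additive G) := by
    refine isNoetherian_of_range_eq_ker (f.ker.subtype.toAdditive).toIntLinearMap
      f.toAdditive.toIntLinearMap ?_
    ext x
    exact ⟨fun ⟨u, hu⟩ ↦ hu ▸ u.toMul.2, fun hx ↦ ⟨Additive.ofMul ⟨x.toMul, hx⟩, rfl⟩⟩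
  exact GroupFG.iff_add_fg.2 (Module.Finite.iff_addGroup_fg.1 inferInstance)

lemma fg_quotient_of_ker_fg {G T : Type*} [CommGroup G] [CommGroup T] (H : Subgroup G) (f : G →* T)
    (hf : f.ker.FG) [Group.FG (T ⧸ H.map f)] : Group.FG (G ⧸ H) := by
  refine fg_of_ker_fg (QuotientGroup.map H (H.map f) f (H.le_comap_map f)) ?_
  rw [QuotientGroup.ker_map, Subgroup.comap_map_eq, Subgroup.map_sup, QuotientGroup.map_mk'_self,
    bot_sup_eq]
  exact (Subgroup.fg_iff_submonoid_fg _).2 (((Subgroup.fg_iff_submonoid_fg _).1 hf).map _)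

lemma finiteIndex_of_pow_mem {G : Type*} [CommGroup G] {H : Subgroup G} [Group.FG (G ⧸ H)] {n : ℕ}
    (hn : n ≠ 0) (h : ∀ g, g ^ n ∈ H) : H.FiniteIndex := by
  have hpow := Subgroup.finiteIndex_range_powMonoidHom_of_fg (G ⧸ H) hn
  have hbot : (powMonoidHom (α := G ⧸ H) n).range = ⊥ := by
    rw [eq_bot_iff]
    rintro _ ⟨x, rfl⟩
    obtain ⟨g, rfl⟩ := QuotientGroup.mk_surjective x
    exact (QuotientGroup.eq_one_iff _).2 (h g)
  rw [hbot, Subgroup.finiteIndex_iff_finite_quotient] at hpow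
  have := Finite.of_equiv _ (QuotientGroup.quotientBot (G := G ⧸ H)).toEquiv
  exact Subgroup.finiteIndex_of_finite_quotient

lemma isSquare_or_isSquare_or_isSquare_mul {F : Type*} [Field F] [Finite F] (a b : F) :
    IsSquare a ∨ IsSquare b ∨ IsSquare (a * b) := by
  classical
  have := Fintype.ofFinite F
  by_contra! ⟨ha, hb, hab⟩
  rw [← quadraticChar_neg_one_iff_not_isSquare] at ha hb hab
  rw [map_mul, ha, hb] at hab
  norm_num at hab

section NormForm

variable {k : Type*} [Field k]

lemma sq_sub_mul_sq_ne_zero {c : k} (hc : ¬ IsSquare c) {x y : k} (h : x ≠ 0 ∨ y ≠ 0) :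
    x ^ 2 - c * y ^ 2 ≠ 0 := by
  intro h0
  rcases eq_or_ne y 0 with rfl | hy
  · exact h.elim (fun hx ↦ hx (by simpa using h0)) fun h ↦ h rfl
  · exact hc ⟨x / y, by field_simp; linear_combination -h0⟩

/-- The group of nonzero values of the binary form `x ^ 2 - c * y ^ 2`. -/
def normFormSubgroup (c : k) : Subgroup kˣ where
  carrier := {u | ∃ x y : k, (u : k) = x ^ 2 - c * y ^ 2}
  one_mem' := ⟨1, 0, by simp⟩
  mul_mem' := by
    rintro u v ⟨x, y, hu⟩ ⟨z, w, hv⟩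
    exact ⟨x * z + c * y * w, x * w + y * z, by rw [Units.val_mul, hu, hv]; ring⟩
  inv_mem' := by
    rintro u ⟨x, y, hu⟩
    refine ⟨x / u, y / u, ?_⟩
    rw [Units.val_inv_eq_inv_val]
    field_simp
    exact hu

lemma mem_normFormSubgroup {c : k} {u : kˣ} :
    u ∈ normFormSubgroup c ↔ ∃ x y : k, (u : k) = x ^ 2 - c * y ^ 2 := Iff.rfl

/-- The subgroup generated by the nonzero values of the norm forms of `a`, `b` and `a * b`. -/
def biquadraticNormSubgroup (a b : k) : Subgroup kˣ :=
  normFormSubgroup a ⊔ normFormSubgroup b ⊔ normFormSubgroup (a * b)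

lemma normFormSubgroup_left_le (a b : k) : normFormSubgroup a ≤ biquadraticNormSubgroup a b :=
  le_sup_left.trans le_sup_left

lemma normFormSubgroup_right_le (a b : k) : normFormSubgroup b ≤ biquadraticNormSubgroup a b :=
  le_sup_right.trans le_sup_left

lemma normFormSubgroup_mul_le (a b : k) :
    normFormSubgroup (a * b) ≤ biquadraticNormSubgroup a b :=
  le_sup_right

end NormForm

section Thue

open NumberField

variable {k : Type*} [Field k] [NumberField k]

lemma absNorm_span_singleton_le_house_pow (z : 𝓞 k) :
    (Ideal.absNorm (Ideal.span {z}) : ℝ) ≤ house (z : k) ^ Module.finrank ℚ k := by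
  have hnorm : (Ideal.absNorm (Ideal.span {z}) : ℝ) =
      ‖algebraMap ℚ ℂ (Algebra.norm ℚ (z : k))‖ := by
    rw [Ideal.absNorm_span_singleton, ← Algebra.coe_norm_int]
    simp [Nat.cast_natAbs]
  rw [hnorm, Algebra.norm_eq_prod_embeddings ℚ ℂ, norm_prod]
  calc ∏ σ : k →ₐ[ℚ] ℂ, ‖σ z‖ ≤ ∏ _σ : k →ₐ[ℚ] ℂ, house (z : k) :=
        Finset.prod_le_prod (fun _ _ ↦ norm_nonneg _) fun σ _ ↦
          norm_le_pi_norm (canonicalEmbedding k z) (σ : k →+* ℂ)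
    _ = _ := by rw [Finset.prod_const, Finset.card_univ, AlgHom.card]

lemma house_sub_le (x y : k) : house (x - y) ≤ house x + house y := by
  simpa only [house, map_sub] using norm_sub_le _ _

lemma house_sq_sub_mul_sq_le {c x y : k} {R : ℝ} (hx : house x ≤ R) (hy : house y ≤ R) :
    house (x ^ 2 - c * y ^ 2) ≤ (1 + house c) * R ^ 2 := by
  have hsq {z : k} (hz : house z ≤ R) : house (z ^ 2) ≤ R ^ 2 :=
    (house_pow_le z 2).trans (pow_le_pow_left₀ (house_nonneg z) hz 2)
  calc house (x ^ 2 - c * y ^ 2) ≤ house (x ^ 2) + house c * house (y ^ 2) :=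
        (house_sub_le _ _).trans (add_le_add_right (house_mul_le _ _) _)
    _ ≤ R ^ 2 + house c * R ^ 2 :=
        add_le_add (hsq hx) (mul_le_mul_of_nonneg_left (hsq hy) (house_nonneg c))
    _ = (1 + house c) * R ^ 2 := by ring

lemma house_sum_intCast_mul_le {ι : Type*} (s : Finset ι) (f : ι → ℤ) (α : ι → k) {B : ℝ}
    (hf : ∀ i ∈ s, |(f i : ℝ)| ≤ B) :
    house (∑ i ∈ s, f i * α i) ≤ B * ∑ i ∈ s, house (α i) := by
  rw [Finset.mul_sum]
  refine (house_sum_le_sum_house _ _).trans (Finset.sum_le_sum fun i hi ↦ ?_)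
  refine (house_mul_le _ _).trans (mul_le_mul_of_nonneg_right ?_ (house_nonneg _))
  rw [house_intCast]
  exact_mod_cast hf i hi

variable (k) in
lemma exists_finset_house_sub_le : ∃ M : ℝ, 0 ≤ M ∧ ∀ B : ℕ, ∃ s : Finset (𝓞 k),
    s.card = (B + 1) ^ Module.finrank ℚ k ∧
      ∀ x ∈ s, ∀ y ∈ s, house ((x : k) - y) ≤ B * M := by
  classical
  set β := RingOfIntegers.basis k
  refine ⟨∑ i, house (β i : k), Finset.sum_nonneg fun i _ ↦ house_nonneg _, fun B ↦ ?_⟩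
  let box (f : Module.Free.ChooseBasisIndex ℤ (𝓞 k) → Fin (B + 1)) : 𝓞 k :=
    β.equivFun.symm fun i ↦ ((f i : ℕ) : ℤ)
  have box_injective : Function.Injective box := fun f g hfg ↦ by
    funext i
    have := congrFun (β.equivFun.symm.injective hfg) i
    exact Fin.ext (by exact_mod_cast this)
  refine ⟨Finset.univ.image box, ?_, ?_⟩
  · rw [Finset.card_image_of_injective _ box_injective, Finset.card_univ, Fintype.card_fun,
      Fintype.card_fin, ← Module.finrank_eq_card_basis β, RingOfIntegers.rank]
  · simp only [Finset.mem_image, Finset.mem_univ, true_and]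
    rintro _ ⟨f, rfl⟩ _ ⟨g, rfl⟩
    have hsub : (box f : k) - box g = ∑ i, ((((f i : ℕ) : ℤ) - ((g i : ℕ) : ℤ) : ℤ) : k) * β i := by
      simp only [box, Module.Basis.equivFun_symm_apply, map_sum, ← Finset.sum_sub_distrib]
      refine Finset.sum_congr rfl fun i _ ↦ ?_
      simp [sub_mul]
    rw [hsub]
    refine house_sum_intCast_mul_le _ _ _ fun i _ ↦ ?_
    have hf := (f i).2
    have hg := (g i).2
    have : |((f i : ℕ) : ℤ) - ((g i : ℕ) : ℤ)| ≤ B := by rw [abs_le]; lia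
    exact_mod_cast this

lemma exists_pow_le_and_lt_succ_pow (N : ℕ) {m : ℕ} (hm : m ≠ 0) :
    ∃ B : ℕ, B ^ m ≤ N ∧ N < (B + 1) ^ m := by
  have hroot : ∃ B : ℕ, N < (B + 1) ^ m := ⟨N, N.lt_succ_self.trans_le (Nat.le_self_pow hm _)⟩
  refine ⟨Nat.find hroot, ?_, Nat.find_spec hroot⟩
  rcases h : Nat.find hroot with _ | B
  · simp [hm]
  · exact not_lt.1 (Nat.find_min hroot (h ▸ B.lt_succ_self))

variable (k) in
-- Thue's lemma: pairs `(x, y)` from a box of slightly more than `absNorm P` elements cannot all be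
-- separated by `x - r * y` modulo `P`.
lemma exists_sub_mul_mem_house_pow_le : ∃ M : ℝ, ∀ (P : Ideal (𝓞 k)) (_ : P ≠ ⊥) (r : 𝓞 k),
    ∃ x y : 𝓞 k, (x ≠ 0 ∨ y ≠ 0) ∧ x - r * y ∈ P ∧ ∃ R : ℝ, house (x : k) ≤ R ∧
      house (y : k) ≤ R ∧ R ^ (2 * Module.finrank ℚ k) ≤ M * Ideal.absNorm P := by
  classical
  obtain ⟨M, hM, hbox⟩ := exists_finset_house_sub_le k
  refine ⟨M ^ (2 * Module.finrank ℚ k), fun P hP r ↦ ?_⟩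
  have hN0 : Ideal.absNorm P ≠ 0 := by rwa [Ne, Ideal.absNorm_eq_zero_iff]
  obtain ⟨B, hB, hB'⟩ := exists_pow_le_and_lt_succ_pow (Ideal.absNorm P)
    (mul_ne_zero two_ne_zero (Module.finrank_pos (R := ℚ) (M := k)).ne')
  obtain ⟨s, hs, hhouse⟩ := hbox B
  have := (Ideal.absNorm_ne_zero_iff P).1 hN0
  have := Fintype.ofFinite (𝓞 k ⧸ P)
  have hcard : (Finset.univ : Finset (𝓞 k ⧸ P)).card < (s ×ˢ s).card := by
    rwa [Finset.card_product, hs, ← pow_add, ← two_mul, Finset.card_univ,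
      ← Nat.card_eq_fintype_card, ← Submodule.cardQuot_apply, ← Ideal.absNorm_apply]
  obtain ⟨⟨f, g⟩, hfg, ⟨f', g'⟩, hfg', hne, heq⟩ := Finset.exists_ne_map_eq_of_card_lt_of_maps_to
    hcard (f := fun z ↦ Ideal.Quotient.mk P (z.1 - r * z.2)) (fun _ _ ↦ Finset.mem_univ _)
  rw [Finset.mem_product] at hfg hfg'
  refine ⟨f - f', g - g', ?_, ?_, B * M, ?_, ?_, ?_⟩
  · contrapose! hne
    exact Prod.ext (sub_eq_zero.1 hne.1) (sub_eq_zero.1 hne.2)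
  · convert Ideal.Quotient.eq.1 heq using 1
    ring
  · simpa using hhouse f hfg.1 f' hfg'.1
  · simpa using hhouse g hfg.2 g' hfg'.2
  · rw [mul_pow, mul_comm]
    exact mul_le_mul_of_nonneg_left (by exact_mod_cast hB) (pow_nonneg hM _)

lemma exists_sub_mul_mem_absNorm_sq_sub_mul_sq_le (c : 𝓞 k) :
    ∃ C : ℝ, ∀ (P : Ideal (𝓞 k)) (_ : P ≠ ⊥) (r : 𝓞 k),
      ∃ x y : 𝓞 k, (x ≠ 0 ∨ y ≠ 0) ∧ x - r * y ∈ P ∧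
        (Ideal.absNorm (Ideal.span {x ^ 2 - c * y ^ 2}) : ℝ) ≤ C * Ideal.absNorm P := by
  obtain ⟨M, hM⟩ := exists_sub_mul_mem_house_pow_le k
  refine ⟨(1 + house (c : k)) ^ Module.finrank ℚ k * M, fun P hP r ↦ ?_⟩
  obtain ⟨x, y, hxy, hmem, R, hx, hy, hR⟩ := hM P hP r
  refine ⟨x, y, hxy, hmem, ?_⟩
  have hform : house ((x ^ 2 - c * y ^ 2 : 𝓞 k) : k) ≤ (1 + house (c : k)) * R ^ 2 := by
    simpa using house_sq_sub_mul_sq_le (c := (c : k)) hx hy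
  calc (Ideal.absNorm (Ideal.span {x ^ 2 - c * y ^ 2}) : ℝ)
      ≤ ((1 + house (c : k)) * R ^ 2) ^ Module.finrank ℚ k :=
        (absNorm_span_singleton_le_house_pow _).trans
          (pow_le_pow_left₀ (house_nonneg _) hform _)
    _ = (1 + house (c : k)) ^ Module.finrank ℚ k * R ^ (2 * Module.finrank ℚ k) := by
        rw [mul_pow, ← pow_mul]
    _ ≤ (1 + house (c : k)) ^ Module.finrank ℚ k * (M * Ideal.absNorm P) :=
        mul_le_mul_of_nonneg_left hR (pow_nonneg (add_nonneg zero_le_one (house_nonneg _)) _)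
    _ = _ := (mul_assoc _ _ _).symm

end Thue

section FractionalIdeals

open FractionalIdeal
open scoped nonZeroDivisors

variable {R K : Type*} [CommRing R] [Field K] [Algebra R K] [IsFractionRing R K]

variable (R K) in
lemma ker_toPrincipalIdeal :
    (toPrincipalIdeal R K).ker = (Units.map (algebraMap R K : R →* K)).range := by
  have coe_map (u : R) : spanSingleton R⁰ (algebraMap R K u) = 1 ↔ IsUnit u := by
    rw [← coeIdeal_span_singleton, coeIdeal_eq_one, Ideal.one_eq_top, Ideal.span_singleton_eq_top]
  ext x
  rw [MonoidHom.mem_ker, toPrincipalIdeal_eq_iff, Units.val_one]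
  constructor
  · intro hx
    obtain ⟨u, hu⟩ := (mem_one_iff _).1 (hx ▸ mem_spanSingleton_self R⁰ (x : K))
    rw [← hu, coe_map] at hx
    exact ⟨hx.unit, Units.ext hu⟩
  · rintro ⟨u, rfl⟩
    exact (coe_map u).2 u.isUnit

lemma eq_top_of_forall_isPrime_mk0_mem [IsDedekindDomain R]
    {W : Subgroup (FractionalIdeal R⁰ K)ˣ}
    (hW : ∀ (P : Ideal R) (hP : P ≠ ⊥), P.IsPrime →
      FractionalIdeal.mk0 K ⟨P, mem_nonZeroDivisors_of_ne_zero hP⟩ ∈ W) : W = ⊤ := by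
  have hideal (I : Ideal R) (hI : I ≠ ⊥) :
      FractionalIdeal.mk0 K ⟨I, mem_nonZeroDivisors_of_ne_zero hI⟩ ∈ W := by
    induction I using UniqueFactorizationMonoid.induction_on_prime with
    | h₁ => exact absurd rfl hI
    | h₂ I hunit =>
      obtain rfl := Ideal.isUnit_iff.1 hunit
      convert W.one_mem
      ext1
      simp
    | h₃ I P hI0 hP ih =>
      have hmul := W.mul_mem (hW P hP.ne_zero (Ideal.isPrime_of_prime hP)) (ih hI0)
      rwa [← map_mul] at hmul
  refine eq_top_iff.2 fun I _ ↦ ?_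
  obtain ⟨d, J, hd, hJ⟩ := exists_eq_spanSingleton_mul (I : FractionalIdeal R⁰ K)
  have hdK : algebraMap R K d ≠ 0 := by simpa using hd
  have hspan : Ideal.span {d} ≠ ⊥ := by simpa using hd
  have hJ0 : J ≠ ⊥ := by
    rintro rfl
    exact I.ne_zero (by rw [hJ, coeIdeal_bot, mul_zero])
  have hI : I = (FractionalIdeal.mk0 K ⟨Ideal.span {d}, mem_nonZeroDivisors_of_ne_zero hspan⟩)⁻¹ *
      FractionalIdeal.mk0 K ⟨J, mem_nonZeroDivisors_of_ne_zero hJ0⟩ := by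
    rw [eq_inv_mul_iff_mul_eq]
    ext1
    simp only [Units.val_mul, coe_mk0]
    rw [hJ, ← mul_assoc, coeIdeal_span_singleton, spanSingleton_mul_spanSingleton,
      mul_inv_cancel₀ hdK, spanSingleton_one, one_mul]
  rw [hI]
  exact W.mul_mem (W.inv_mem (hideal _ hspan)) (hideal _ hJ0)

open NumberField

variable {k : Type*} [Field k] [NumberField k]

variable (k) in
lemma finite_mk0_image_absNorm_le (C : ℕ) : (FractionalIdeal.mk0 k ''
    {I : (Ideal (𝓞 k))⁰ | Ideal.absNorm (I : Ideal (𝓞 k)) ≤ C}).Finite :=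
  ((Ideal.finite_setOfPred_absNorm_le (S := 𝓞 k) C).preimage Subtype.val_injective.injOn).image _

lemma exists_finite_forall_isSquare_mk0_mem {c : 𝓞 k} (hc : ¬ IsSquare (c : k)) :
    ∃ S : Set (FractionalIdeal (𝓞 k)⁰ k)ˣ, S.Finite ∧ ∀ (P : Ideal (𝓞 k)) (hP : P ≠ ⊥),
      IsSquare (Ideal.Quotient.mk P c) →
        FractionalIdeal.mk0 k ⟨P, mem_nonZeroDivisors_of_ne_zero hP⟩ ∈
          (normFormSubgroup (c : k)).map (toPrincipalIdeal (𝓞 k) k) ⊔ Subgroup.closure S := by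
  obtain ⟨C, hC⟩ := exists_sub_mul_mem_absNorm_sq_sub_mul_sq_le c
  refine ⟨_, finite_mk0_image_absNorm_le k ⌊C⌋₊, fun P hP ⟨r, hr⟩ ↦ ?_⟩
  obtain ⟨r, rfl⟩ := Ideal.Quotient.mk_surjective r
  obtain ⟨x, y, hxy, hxyP, hnorm⟩ := hC P hP r
  set z := x ^ 2 - c * y ^ 2 with hz
  have hzP : z ∈ P := by
    have hcr : c - r * r ∈ P := by rw [← Ideal.Quotient.eq, hr, map_mul]
    have hzr : z = (x - r * y) * (x + r * y) - (c - r * r) * y ^ 2 := by ring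
    exact hzr ▸ P.sub_mem (P.mul_mem_right _ hxyP) (P.mul_mem_right _ hcr)
  have hzk : algebraMap (𝓞 k) k z = (x : k) ^ 2 - c * (y : k) ^ 2 := by simp [hz]
  have hzk0 : algebraMap (𝓞 k) k z ≠ 0 := hzk ▸ sq_sub_mul_sq_ne_zero hc (by simpa using hxy)
  obtain ⟨J, hJ⟩ := Ideal.dvd_span_singleton.2 hzP
  have hJ0 : J ≠ ⊥ := by
    rintro rfl
    rw [Ideal.mul_bot, Ideal.span_singleton_eq_bot] at hJ
    exact hzk0 (by rw [hJ, map_zero])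
  have hJC : Ideal.absNorm J ≤ ⌊C⌋₊ := by
    have hN0 : 0 < (Ideal.absNorm P : ℝ) := by
      exact_mod_cast Nat.pos_of_ne_zero (mt Ideal.absNorm_eq_zero_iff.1 hP)
    rw [hJ, map_mul, Nat.cast_mul, mul_comm C] at hnorm
    exact Nat.le_floor (le_of_mul_le_mul_left hnorm hN0)
  have hPJ : FractionalIdeal.mk0 k ⟨P, mem_nonZeroDivisors_of_ne_zero hP⟩ =
      toPrincipalIdeal (𝓞 k) k (Units.mk0 _ hzk0) *
        (FractionalIdeal.mk0 k ⟨J, mem_nonZeroDivisors_of_ne_zero hJ0⟩)⁻¹ := by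
    rw [eq_mul_inv_iff_mul_eq]
    ext1
    simp only [Units.val_mul, coe_mk0, coe_toPrincipalIdeal, Units.val_mk0]
    rw [← coeIdeal_mul, ← hJ, coeIdeal_span_singleton]
  rw [hPJ]
  exact Subgroup.mul_mem_sup (Subgroup.mem_map_of_mem _ (mem_normFormSubgroup.2 ⟨x, y, hzk⟩))
    (Subgroup.inv_mem _ (Subgroup.subset_closure (Set.mem_image_of_mem _ hJC)))

lemma exists_finite_map_toPrincipalIdeal_sup_closure_eq_top {a b : 𝓞 k}
    (ha : ¬ IsSquare (a : k)) (hb : ¬ IsSquare (b : k)) (hab : ¬ IsSquare (a * b : k)) :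
    ∃ S : Set (FractionalIdeal (𝓞 k)⁰ k)ˣ, S.Finite ∧
      (biquadraticNormSubgroup (a : k) b).map (toPrincipalIdeal (𝓞 k) k) ⊔ Subgroup.closure S =
        ⊤ := by
  obtain ⟨S₁, hS₁, h₁⟩ := exists_finite_forall_isSquare_mk0_mem ha
  obtain ⟨S₂, hS₂, h₂⟩ := exists_finite_forall_isSquare_mk0_mem hb
  obtain ⟨S₃, hS₃, h₃⟩ := exists_finite_forall_isSquare_mk0_mem (c := a * b) (by simpa using hab)
  have hle {N : Subgroup kˣ} {S T : Set (FractionalIdeal (𝓞 k)⁰ k)ˣ}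
      (hN : N ≤ biquadraticNormSubgroup (a : k) b) (hST : S ⊆ T) :
      N.map (toPrincipalIdeal (𝓞 k) k) ⊔ Subgroup.closure S ≤
        (biquadraticNormSubgroup (a : k) b).map (toPrincipalIdeal (𝓞 k) k) ⊔
          Subgroup.closure T :=
    sup_le_sup (Subgroup.map_mono hN) (Subgroup.closure_mono hST)
  refine ⟨S₁ ∪ S₂ ∪ S₃, (hS₁.union hS₂).union hS₃,
    eq_top_of_forall_isPrime_mk0_mem fun P hP hprime ↦ ?_⟩
  have := hprime.isMaximal hP
  have : Finite (𝓞 k ⧸ P) := Ideal.finiteQuotientOfFreeOfNeBot P hP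
  let _ := Ideal.Quotient.field P
  rcases isSquare_or_isSquare_or_isSquare_mul (Ideal.Quotient.mk P a) (Ideal.Quotient.mk P b)
    with h | h | h
  · exact hle (normFormSubgroup_left_le _ _)
      (Set.subset_union_left.trans Set.subset_union_left) (h₁ P hP h)
  · exact hle (normFormSubgroup_right_le _ _)
      (Set.subset_union_right.trans Set.subset_union_left) (h₂ P hP h)
  · refine hle ?_ Set.subset_union_right (h₃ P hP (by rwa [map_mul]))
    simpa using normFormSubgroup_mul_le (a : k) b

lemma biquadraticNormSubgroup_finiteIndex {a b : 𝓞 k} (ha : ¬ IsSquare (a : k))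
    (hb : ¬ IsSquare (b : k)) (hab : ¬ IsSquare (a * b : k)) :
    (biquadraticNormSubgroup (a : k) b).FiniteIndex := by
  obtain ⟨S, hS, htop⟩ := exists_finite_map_toPrincipalIdeal_sup_closure_eq_top ha hb hab
  have := fg_quotient_of_sup_closure_eq_top hS htop
  have : Group.FG (𝓞 k)ˣ := Group.fg_iff_monoid_fg.2 inferInstance
  have hker : (toPrincipalIdeal (𝓞 k) k).ker.FG := by
    rw [ker_toPrincipalIdeal, ← Group.fg_iff_subgroup_fg]
    infer_instance
  have := fg_quotient_of_ker_fg (biquadraticNormSubgroup (a : k) b) (toPrincipalIdeal (𝓞 k) k) hker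
  exact finiteIndex_of_pow_mem two_ne_zero fun g ↦
    normFormSubgroup_left_le _ _ (mem_normFormSubgroup.2 ⟨g, 0, by simp⟩)

end FractionalIdeals

end FiniteIndex

/-! ### A smooth cutoff for the action of the units -/

/-- The tent function, whose integer translates sum to `1`. -/
noncomputable def tent (y : ℝ) : ℝ := max (1 - |y|) 0

section Tent

lemma tent_nonneg (y : ℝ) : 0 ≤ tent y := le_max_right _ _

lemma tent_le_one (y : ℝ) : tent y ≤ 1 := max_le (sub_le_self 1 (abs_nonneg y)) zero_le_one

lemma abs_tent_le_one (y : ℝ) : |tent y| ≤ 1 := by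
  simpa only [abs_of_nonneg (tent_nonneg y)] using tent_le_one y

lemma tent_eq_zero {y : ℝ} (h : 1 ≤ |y|) : tent y = 0 := max_eq_right (sub_nonpos.2 h)

lemma abs_tent_sub_le (x y : ℝ) : |tent x - tent y| ≤ |x - y| :=
  calc |tent x - tent y| ≤ |1 - |x| - (1 - |y|)| := abs_max_sub_max_le_abs _ _ _
    _ = |(|y| - |x|)| := by rw [sub_sub_sub_cancel_left]
    _ ≤ |y - x| := abs_abs_sub_abs_le _ _
    _ = |x - y| := abs_sub_comm _ _

lemma tent_add_intCast_eq_zero {y : ℝ} {n : ℤ} (hn : n ∉ ({-⌊y⌋, -⌊y⌋ - 1} : Finset ℤ)) :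
    tent (y + n) = 0 := by
  simp only [Finset.mem_insert, Finset.mem_singleton, not_or] at hn
  have hle := Int.floor_le y
  have hlt := Int.lt_floor_add_one y
  refine tent_eq_zero (le_abs.2 ?_)
  rcases lt_or_gt_of_ne hn.1 with h | h
  · have h' : n ≤ -⌊y⌋ - 2 := by lia
    have : (n : ℝ) ≤ -⌊y⌋ - 2 := by exact_mod_cast h'
    exact Or.inr (by linarith)
  · have h' : -⌊y⌋ + 1 ≤ n := by lia
    have : -(⌊y⌋ : ℝ) + 1 ≤ n := by exact_mod_cast h'
    exact Or.inl (by linarith)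

lemma sum_tent_add_intCast (y : ℝ) :
    ∑ n ∈ ({-⌊y⌋, -⌊y⌋ - 1} : Finset ℤ), tent (y + n) = 1 := by
  have hle := Int.floor_le y
  have hlt := Int.lt_floor_add_one y
  rw [Finset.sum_pair (by lia)]
  push_cast
  rw [tent, tent, abs_of_nonneg (by linarith), abs_of_neg (by linarith),
    max_eq_left (by linarith), max_eq_left (by linarith)]
  ring

lemma hasSum_prod_tent_add_intCast {ι : Type*} [Fintype ι] (y : ι → ℝ) :
    HasSum (fun n : ι → ℤ ↦ ∏ i, tent (y i + n i)) 1 := by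
  classical
  let t (i : ι) : Finset ℤ := {-⌊y i⌋, -⌊y i⌋ - 1}
  have hsupport (n : ι → ℤ) (hn : n ∉ Fintype.piFinset t) : ∏ i, tent (y i + n i) = 0 := by
    simp only [Fintype.mem_piFinset, not_forall] at hn
    obtain ⟨i, hi⟩ := hn
    exact Finset.prod_eq_zero (Finset.mem_univ i) (tent_add_intCast_eq_zero hi)
  have hsum : ∑ n ∈ Fintype.piFinset t, ∏ i, tent (y i + n i) = 1 := by
    rw [← Finset.prod_univ_sum t fun i n ↦ tent (y i + n)]
    exact Finset.prod_eq_one fun i _ ↦ sum_tent_add_intCast (y i)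
  exact hsum ▸ hasSum_sum_of_ne_finset_zero hsupport

lemma hasSum_mul_of_nonneg {ι κ : Type*} {f : ι → ℝ} {g : κ → ℝ} {a b : ℝ} (hf : HasSum f a)
    (hg : HasSum g b) (hf' : ∀ i, 0 ≤ f i) (hg' : ∀ j, 0 ≤ g j) :
    HasSum (fun p : ι × κ ↦ f p.1 * g p.2) (a * b) :=
  hf.mul hg (hf.summable.mul_of_nonneg hg.summable hf' hg')

lemma abs_prod_sub_prod_le {ι : Type*} (s : Finset ι) {a b : ι → ℝ} (ha : ∀ i, |a i| ≤ 1)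
    (hb : ∀ i, |b i| ≤ 1) : |∏ i ∈ s, a i - ∏ i ∈ s, b i| ≤ ∑ i ∈ s, |a i - b i| := by
  classical
  induction s using Finset.induction_on with
  | empty => simp
  | insert i s hi ih =>
    rw [Finset.prod_insert hi, Finset.prod_insert hi, Finset.sum_insert hi]
    have hprod : |∏ j ∈ s, b j| ≤ 1 := by
      rw [Finset.abs_prod]
      exact Finset.prod_le_one (fun _ _ ↦ abs_nonneg _) (fun j _ ↦ hb j)
    calc |a i * ∏ j ∈ s, a j - b i * ∏ j ∈ s, b j|
        = |(a i - b i) * ∏ j ∈ s, b j + a i * (∏ j ∈ s, a j - ∏ j ∈ s, b j)| := by ring_nf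
      _ ≤ |a i - b i| * |∏ j ∈ s, b j| + |a i| * |∏ j ∈ s, a j - ∏ j ∈ s, b j| := by
          rw [← abs_mul, ← abs_mul]; exact abs_add_le _ _
      _ ≤ |a i - b i| * 1 + 1 * ∑ j ∈ s, |a j - b j| := by gcongr; exact ha i
      _ = _ := by rw [mul_one, one_mul]

end Tent

section UnitWeight

open NumberField NumberField.mixedEmbedding NumberField.Units
open NumberField.Units.dirichletUnitTheorem Module
open scoped Classical

variable {K : Type*} [Field K] [NumberField K]

/-- The coordinate of `logMap x` along the `i`-th vector of a basis of the unit lattice. -/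
noncomputable def unitCoord (i : Fin (rank K)) (x : mixedSpace K) : ℝ :=
  ((basisUnitLattice K).ofZLatticeBasis ℝ (unitLattice K)).repr (logMap x) i

/-- A smoothed indicator function of a fundamental domain for the action of the units on the mixed
space: a Lipschitz function of `logMap x` whose translates by the units add up to the number of
roots of unity. -/
noncomputable def unitWeight (x : mixedSpace K) : ℝ := ∏ i, tent (unitCoord i x)

lemma logEmbedding_prod_fundSystem_zpow (n : Fin (rank K) → ℤ) :
    logEmbedding K (Additive.ofMul (∏ j, fundSystem K j ^ n j)) =
      ∑ j, n j • ((basisUnitLattice K j : unitLattice K) : logSpace K) := by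
  rw [ofMul_prod, map_sum]
  refine Finset.sum_congr rfl fun j _ ↦ ?_
  rw [ofMul_zpow, map_zsmul, logEmbedding_fundSystem]

lemma unitCoord_smul (i : Fin (rank K)) (ζ : torsion K) (n : Fin (rank K) → ℤ)
    {x : mixedSpace K} (hx : mixedEmbedding.norm x ≠ 0) :
    unitCoord i (((ζ : (𝓞 K)ˣ) * ∏ j, fundSystem K j ^ n j) • x) = unitCoord i x + n i := by
  rw [unitCoord, mul_smul, logMap_torsion_smul _ ζ.2, logMap_unit_smul _ hx,
    logEmbedding_prod_fundSystem_zpow, map_add, map_sum, add_comm]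
  simp only [Finsupp.add_apply, Finsupp.finsetSum_apply, map_zsmul, Finsupp.smul_apply,
    Basis.ofZLatticeBasis_repr_apply, Basis.repr_self]
  simp [unitCoord, Finsupp.single_apply]

variable (K) in
lemma exists_equiv_torsion_prod :
    ∃ e : torsion K × (Fin (rank K) → ℤ) ≃ (𝓞 K)ˣ,
      ∀ p, e p = (p.1 : (𝓞 K)ˣ) * ∏ j, fundSystem K j ^ p.2 j := by
  refine ⟨Equiv.ofBijective _ <| (Function.bijective_iff_existsUnique _).2 fun u ↦ ?_, fun _ ↦ rfl⟩
  obtain ⟨p, hp, huniq⟩ := exist_unique_eq_mul_prod K u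
  exact ⟨p, hp.symm, fun q hq ↦ huniq q hq.symm⟩

lemma hasSum_unitWeight_smul {x : mixedSpace K} (hx : mixedEmbedding.norm x ≠ 0) :
    HasSum (fun u : (𝓞 K)ˣ ↦ unitWeight (u • x)) (torsionOrder K) := by
  obtain ⟨e, he⟩ := exists_equiv_torsion_prod K
  rw [← e.hasSum_iff]
  have hone : HasSum (fun _ : torsion K ↦ (1 : ℝ)) (torsionOrder K) := by
    have := Fintype.ofFinite (torsion K)
    have h := hasSum_fintype fun _ : torsion K ↦ (1 : ℝ)
    rwa [Finset.sum_const, nsmul_one, Finset.card_univ, ← Nat.card_eq_fintype_card] at h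
  have htent := hasSum_prod_tent_add_intCast fun i ↦ unitCoord i x
  have hprod := hasSum_mul_of_nonneg hone htent (fun _ ↦ zero_le_one)
    fun _ ↦ Finset.prod_nonneg fun _ _ ↦ tent_nonneg _
  generalize (torsionOrder K : ℝ) = c at hprod ⊢
  rw [mul_one] at hprod
  refine hprod.congr_fun fun p ↦ ?_
  simp only [Function.comp_apply, one_mul, unitWeight, he, unitCoord_smul _ p.1 p.2 hx]

lemma unitWeight_nonneg (x : mixedSpace K) : 0 ≤ unitWeight x :=
  Finset.prod_nonneg fun _ _ ↦ tent_nonneg _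

lemma unitWeight_le_one (x : mixedSpace K) : unitWeight x ≤ 1 :=
  Finset.prod_le_one (fun _ _ ↦ tent_nonneg _) fun _ _ ↦ tent_le_one _

variable (K) in
lemma exists_norm_logMap_le :
    ∃ B : ℝ, 0 ≤ B ∧ ∀ x : mixedSpace K, unitWeight x ≠ 0 → ‖logMap x‖ ≤ B := by
  let b := (basisUnitLattice K).ofZLatticeBasis ℝ (unitLattice K)
  let f := LinearMap.toContinuousLinearMap b.equivFun.symm.toLinearMap
  refine ⟨‖f‖, norm_nonneg _, fun x hx ↦ ?_⟩
  have hcoord : ‖b.equivFun (logMap x)‖ ≤ 1 := by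
    refine (pi_norm_le_iff_of_nonneg zero_le_one).2 fun i ↦ ?_
    by_contra! h
    exact hx (Finset.prod_eq_zero (Finset.mem_univ i) (tent_eq_zero h.le))
  calc ‖logMap x‖ = ‖f (b.equivFun (logMap x))‖ := by simp [f]
    _ ≤ ‖f‖ * ‖b.equivFun (logMap x)‖ := f.le_opNorm _
    _ ≤ ‖f‖ := mul_le_of_le_one_right (norm_nonneg _) hcoord

variable (K) in
lemma exists_abs_unitWeight_sub_le :
    ∃ A : ℝ, 0 ≤ A ∧ ∀ x y : mixedSpace K,
      |unitWeight x - unitWeight y| ≤ A * ‖logMap x - logMap y‖ := by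
  let b := (basisUnitLattice K).ofZLatticeBasis ℝ (unitLattice K)
  let f := LinearMap.toContinuousLinearMap b.equivFun.toLinearMap
  refine ⟨rank K * ‖f‖, by positivity, fun x y ↦ ?_⟩
  have hcoord (i) : |unitCoord i x - unitCoord i y| ≤ ‖f‖ * ‖logMap x - logMap y‖ := by
    have : unitCoord i x - unitCoord i y = f (logMap x - logMap y) i := by
      simp [f, unitCoord, b]
    rw [this, ← Real.norm_eq_abs]
    exact (norm_le_pi_norm _ i).trans (f.le_opNorm _)
  calc |unitWeight x - unitWeight y|
      ≤ ∑ i, |tent (unitCoord i x) - tent (unitCoord i y)| :=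
        abs_prod_sub_prod_le _ (fun _ ↦ abs_tent_le_one _) (fun _ ↦ abs_tent_le_one _)
    _ ≤ ∑ _i : Fin (rank K), ‖f‖ * ‖logMap x - logMap y‖ :=
        Finset.sum_le_sum fun i _ ↦ (abs_tent_sub_le _ _).trans (hcoord i)
    _ = rank K * ‖f‖ * ‖logMap x - logMap y‖ := by simp [mul_assoc]

end UnitWeight

section RealEstimates

lemma abs_log_sub_log_le {m a b : ℝ} (hm : 0 < m) (ha : m ≤ a) (hb : m ≤ b) :
    |Real.log a - Real.log b| ≤ |a - b| / m := by
  rw [div_eq_inv_mul]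
  refine (convex_Ici m).norm_image_sub_le_of_norm_deriv_le
    (fun x hx ↦ Real.differentiableAt_log (hm.trans_le hx).ne') (fun x hx ↦ ?_) hb ha
  rw [Real.deriv_log, Real.norm_eq_abs, abs_inv, abs_of_pos (hm.trans_le hx)]
  exact inv_anti₀ hm hx

lemma abs_exp_sub_exp_le {a b M : ℝ} (ha : a ≤ M) (hb : b ≤ M) :
    |Real.exp a - Real.exp b| ≤ Real.exp M * |a - b| :=
  (convex_Iic M).norm_image_sub_le_of_norm_deriv_le (fun _ _ ↦ Real.differentiableAt_exp)
    (fun x hx ↦ by simpa using hx) hb ha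

lemma abs_rpow_sub_rpow_le {a b r M : ℝ} (ha : 0 < a) (hb : 0 < b) (hra : a ^ r ≤ M)
    (hrb : b ^ r ≤ M) : |a ^ r - b ^ r| ≤ M * (|Real.log a - Real.log b| * |r|) := by
  have hM : 0 < M := (Real.rpow_pos_of_pos ha r).trans_le hra
  rw [Real.rpow_def_of_pos ha, ← Real.le_log_iff_exp_le hM] at hra
  rw [Real.rpow_def_of_pos hb, ← Real.le_log_iff_exp_le hM] at hrb
  rw [Real.rpow_def_of_pos ha, Real.rpow_def_of_pos hb, ← abs_mul, sub_mul]
  simpa only [Real.exp_log hM] using abs_exp_sub_exp_le hra hrb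

lemma abs_le_card_mul_of_sum_eq_zero {ι : Type*} [Fintype ι] {f : ι → ℝ} {B : ℝ} {i₀ : ι}
    (hB : 0 ≤ B) (hsum : ∑ i, f i = 0) (hf : ∀ i, i ≠ i₀ → |f i| ≤ B) (i : ι) :
    |f i| ≤ Fintype.card ι * B := by
  classical
  rcases eq_or_ne i i₀ with rfl | hi
  · rw [← Finset.add_sum_erase _ _ (Finset.mem_univ i)] at hsum
    calc |f i| = |∑ j ∈ Finset.univ.erase i, f j| := by
          rw [eq_neg_of_add_eq_zero_left hsum, abs_neg]
      _ ≤ ∑ j ∈ Finset.univ.erase i, |f j| := Finset.abs_sum_le_sum_abs _ _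
      _ ≤ ∑ _j ∈ Finset.univ.erase i, B :=
          Finset.sum_le_sum fun j hj ↦ hf j (Finset.ne_of_mem_erase hj)
      _ ≤ ∑ _j : ι, B :=
          Finset.sum_le_sum_of_subset_of_nonneg (Finset.erase_subset _ _) fun _ _ _ ↦ hB
      _ = Fintype.card ι * B := by simp
  · refine (hf i hi).trans (le_mul_of_one_le_left hB ?_)
    exact_mod_cast Fintype.card_pos_iff.2 ⟨i⟩

end RealEstimates

section NormKernel

open NumberField NumberField.mixedEmbedding NumberField.Units
open NumberField.Units.dirichletUnitTheorem Module
open scoped Classical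

variable {K : Type*} [Field K] [NumberField K]

lemma normAtPlace_le_norm (v : InfinitePlace K) (x : mixedSpace K) : normAtPlace v x ≤ ‖x‖ := by
  rw [norm_eq_sup'_normAtPlace]
  exact Finset.le_sup' (fun w ↦ normAtPlace w x) (Finset.mem_univ v)

lemma abs_normAtPlace_sub_le (v : InfinitePlace K) (x y : mixedSpace K) :
    |normAtPlace v x - normAtPlace v y| ≤ ‖x - y‖ := by
  have key (x y : mixedSpace K) : normAtPlace v x - normAtPlace v y ≤ ‖x - y‖ := by
    have := normAtPlace_add_le v (x - y) y
    rw [sub_add_cancel] at this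
    linarith [normAtPlace_le_norm v (x - y)]
  exact abs_sub_le_iff.2 ⟨key x y, norm_sub_rev x y ▸ key y x⟩

lemma log_mixedEmbedding_norm {x : mixedSpace K} (hx : mixedEmbedding.norm x ≠ 0) :
    Real.log (mixedEmbedding.norm x) = ∑ v, (v.mult : ℝ) * Real.log (normAtPlace v x) := by
  rw [mixedEmbedding.norm_apply, Real.log_prod]
  · simp
  · exact fun v _ ↦ pow_ne_zero _ (mixedEmbedding.norm_ne_zero_iff.1 hx v)

lemma infinitePlace_mult_le_two {F : Type*} [Field F] (v : InfinitePlace F) :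
    (v.mult : ℝ) ≤ 2 := by
  rw [InfinitePlace.mult]
  split_ifs <;> norm_num

variable (K) in
lemma exists_abs_log_normAtPlace_sub_le :
    ∃ B : ℝ, ∀ x : mixedSpace K, unitWeight x ≠ 0 → mixedEmbedding.norm x ≠ 0 → ∀ v,
      |Real.log (normAtPlace v x) - Real.log (mixedEmbedding.norm x) * (finrank ℚ K : ℝ)⁻¹| ≤
        B := by
  obtain ⟨B, hB, hlogMap⟩ := exists_norm_logMap_le K
  refine ⟨Fintype.card (InfinitePlace K) * B, fun x hw hx v ↦ ?_⟩
  let g (v : InfinitePlace K) : ℝ :=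
    Real.log (normAtPlace v x) - Real.log (mixedEmbedding.norm x) * (finrank ℚ K : ℝ)⁻¹
  have hrank : (finrank ℚ K : ℝ) ≠ 0 := Nat.cast_ne_zero.2 finrank_pos.ne'
  have hsum : ∑ v, (v.mult : ℝ) * g v = 0 := by
    simp only [g, mul_sub, Finset.sum_sub_distrib, ← Finset.sum_mul, ← log_mixedEmbedding_norm hx]
    rw [← Nat.cast_sum, InfinitePlace.sum_mult_eq, mul_left_comm, mul_inv_cancel₀ hrank, mul_one,
      sub_self]
  calc |g v| ≤ |v.mult * g v| := by
        rw [abs_mul, Nat.abs_cast]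
        exact le_mul_of_one_le_left (abs_nonneg _) InfinitePlace.one_le_mult
    _ ≤ Fintype.card (InfinitePlace K) * B :=
        abs_le_card_mul_of_sum_eq_zero hB hsum (i₀ := w₀) (fun w hw₀ ↦
          (norm_le_pi_norm (logMap x) ⟨w, hw₀⟩).trans (hlogMap x hw)) v

variable (K) in
lemma exists_mul_norm_le_normAtPlace :
    ∃ c : ℝ, 0 < c ∧ c ≤ 1 ∧ ∀ x : mixedSpace K, unitWeight x ≠ 0 → mixedEmbedding.norm x ≠ 0 →
      ∀ v, c * ‖x‖ ≤ normAtPlace v x := by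
  obtain ⟨B, hlog⟩ := exists_abs_log_normAtPlace_sub_le K
  refine ⟨Real.exp (-2 * |B|), Real.exp_pos _, Real.exp_le_one_iff.2 (by simp), fun x hw hx v ↦ ?_⟩
  have hpos (v : InfinitePlace K) : 0 < normAtPlace v x :=
    (normAtPlace_nonneg v x).lt_of_ne' (mixedEmbedding.norm_ne_zero_iff.1 hx v)
  obtain ⟨w, -, hxw⟩ := Finset.exists_mem_eq_sup' (f := fun w ↦ normAtPlace w x)
    (Finset.univ_nonempty (α := InfinitePlace K))
  rw [norm_eq_sup'_normAtPlace, hxw, ← Real.exp_log (hpos w), ← Real.exp_add,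
    ← Real.le_log_iff_exp_le (hpos v)]
  have hv := abs_le.1 (hlog x hw hx v)
  have hw := abs_le.1 (hlog x hw hx w)
  linarith [le_abs_self B]

/-- The weighted power of the norm whose sum over the nonzero elements of an ideal is, up to the
number of roots of unity, a partial zeta function. -/
noncomputable def normKernel (s : ℝ) (x : mixedSpace K) : ℝ :=
  unitWeight x * mixedEmbedding.norm x ^ (-s)

lemma pow_le_mixedEmbedding_norm {m : ℝ} (hm : 0 ≤ m) {x : mixedSpace K}
    (h : ∀ v, m ≤ normAtPlace v x) : m ^ finrank ℚ K ≤ mixedEmbedding.norm x := by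
  rw [mixedEmbedding.norm_apply, ← InfinitePlace.sum_mult_eq, ← Finset.prod_pow_eq_pow_sum]
  exact Finset.prod_le_prod (fun _ _ ↦ by positivity) fun v _ ↦ pow_le_pow_left₀ hm (h v) _

lemma mixedEmbedding_norm_pos {m : ℝ} (hm : 0 < m) {x : mixedSpace K}
    (h : ∀ v, m ≤ normAtPlace v x) : 0 < mixedEmbedding.norm x :=
  (pow_pos hm _).trans_le (pow_le_mixedEmbedding_norm hm.le h)

section NearbyPoints

variable {m : ℝ} {x y : mixedSpace K}

lemma abs_log_normAtPlace_sub_le (hm : 0 < m) (v : InfinitePlace K) (hx : m ≤ normAtPlace v x)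
    (hy : m ≤ normAtPlace v y) :
    |Real.log (normAtPlace v x) - Real.log (normAtPlace v y)| ≤ ‖x - y‖ / m :=
  (abs_log_sub_log_le hm hx hy).trans <| by gcongr; exact abs_normAtPlace_sub_le v x y

lemma abs_log_norm_sub_le (hm : 0 < m) (hx : ∀ v, m ≤ normAtPlace v x)
    (hy : ∀ v, m ≤ normAtPlace v y) :
    |Real.log (mixedEmbedding.norm x) - Real.log (mixedEmbedding.norm y)| ≤
      finrank ℚ K * (‖x - y‖ / m) := by
  rw [log_mixedEmbedding_norm (mixedEmbedding_norm_pos hm hx).ne',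
    log_mixedEmbedding_norm (mixedEmbedding_norm_pos hm hy).ne',
    ← Finset.sum_sub_distrib, ← InfinitePlace.sum_mult_eq, Nat.cast_sum, Finset.sum_mul]
  refine (Finset.abs_sum_le_sum_abs _ _).trans (Finset.sum_le_sum fun v _ ↦ ?_)
  rw [← mul_sub, abs_mul, Nat.abs_cast]
  gcongr
  exact abs_log_normAtPlace_sub_le hm v (hx v) (hy v)

lemma norm_logMap_sub_le (hm : 0 < m) (hx : ∀ v, m ≤ normAtPlace v x)
    (hy : ∀ v, m ≤ normAtPlace v y) : ‖logMap x - logMap y‖ ≤ 4 * (‖x - y‖ / m) := by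
  refine (pi_norm_le_iff_of_nonneg (by positivity)).2 fun v ↦ ?_
  set a := Real.log (normAtPlace v.1 x) - Real.log (normAtPlace v.1 y)
  set b := (Real.log (mixedEmbedding.norm x) - Real.log (mixedEmbedding.norm y)) *
    (finrank ℚ K : ℝ)⁻¹
  have hrank : (0 : ℝ) < finrank ℚ K := Nat.cast_pos.2 finrank_pos
  have hcoord : (logMap x - logMap y) v = v.1.mult * (a - b) := by
    simp only [a, b, Pi.sub_apply, logMap_apply]
    ring
  have ha : |a| ≤ ‖x - y‖ / m := abs_log_normAtPlace_sub_le hm v.1 (hx _) (hy _)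
  have hb : |b| ≤ ‖x - y‖ / m := by
    rw [abs_mul, abs_of_pos (inv_pos.2 hrank), ← div_eq_mul_inv, div_le_iff₀' hrank]
    exact abs_log_norm_sub_le hm hx hy
  rw [hcoord, Real.norm_eq_abs, abs_mul, Nat.abs_cast]
  calc (v.1.mult : ℝ) * |a - b| ≤ 2 * (‖x - y‖ / m + ‖x - y‖ / m) :=
        mul_le_mul (infinitePlace_mult_le_two _) ((abs_sub _ _).trans (add_le_add ha hb))
          (abs_nonneg _) zero_le_two
    _ = _ := by ring

lemma mixedEmbedding_norm_rpow_le {s : ℝ} (hm : 1 ≤ m) (hs : 1 ≤ s)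
    (h : ∀ v, m ≤ normAtPlace v x) :
    mixedEmbedding.norm x ^ (-s) ≤ (m ^ finrank ℚ K)⁻¹ := by
  have hpow : 1 ≤ m ^ finrank ℚ K := one_le_pow₀ hm
  have hle := pow_le_mixedEmbedding_norm (zero_le_one.trans hm) h
  rw [Real.rpow_neg (mixedEmbedding.norm_nonneg x)]
  exact inv_anti₀ (zero_lt_one.trans_le hpow)
    (hle.trans (Real.self_le_rpow_of_one_le (hpow.trans hle) hs))

lemma abs_norm_rpow_sub_le {s : ℝ} (hm : 1 ≤ m) (hs : 1 ≤ s) (hs' : s ≤ 2)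
    (hx : ∀ v, m ≤ normAtPlace v x) (hy : ∀ v, m ≤ normAtPlace v y) :
    |mixedEmbedding.norm x ^ (-s) - mixedEmbedding.norm y ^ (-s)| ≤
      (m ^ finrank ℚ K)⁻¹ * (finrank ℚ K * (‖x - y‖ / m) * 2) := by
  have hm0 : 0 < m := zero_lt_one.trans_le hm
  refine (abs_rpow_sub_rpow_le (mixedEmbedding_norm_pos hm0 hx) (mixedEmbedding_norm_pos hm0 hy)
    (mixedEmbedding_norm_rpow_le hm hs hx) (mixedEmbedding_norm_rpow_le hm hs hy)).trans ?_
  gcongr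
  · exact abs_log_norm_sub_le hm0 hx hy
  · rwa [abs_neg, abs_of_nonneg (zero_le_one.trans hs)]

variable (K) in
lemma exists_abs_normKernel_sub_le :
    ∃ A : ℝ, 0 ≤ A ∧ ∀ (m s : ℝ) (x y : mixedSpace K), 1 ≤ m → 1 ≤ s → s ≤ 2 →
      (∀ v, m ≤ normAtPlace v x) → (∀ v, m ≤ normAtPlace v y) →
      |normKernel s x - normKernel s y| ≤ A * ‖x - y‖ * (m ^ (finrank ℚ K + 1))⁻¹ := by
  obtain ⟨A, hA, hweight⟩ := exists_abs_unitWeight_sub_le K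
  refine ⟨4 * A + 2 * finrank ℚ K, by positivity, fun m s x y hm hs hs' hx hy ↦ ?_⟩
  have hm0 : 0 < m := zero_lt_one.trans_le hm
  have hsplit : normKernel s x - normKernel s y =
      (unitWeight x - unitWeight y) * mixedEmbedding.norm x ^ (-s) +
        unitWeight y * (mixedEmbedding.norm x ^ (-s) - mixedEmbedding.norm y ^ (-s)) := by
    simp only [normKernel]
    ring
  calc |normKernel s x - normKernel s y|
      ≤ |unitWeight x - unitWeight y| * mixedEmbedding.norm x ^ (-s) + unitWeight y *
          |mixedEmbedding.norm x ^ (-s) - mixedEmbedding.norm y ^ (-s)| := by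
        refine hsplit ▸ (abs_add_le _ _).trans_eq ?_
        rw [abs_mul, abs_mul, abs_of_nonneg (unitWeight_nonneg y),
          abs_of_nonneg (Real.rpow_nonneg (mixedEmbedding.norm_nonneg x) _)]
    _ ≤ (A * (4 * (‖x - y‖ / m))) * (m ^ finrank ℚ K)⁻¹ +
          1 * ((m ^ finrank ℚ K)⁻¹ * (finrank ℚ K * (‖x - y‖ / m) * 2)) := by
        gcongr
        · exact Real.rpow_nonneg (mixedEmbedding.norm_nonneg x) _
        · exact (hweight x y).trans
            (mul_le_mul_of_nonneg_left (norm_logMap_sub_le hm0 hx hy) hA)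
        · exact mixedEmbedding_norm_rpow_le hm hs hx
        · exact unitWeight_le_one y
        · exact abs_norm_rpow_sub_le hm hs hs' hx hy
    _ = _ := by
        rw [pow_succ]
        field_simp

lemma mul_norm_le_normAtPlace_of_norm_sub_le {c D : ℝ} (hc : 0 ≤ c) (hc1 : c ≤ 1)
    {z : mixedSpace K} {v : InfinitePlace K} (hz : c * ‖z‖ ≤ normAtPlace v z)
    (hx : 4 * D ≤ c * ‖x‖) (hxz : ‖x - z‖ ≤ D) (hyz : ‖y - z‖ ≤ D) :
    c / 2 * ‖x‖ ≤ normAtPlace v y := by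
  have hD : 0 ≤ D := (norm_nonneg _).trans hxz
  have hnorm : c * (‖x‖ - D) ≤ c * ‖z‖ :=
    mul_le_mul_of_nonneg_left (by linarith [norm_sub_norm_le x z]) hc
  have hplace := (abs_le.1 ((abs_normAtPlace_sub_le v y z).trans hyz)).1
  linarith [mul_le_of_le_one_left hD hc1]

end NearbyPoints

lemma normKernel_nonneg (s : ℝ) (x : mixedSpace K) : 0 ≤ normKernel s x :=
  mul_nonneg (unitWeight_nonneg x) (Real.rpow_nonneg (mixedEmbedding.norm_nonneg x) _)

lemma normKernel_eq_zero_of_norm_eq_zero {s : ℝ} (hs : s ≠ 0) {x : mixedSpace K}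
    (h : mixedEmbedding.norm x = 0) : normKernel s x = 0 := by
  rw [normKernel, h, Real.zero_rpow (neg_ne_zero.2 hs), mul_zero]

lemma normKernel_le_norm_rpow (s : ℝ) (x : mixedSpace K) :
    normKernel s x ≤ mixedEmbedding.norm x ^ (-s) :=
  mul_le_of_le_one_left (Real.rpow_nonneg (mixedEmbedding.norm_nonneg x) _) (unitWeight_le_one x)

variable (K) in
lemma exists_mul_norm_le_normAtPlace_of_normKernel_ne_zero :
    ∃ c : ℝ, 0 < c ∧ c ≤ 1 ∧ ∀ (s : ℝ) (x : mixedSpace K), s ≠ 0 → normKernel s x ≠ 0 →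
      ∀ v, c * ‖x‖ ≤ normAtPlace v x := by
  obtain ⟨c, hc, hc1, hcone⟩ := exists_mul_norm_le_normAtPlace K
  exact ⟨c, hc, hc1, fun s x hs hx ↦
    hcone x (left_ne_zero_of_mul hx) (mt (normKernel_eq_zero_of_norm_eq_zero hs) hx)⟩

variable (K) in
lemma exists_normKernel_sub_le_norm_pow (D : ℝ) :
    ∃ C R : ℝ, 0 ≤ C ∧ 0 < R ∧ ∀ (s : ℝ) (x y : mixedSpace K), 1 ≤ s → s ≤ 2 → ‖y - x‖ ≤ D →
      R ≤ ‖x‖ → |normKernel s y - normKernel s x| ≤ C * (‖x‖ ^ (finrank ℚ K + 1))⁻¹ := by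
  obtain ⟨c, hc, hc1, hcone⟩ := exists_mul_norm_le_normAtPlace_of_normKernel_ne_zero K
  obtain ⟨A, hA, hlip⟩ := exists_abs_normKernel_sub_le K
  refine ⟨A * |D| * ((c / 2) ^ (finrank ℚ K + 1))⁻¹, (4 * |D| + 2) / c, by positivity,
    by positivity, fun s x y hs hs' hyx hR ↦ ?_⟩
  rw [div_le_iff₀' hc] at hR
  have hyx' : ‖y - x‖ ≤ |D| := hyx.trans (le_abs_self D)
  have hle (z : mixedSpace K) (hz : normKernel s z ≠ 0) (hxz : ‖x - z‖ ≤ |D|)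
      (hyz : ‖y - z‖ ≤ |D|) : |normKernel s y - normKernel s x| ≤
        A * |D| * ((c / 2) ^ (finrank ℚ K + 1))⁻¹ * (‖x‖ ^ (finrank ℚ K + 1))⁻¹ := by
    have hz' := hcone s z (by linarith) hz
    have hx4 : 4 * |D| ≤ c * ‖x‖ := by linarith
    refine (hlip (c / 2 * ‖x‖) s y x (by linarith [abs_nonneg D]) hs hs'
      (fun v ↦ mul_norm_le_normAtPlace_of_norm_sub_le hc.le hc1 (hz' v) hx4 hxz hyz)
      (fun v ↦ mul_norm_le_normAtPlace_of_norm_sub_le hc.le hc1 (hz' v) hx4 hxz hxz)).trans ?_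
    rw [mul_pow, mul_inv, ← mul_assoc]
    gcongr
  by_cases hx : normKernel s x = 0
  · by_cases hy : normKernel s y = 0
    · rw [hx, hy, sub_self, abs_zero]
      positivity
    · exact hle y hy (norm_sub_rev x y ▸ hyx') (by simp)
  · exact hle x hx (by simp) hyx'

variable (K) in
lemma exists_normKernel_le_norm_rpow {s : ℝ} (hs : 0 < s) :
    ∃ C : ℝ, ∀ x : mixedSpace K, normKernel s x ≤ C * ‖x‖ ^ (-(finrank ℚ K * s)) := by
  obtain ⟨c, hc, -, hcone⟩ := exists_mul_norm_le_normAtPlace_of_normKernel_ne_zero K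
  refine ⟨c ^ (-(finrank ℚ K * s)), fun x ↦ ?_⟩
  by_cases hx : normKernel s x = 0
  · rw [hx]
    positivity
  have hx0 : x ≠ 0 := by
    rintro rfl
    exact hx (normKernel_eq_zero_of_norm_eq_zero hs.ne' (by simp))
  have hpos : 0 < c * ‖x‖ := mul_pos hc (norm_pos_iff.2 hx0)
  calc normKernel s x ≤ mixedEmbedding.norm x ^ (-s) := normKernel_le_norm_rpow s x
    _ ≤ ((c * ‖x‖) ^ finrank ℚ K) ^ (-s) :=
        Real.rpow_le_rpow_of_nonpos (pow_pos hpos _)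
          (pow_le_mixedEmbedding_norm hpos.le (hcone s x hs.ne' hx)) (neg_nonpos.2 hs.le)
    _ = (c * ‖x‖) ^ (-(finrank ℚ K * s)) := by
        rw [← Real.rpow_natCast, ← Real.rpow_mul hpos.le, mul_neg]
    _ = _ := Real.mul_rpow hc.le (norm_nonneg x)

end NormKernel

/-! ### Partial zeta functions of ideal classes near `s = 1` -/

section CosetDecomposition

variable {A : Type*} [AddCommGroup A] (H : AddSubgroup A)

lemma bijective_quotient_out_add :
    Function.Bijective fun p : (A ⧸ H) × H ↦ p.1.out + (p.2 : A) := by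
  refine ⟨fun ⟨q, x⟩ ⟨q', x'⟩ h ↦ ?_, fun a ↦ ?_⟩
  · have hq : q = q' := by
      simpa using congrArg (QuotientAddGroup.mk : A → A ⧸ H) h
    subst hq
    simpa using h
  · refine ⟨(a, ⟨-(a : A ⧸ H).out + a, ?_⟩), add_neg_cancel_left _ _⟩
    exact QuotientAddGroup.eq.1 (QuotientAddGroup.out_eq' _)

variable [Fintype (A ⧸ H)]

lemma tsum_eq_sum_tsum_quotient_out_add {f : A → ℝ} (hf : Summable f) :
    ∑' a, f a = ∑ q : A ⧸ H, ∑' z : H, f (q.out + z) := by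
  let e : (A ⧸ H) × H ≃ A := .ofBijective _ (bijective_quotient_out_add H)
  calc ∑' a, f a = ∑' p, f (e p) := (e.tsum_eq f).symm
    _ = ∑' q : A ⧸ H, ∑' z : H, f (q.out + z) := (hf.comp_injective e.injective).tsum_prod
    _ = _ := tsum_fintype _

lemma abs_tsum_sub_index_mul_tsum_le {f : A → ℝ} {G : A → A → ℝ} (hf : Summable f)
    (hG : ∀ a, Summable (G a)) (hfG : ∀ a z, |f (a + z) - f z| ≤ G a z) :
    |∑' a, f a - H.index * ∑' z : H, f z| ≤ ∑ q : A ⧸ H, ∑' z : H, G q.out z := by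
  have hindex : (H.index : ℝ) = ∑ _q : A ⧸ H, (1 : ℝ) := by
    rw [AddSubgroup.index, Nat.card_eq_fintype_card, Finset.sum_const, nsmul_one,
      Finset.card_univ]
  rw [tsum_eq_sum_tsum_quotient_out_add H hf, hindex, Finset.sum_mul, ← Finset.sum_sub_distrib]
  refine (Finset.abs_sum_le_sum_abs _ _).trans (Finset.sum_le_sum fun q _ ↦ ?_)
  have hsub : Summable fun z : H ↦ f z := hf.comp_injective Subtype.val_injective
  have hcoset : Summable fun z : H ↦ f (q.out + z) :=
    hf.comp_injective (i := fun z : H ↦ q.out + (z : A))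
      fun _ _ h ↦ Subtype.ext (add_left_cancel h)
  rw [one_mul, ← hcoset.tsum_sub hsub, ← Real.norm_eq_abs]
  exact tsum_of_norm_bounded ((hG q.out).comp_injective Subtype.val_injective).hasSum
    fun z ↦ hfG _ z

end CosetDecomposition

section Generators

open scoped nonZeroDivisors

lemma injective_units_mul_of_injective_span {R ι : Type*} [CommRing R] [IsDomain R] {g : ι → R}
    (hg : ∀ i, g i ≠ 0) (hinj : Function.Injective fun i ↦ Ideal.span {g i}) :
    Function.Injective fun p : ι × Rˣ ↦ (p.2 : R) * g p.1 := by
  rintro ⟨i, u⟩ ⟨j, v⟩ h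
  dsimp only at h
  have hassoc : Associated (g i) (g j) :=
    (associated_unit_mul_left (g i) u u.isUnit).symm.trans
      (h ▸ associated_unit_mul_left (g j) v v.isUnit)
  obtain rfl : i = j := hinj (Ideal.span_singleton_eq_span_singleton.2 hassoc)
  rw [Units.ext (mul_right_cancel₀ (hg i) h)]

variable {R : Type*} [CommRing R] [IsDedekindDomain R] {C : ClassGroup R} {J : (Ideal R)⁰}

lemma exists_span_singleton_eq_mul (hJ : ClassGroup.mk0 J = C⁻¹) {I : (Ideal R)⁰}
    (hI : ClassGroup.mk0 I = C) :
    ∃ g : R, g ≠ 0 ∧ Ideal.span {g} = (I * J : Ideal R) := by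
  have hprincipal : ClassGroup.mk0 (I * J) = 1 := by rw [map_mul, hI, hJ, mul_inv_cancel]
  obtain ⟨g, hg⟩ := ((ClassGroup.mk0_eq_one_iff (I * J).2).1 hprincipal).principal
  refine ⟨g, ?_, hg.symm⟩
  rintro rfl
  exact nonZeroDivisors.coe_ne_zero (I * J) (hg.trans (by simp))

lemma exists_mul_eq_span_singleton_of_mem (hJ : ClassGroup.mk0 J = C⁻¹) {z : R} (hz : z ≠ 0)
    (hzJ : z ∈ (J : Ideal R)) :
    ∃ I : (Ideal R)⁰, ClassGroup.mk0 I = C ∧ (I * J : Ideal R) = Ideal.span {z} := by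
  obtain ⟨I, hI⟩ := Ideal.dvd_iff_le.2 ((Ideal.span_singleton_le_iff_mem _).2 hzJ)
  have hI0 : I ≠ 0 := by
    rintro rfl
    rw [mul_zero] at hI
    exact hz (Ideal.span_singleton_eq_bot.1 hI)
  refine ⟨⟨I, mem_nonZeroDivisors_of_ne_zero hI0⟩, ?_, by rw [hI, mul_comm]⟩
  have hprincipal : ClassGroup.mk0 (J * ⟨I, mem_nonZeroDivisors_of_ne_zero hI0⟩) = 1 :=
    (ClassGroup.mk0_eq_one_iff (J * _).2).2 ⟨z, hI.symm⟩
  rw [map_mul, hJ, inv_mul_eq_one] at hprincipal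
  exact hprincipal.symm

end Generators

section IntKernel

open NumberField NumberField.mixedEmbedding NumberField.Units
open NumberField.Units.dirichletUnitTheorem Module
open scoped Classical nonZeroDivisors

variable {K : Type*} [Field K] [NumberField K]

lemma summable_norm_mixedEmbedding_rpow {r : ℝ} (hr : r < -finrank ℚ K) :
    Summable fun z : 𝓞 K ↦ ‖mixedEmbedding K (z : K)‖ ^ r := by
  have hrank : finrank ℤ (mixedEmbedding.integerLattice K) = finrank ℚ K := by
    rw [ZLattice.rank ℝ, mixedEmbedding.finrank]
  let φ : 𝓞 K → mixedEmbedding.integerLattice K := fun z ↦ ⟨mixedEmbedding K (z : K), z, rfl⟩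
  have hφ : Function.Injective φ := fun x y hxy ↦
    RingOfIntegers.ext (mixedEmbedding_injective K (congrArg Subtype.val hxy))
  refine ((ZLattice.summable_norm_rpow (mixedEmbedding.integerLattice K) r
    (by rwa [hrank])).comp_injective hφ).congr fun z ↦ ?_
  rw [Function.comp_apply, Submodule.coe_norm]

lemma norm_mixedEmbedding_eq_absNorm (z : 𝓞 K) :
    mixedEmbedding.norm (mixedEmbedding K (z : K)) = Ideal.absNorm (Ideal.span {z}) := by
  rw [mixedEmbedding.norm_eq_norm, ← Algebra.coe_norm_int, Ideal.absNorm_span_singleton,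
    ← Int.cast_natCast, Int.natCast_natAbs, ← Int.cast_abs, Rat.cast_intCast]

lemma one_le_norm_mixedEmbedding {z : 𝓞 K} (hz : z ≠ 0) :
    1 ≤ mixedEmbedding.norm (mixedEmbedding K (z : K)) := by
  rw [mixedEmbedding.norm_eq_norm, ← Algebra.coe_norm_int]
  exact_mod_cast Int.one_le_abs (Algebra.norm_ne_zero_iff.2 hz)

/-- The restriction of `normKernel s` to the ring of integers. Its sum over the multiples of `g` by
units is a constant times `N(g)⁻ˢ`, so its sum over an ideal is a partial zeta function. -/
noncomputable def intKernel (s : ℝ) (z : 𝓞 K) : ℝ := normKernel s (mixedEmbedding K (z : K))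

lemma intKernel_nonneg (s : ℝ) (z : 𝓞 K) : 0 ≤ intKernel s z := normKernel_nonneg _ _

lemma intKernel_zero {s : ℝ} (hs : s ≠ 0) : intKernel s (0 : 𝓞 K) = 0 :=
  normKernel_eq_zero_of_norm_eq_zero hs (by simp)

lemma intKernel_le_one {s : ℝ} (hs : 0 < s) (z : 𝓞 K) : intKernel s z ≤ 1 := by
  rcases eq_or_ne z 0 with rfl | hz
  · exact (intKernel_zero hs.ne').trans_le zero_le_one
  · exact (normKernel_le_norm_rpow s _).trans
      (Real.rpow_le_one_of_one_le_of_nonpos (one_le_norm_mixedEmbedding hz) (neg_nonpos.2 hs.le))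

lemma summable_intKernel {s : ℝ} (hs : 1 < s) : Summable (intKernel (K := K) s) := by
  obtain ⟨C, h⟩ := exists_normKernel_le_norm_rpow K (zero_lt_one.trans hs)
  refine Summable.of_nonneg_of_le (intKernel_nonneg s) (fun z ↦ h _)
    ((summable_norm_mixedEmbedding_rpow (neg_lt_neg ?_)).mul_left C)
  exact lt_mul_of_one_lt_right (Nat.cast_pos.2 finrank_pos) hs

lemma summable_inv_norm_mixedEmbedding_pow :
    Summable fun z : 𝓞 K ↦ (‖mixedEmbedding K (z : K)‖ ^ (finrank ℚ K + 1))⁻¹ := by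
  refine (summable_norm_mixedEmbedding_rpow (r := -((finrank ℚ K + 1 : ℕ) : ℝ))
    (by push_cast; linarith)).congr fun z ↦ ?_
  rw [Real.rpow_neg (norm_nonneg _), Real.rpow_natCast]

lemma exists_abs_intKernel_sub_le (δ : 𝓞 K) :
    ∃ C : ℝ, 0 ≤ C ∧ ∀ s : ℝ, 1 ≤ s → s ≤ 2 → ∀ z : 𝓞 K, z ≠ 0 →
      |intKernel s (δ + z) - intKernel s z| ≤
        C * (‖mixedEmbedding K (z : K)‖ ^ (finrank ℚ K + 1))⁻¹ := by
  obtain ⟨C, R, hC, _, h⟩ := exists_normKernel_sub_le_norm_pow K ‖mixedEmbedding K (δ : K)‖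
  refine ⟨max C (R ^ (finrank ℚ K + 1)), hC.trans (le_max_left _ _), fun s hs hs' z hz ↦ ?_⟩
  rcases le_or_gt R ‖mixedEmbedding K (z : K)‖ with hzR | hzR
  · have hsub : mixedEmbedding K ((δ + z : 𝓞 K) : K) - mixedEmbedding K (z : K) =
        mixedEmbedding K (δ : K) := by
      rw [RingOfIntegers.coe_eq_algebraMap, map_add, map_add, add_sub_cancel_right]
    refine (h s _ _ hs hs' (congrArg norm hsub).le hzR).trans ?_
    gcongr
    exact le_max_left _ _
  · have hs0 : 0 < s := zero_lt_one.trans_le hs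
    have hz0 : 0 < ‖mixedEmbedding K (z : K)‖ :=
      norm_pos_iff.2 ((map_ne_zero_iff _ (mixedEmbedding_injective K)).2 (by simpa using hz))
    calc |intKernel s (δ + z) - intKernel s z| ≤ 1 :=
          abs_sub_le_of_nonneg_of_le (intKernel_nonneg _ _) (intKernel_le_one hs0 _)
            (intKernel_nonneg _ _) (intKernel_le_one hs0 _)
      _ ≤ R ^ (finrank ℚ K + 1) * (‖mixedEmbedding K (z : K)‖ ^ (finrank ℚ K + 1))⁻¹ := by
          rw [← div_eq_mul_inv, one_le_div (by positivity)]
          gcongr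
      _ ≤ _ := by
          gcongr
          exact le_max_right _ _

lemma exists_summable_abs_intKernel_sub_le (δ : 𝓞 K) :
    ∃ G : 𝓞 K → ℝ, Summable G ∧ ∀ s : ℝ, 1 ≤ s → s ≤ 2 → ∀ z : 𝓞 K,
      |intKernel s (δ + z) - intKernel s z| ≤ G z := by
  obtain ⟨C, hC, h⟩ := exists_abs_intKernel_sub_le δ
  refine ⟨fun z ↦ C * (‖mixedEmbedding K (z : K)‖ ^ (finrank ℚ K + 1))⁻¹ + if z = 0 then 1 else 0,
    (summable_inv_norm_mixedEmbedding_pow.mul_left C).add (hasSum_ite_eq 0 1).summable,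
    fun s hs hs' z ↦ ?_⟩
  beta_reduce
  rcases eq_or_ne z 0 with rfl | hz
  · have hs0 : 0 < s := zero_lt_one.trans_le hs
    rw [if_pos rfl]
    exact (abs_sub_le_of_nonneg_of_le (intKernel_nonneg _ _) (intKernel_le_one hs0 _)
      (intKernel_nonneg _ _) (intKernel_le_one hs0 _)).trans (le_add_of_nonneg_left (by positivity))
  · rw [if_neg hz, add_zero]
    exact h s hs hs' z hz

lemma exists_abs_tsum_sub_absNorm_mul_tsum_le {J : Ideal (𝓞 K)} (hJ : J ≠ ⊥) :
    ∃ C : ℝ, ∀ s : ℝ, 1 < s → s ≤ 2 →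
      |∑' z : 𝓞 K, intKernel s z - Ideal.absNorm J * ∑' z : J, intKernel s (z : 𝓞 K)| ≤ C := by
  have : Finite (𝓞 K ⧸ J.toAddSubgroup) := Ideal.finiteQuotientOfFreeOfNeBot J hJ
  have := Fintype.ofFinite (𝓞 K ⧸ J.toAddSubgroup)
  choose G hG hGle using exists_summable_abs_intKernel_sub_le (K := K)
  exact ⟨_, fun s hs hs' ↦ abs_tsum_sub_index_mul_tsum_le J.toAddSubgroup
    (summable_intKernel hs) hG fun δ z ↦ hGle δ s hs.le hs' z⟩

lemma hasSum_intKernel_units_mul {s : ℝ} {g : 𝓞 K} (hg : g ≠ 0) :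
    HasSum (fun u : (𝓞 K)ˣ ↦ intKernel s ((u : 𝓞 K) * g))
      (torsionOrder K * (Ideal.absNorm (Ideal.span {g}) : ℝ) ^ (-s)) := by
  have hnorm : mixedEmbedding.norm (mixedEmbedding K (g : K)) ≠ 0 :=
    (zero_lt_one.trans_le (one_le_norm_mixedEmbedding hg)).ne'
  have hsum := (hasSum_unitWeight_smul hnorm).mul_right
    (mixedEmbedding.norm (mixedEmbedding K (g : K)) ^ (-s))
  rw [norm_mixedEmbedding_eq_absNorm] at hsum
  refine hsum.congr_fun fun u ↦ ?_
  have hsmul : mixedEmbedding K ((u * g : 𝓞 K) : K) = u • mixedEmbedding K (g : K) :=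
    (unit_smul_eq_iff_mul_eq.2 rfl).symm
  rw [intKernel, hsmul, normKernel, norm_unit_smul, norm_mixedEmbedding_eq_absNorm]

lemma hasSum_absNorm_mul_rpow_of_mk0_eq {s : ℝ} (hs : 1 < s) {C : ClassGroup (𝓞 K)}
    {J : (Ideal (𝓞 K))⁰} (hJ : ClassGroup.mk0 J = C⁻¹) :
    HasSum (fun I : {I : (Ideal (𝓞 K))⁰ // ClassGroup.mk0 I = C} ↦
        (torsionOrder K : ℝ) * (Ideal.absNorm (I.1 * J : Ideal (𝓞 K)) : ℝ) ^ (-s))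
      (∑' z : (J : Ideal (𝓞 K)), intKernel s (z : 𝓞 K)) := by
  have hgen (I : {I : (Ideal (𝓞 K))⁰ // ClassGroup.mk0 I = C}) :
      ∃ g : 𝓞 K, g ≠ 0 ∧ Ideal.span {g} = (I.1 * J : Ideal (𝓞 K)) :=
    exists_span_singleton_eq_mul hJ I.2
  choose g hg0 hg using hgen
  have hgJ (I) : g I ∈ (J : Ideal (𝓞 K)) :=
    Ideal.mul_le_right (I := (I.1 : Ideal (𝓞 K)))
      (by rw [← hg I]; exact Ideal.mem_span_singleton_self (g I))
  have hspan : Function.Injective fun I ↦ Ideal.span {g I} := fun I I' h ↦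
    Subtype.ext (Subtype.ext (mul_right_cancel₀ (nonZeroDivisors.coe_ne_zero J)
      ((hg I).symm.trans (h.trans (hg I')))))
  let φ : {I : (Ideal (𝓞 K))⁰ // ClassGroup.mk0 I = C} × (𝓞 K)ˣ → (J : Ideal (𝓞 K)) :=
    fun p ↦ ⟨p.2 * g p.1, Ideal.mul_mem_left _ _ (hgJ p.1)⟩
  have hφ : Function.Injective φ := fun p q h ↦
    injective_units_mul_of_injective_span hg0 hspan (congrArg Subtype.val h)
  have hrange : ∀ z ∉ Set.range φ, intKernel s (z : 𝓞 K) = 0 := by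
    refine fun z hz ↦ by_contra fun hne ↦ hz ?_
    have hz0 : (z : 𝓞 K) ≠ 0 := fun h ↦ hne (h ▸ intKernel_zero (zero_lt_one.trans hs).ne')
    obtain ⟨I, hI, hIz⟩ := exists_mul_eq_span_singleton_of_mem hJ hz0 z.2
    obtain ⟨u, hu⟩ := Ideal.span_singleton_eq_span_singleton.1 ((hg ⟨I, hI⟩).trans hIz)
    exact ⟨(⟨I, hI⟩, u), Subtype.ext ((mul_comm _ _).trans hu)⟩
  have hsum : Summable fun z : (J : Ideal (𝓞 K)) ↦ intKernel s (z : 𝓞 K) :=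
    (summable_intKernel hs).comp_injective Subtype.val_injective
  have hfiber (I : {I : (Ideal (𝓞 K))⁰ // ClassGroup.mk0 I = C}) :
      HasSum (fun u : (𝓞 K)ˣ ↦ intKernel s (u * g I : 𝓞 K))
        (torsionOrder K * (Ideal.absNorm (I.1 * J : Ideal (𝓞 K)) : ℝ) ^ (-s)) := by
    rw [← hg]
    exact hasSum_intKernel_units_mul (hg0 I)
  exact ((hφ.hasSum_iff hrange).2 hsum.hasSum).prod_fiberwise hfiber

end IntKernel

section FiberSums

lemma hasSum_comp_mul {α β : Type*} [Fintype β] (π : α → β) (ψ : β → ℝ) {f : α → ℝ}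
    (hf : Summable f) :
    HasSum (fun a ↦ ψ (π a) * f a) (∑ b, ψ b * ∑' a : {a // π a = b}, f a) := by
  classical
  have hfiber (b : β) : HasSum ({a | π a = b}.indicator f) (∑' a : {a // π a = b}, f a) :=
    hasSum_subtype_iff_indicator.1 (hf.subtype {a | π a = b}).hasSum
  refine (hasSum_sum fun b (_ : b ∈ Finset.univ) ↦ (hfiber b).mul_left (ψ b)).congr_fun fun a ↦ ?_
  simp only [Set.indicator_apply, Set.mem_ofPred_eq, mul_ite, mul_zero, Finset.sum_ite_eq,
    Finset.mem_univ, if_true]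

end FiberSums

section RealEstimates

variable {N s : ℝ}

lemma abs_rpow_sub_one_sub_one_le (hN : 1 ≤ N) (hs : 1 ≤ s) (hs' : s ≤ 2) :
    |N ^ (s - 1) - 1| ≤ N * Real.log N * (s - 1) := by
  have hN0 : 0 < N := zero_lt_one.trans_le hN
  have hlog : 0 ≤ Real.log N := Real.log_nonneg hN
  have h := abs_exp_sub_exp_le (a := Real.log N * (s - 1)) (b := 0) (M := Real.log N)
    (mul_le_of_le_one_right hlog (by linarith)) hlog
  rwa [← Real.rpow_def_of_pos hN0, Real.exp_log hN0, sub_zero, Real.exp_zero,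
    abs_of_nonneg (mul_nonneg hlog (sub_nonneg.2 hs)), ← mul_assoc] at h

lemma abs_rpow_mul_sub_le {Y Z c D : ℝ} (hN : 1 ≤ N) (hs : 1 ≤ s) (hs' : s ≤ 2) (hZ : 0 ≤ Z)
    (hYZ : |Z - N * Y| ≤ c) (hD : (s - 1) * Z ≤ D) :
    |N ^ s * Y - Z| ≤ N * c + N * Real.log N * D := by
  have hN0 : 0 < N := zero_lt_one.trans_le hN
  have hpow : N ^ (s - 1) ≤ N := by
    simpa using Real.rpow_le_rpow_of_exponent_le hN (show s - 1 ≤ 1 by linarith)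
  have hsplit : N ^ s * Y - Z = (N ^ (s - 1) - 1) * Z - N ^ (s - 1) * (Z - N * Y) := by
    rw [Real.rpow_sub_one hN0.ne']
    field_simp
    ring
  calc |N ^ s * Y - Z|
      ≤ |N ^ (s - 1) - 1| * Z + N ^ (s - 1) * |Z - N * Y| := by
        refine hsplit ▸ (abs_sub _ _).trans_eq ?_
        rw [abs_mul, abs_mul, abs_of_nonneg hZ, abs_of_pos (Real.rpow_pos_of_pos hN0 _)]
    _ ≤ N * Real.log N * (s - 1) * Z + N * c := by
        gcongr
        exact abs_rpow_sub_one_sub_one_le hN hs hs'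
    _ = N * c + N * Real.log N * ((s - 1) * Z) := by ring
    _ ≤ _ := by
        gcongr
        exact mul_nonneg hN0.le (Real.log_nonneg hN)

end RealEstimates

section PartialZeta

open NumberField NumberField.mixedEmbedding NumberField.Units
open NumberField.Units.dirichletUnitTheorem Module Filter Topology
open scoped nonZeroDivisors

variable {K : Type*} [Field K] [NumberField K]

lemma one_le_absNorm (I : (Ideal (𝓞 K))⁰) : 1 ≤ Ideal.absNorm (I : Ideal (𝓞 K)) :=
  Nat.one_le_iff_ne_zero.2 (Ideal.absNorm_ne_zero_of_nonZeroDivisors I)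

/-- The partial zeta function `∑ N(I)⁻ˢ` of an ideal class, the sum running over the nonzero
integral ideals in the class. -/
noncomputable def partialZeta (C : ClassGroup (𝓞 K)) (s : ℝ) : ℝ :=
  ∑' I : {I : (Ideal (𝓞 K))⁰ // ClassGroup.mk0 I = C},
    (Ideal.absNorm (I.1 : Ideal (𝓞 K)) : ℝ) ^ (-s)

lemma hasSum_absNorm_rpow_of_mk0_eq {s : ℝ} (hs : 1 < s) {C : ClassGroup (𝓞 K)}
    {J : (Ideal (𝓞 K))⁰} (hJ : ClassGroup.mk0 J = C⁻¹) :
    HasSum (fun I : {I : (Ideal (𝓞 K))⁰ // ClassGroup.mk0 I = C} ↦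
        (Ideal.absNorm (I.1 : Ideal (𝓞 K)) : ℝ) ^ (-s))
      ((torsionOrder K : ℝ)⁻¹ * ((Ideal.absNorm (J : Ideal (𝓞 K)) : ℝ) ^ s *
        ∑' z : (J : Ideal (𝓞 K)), intKernel s (z : 𝓞 K))) := by
  have hτ : (torsionOrder K : ℝ) ≠ 0 := Nat.cast_ne_zero.2 (torsionOrder_ne_zero K)
  have hN : 0 < (Ideal.absNorm (J : Ideal (𝓞 K)) : ℝ) := Nat.cast_pos.2 (one_le_absNorm J)
  have h := hasSum_absNorm_mul_rpow_of_mk0_eq hs hJ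
  generalize (torsionOrder K : ℝ) = τ at hτ h ⊢
  rw [← mul_assoc]
  refine (h.mul_left _).congr_fun fun I ↦ ?_
  rw [map_mul, Nat.cast_mul, Real.mul_rpow (Nat.cast_nonneg _) (Nat.cast_nonneg _),
    Real.rpow_neg hN.le]
  field_simp

lemma summable_absNorm_rpow {s : ℝ} (hs : 1 < s) :
    Summable fun I : (Ideal (𝓞 K))⁰ ↦ (Ideal.absNorm (I : Ideal (𝓞 K)) : ℝ) ^ (-s) := by
  rw [← (Equiv.sigmaFiberEquiv (ClassGroup.mk0 (R := 𝓞 K))).summable_iff,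
    summable_sigma_of_nonneg fun _ ↦ by exact Real.rpow_nonneg (Nat.cast_nonneg _) _]
  refine ⟨fun C ↦ ?_, Summable.of_finite⟩
  obtain ⟨J, hJ⟩ := ClassGroup.mk0_surjective C⁻¹
  exact (hasSum_absNorm_rpow_of_mk0_eq hs hJ).summable

lemma tsum_absNorm_rpow_eq_dedekindZeta {s : ℝ} (hs : 1 < s) :
    ((∑' I : (Ideal (𝓞 K))⁰, (Ideal.absNorm (I : Ideal (𝓞 K)) : ℝ) ^ (-s) : ℝ) : ℂ) =
      dedekindZeta K s := by
  have hfiber := (summable_absNorm_rpow (K := K) hs).hasSum.tsum_fiberwise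
    (fun I : (Ideal (𝓞 K))⁰ ↦ Ideal.absNorm (I : Ideal (𝓞 K)))
  rw [← hfiber.tsum_eq, dedekindZeta, LSeries, Complex.ofReal_tsum]
  refine tsum_congr fun n ↦ ?_
  have hconst (I : (fun I : (Ideal (𝓞 K))⁰ ↦ Ideal.absNorm (I : Ideal (𝓞 K))) ⁻¹' {n}) :
      (Ideal.absNorm (I.1 : Ideal (𝓞 K)) : ℝ) ^ (-s) = (n : ℝ) ^ (-s) :=
    congrArg (fun m : ℕ ↦ (m : ℝ) ^ (-s)) I.2
  rw [tsum_congr hconst]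
  rcases eq_or_ne n 0 with rfl | hn
  · rw [LSeries.term_zero, Nat.cast_zero, Real.zero_rpow (by linarith), tsum_zero,
      Complex.ofReal_zero]
  rw [LSeries.term_of_ne_zero hn, tsum_const, nsmul_eq_mul, Complex.ofReal_mul,
    Real.rpow_neg (Nat.cast_nonneg n), Complex.ofReal_inv, Complex.ofReal_cpow (Nat.cast_nonneg n),
    div_eq_mul_inv, Complex.ofReal_natCast, Complex.ofReal_natCast]
  congr 2
  refine Nat.card_congr ⟨fun I ↦ ⟨I.1, I.2⟩, fun I ↦ ⟨⟨I.1, mem_nonZeroDivisors_of_ne_zero ?_⟩,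
    I.2⟩, fun _ ↦ rfl, fun _ ↦ rfl⟩
  intro hI
  exact hn (by rw [← I.2, hI, Ideal.zero_eq_bot, Ideal.absNorm_bot])

variable (K) in
lemma tendsto_sub_one_mul_tsum_absNorm_rpow :
    Tendsto (fun s : ℝ ↦ (s - 1) *
      ∑' I : (Ideal (𝓞 K))⁰, (Ideal.absNorm (I : Ideal (𝓞 K)) : ℝ) ^ (-s))
      (𝓝[>] 1) (𝓝 (dedekindZeta_residue K)) := by
  rw [← Filter.tendsto_ofReal_iff]
  refine (tendsto_sub_one_mul_dedekindZeta_nhdsGT K).congr' ?_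
  filter_upwards [self_mem_nhdsWithin] with s hs
  rw [← tsum_absNorm_rpow_eq_dedekindZeta hs]
  push_cast
  rfl

variable (K) in
lemma exists_sub_one_mul_tsum_intKernel_le :
    ∃ D : ℝ, ∀ᶠ s in 𝓝[>] (1 : ℝ), (s - 1) * ∑' z : 𝓞 K, intKernel s z ≤ D := by
  obtain ⟨c, hc⟩ := exists_abs_tsum_sub_absNorm_mul_tsum_le (K := K) (J := 1) one_ne_zero
  have hpole := (tendsto_sub_one_mul_tsum_absNorm_rpow K).eventually_le_const
    (lt_add_one (dedekindZeta_residue K))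
  refine ⟨|c| + torsionOrder K * (dedekindZeta_residue K + 1), ?_⟩
  filter_upwards [hpole, Ioc_mem_nhdsGT one_lt_two] with s hle ⟨hs, hs'⟩
  have hclass := hasSum_absNorm_rpow_of_mk0_eq hs (C := (1 : ClassGroup (𝓞 K))) (J := 1)
    (by rw [map_one, inv_one])
  have hsub : ∑' I : {I : (Ideal (𝓞 K))⁰ // ClassGroup.mk0 I = 1},
      (Ideal.absNorm (I.1 : Ideal (𝓞 K)) : ℝ) ^ (-s) ≤
      ∑' I : (Ideal (𝓞 K))⁰, (Ideal.absNorm (I : Ideal (𝓞 K)) : ℝ) ^ (-s) :=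
    tsum_comp_le_tsum_of_inj (summable_absNorm_rpow (K := K) hs)
      (fun I ↦ Real.rpow_nonneg (Nat.cast_nonneg _) _) Subtype.val_injective
  have hτ : (0 : ℝ) < torsionOrder K := Nat.cast_pos.2 (torsionOrder_pos K)
  have hdiff := (le_abs_self _).trans ((hc s hs hs').trans (le_abs_self c))
  rw [hclass.tsum_eq, inv_mul_le_iff₀ hτ] at hsub
  simp only [OneMemClass.coe_one, map_one, Nat.cast_one, Real.one_rpow, one_mul] at hsub hdiff
  set Z := ∑' z : 𝓞 K, intKernel s z
  set T := ∑' I : (Ideal (𝓞 K))⁰, (Ideal.absNorm (I : Ideal (𝓞 K)) : ℝ) ^ (-s)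
  calc (s - 1) * Z ≤ (s - 1) * (|c| + torsionOrder K * T) :=
        mul_le_mul_of_nonneg_left (by linarith) (sub_nonneg.2 hs.le)
    _ = (s - 1) * |c| + torsionOrder K * ((s - 1) * T) := by ring
    _ ≤ 1 * |c| + torsionOrder K * (dedekindZeta_residue K + 1) := by gcongr; linarith
    _ = _ := by rw [one_mul]

lemma exists_abs_partialZeta_sub_le (C : ClassGroup (𝓞 K)) :
    ∃ B : ℝ, ∀ᶠ s in 𝓝[>] (1 : ℝ),
      |partialZeta C s - (torsionOrder K : ℝ)⁻¹ * ∑' z : 𝓞 K, intKernel s z| ≤ B := by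
  obtain ⟨J, hJ⟩ := ClassGroup.mk0_surjective C⁻¹
  obtain ⟨c, hc⟩ := exists_abs_tsum_sub_absNorm_mul_tsum_le (nonZeroDivisors.coe_ne_zero J)
  obtain ⟨D, hD⟩ := exists_sub_one_mul_tsum_intKernel_le K
  have hτ : (0 : ℝ) < (torsionOrder K : ℝ)⁻¹ := inv_pos.2 (Nat.cast_pos.2 (torsionOrder_pos K))
  set N : ℝ := (Ideal.absNorm (J : Ideal (𝓞 K)) : ℝ)
  refine ⟨(torsionOrder K : ℝ)⁻¹ * (N * c + N * Real.log N * D), ?_⟩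
  filter_upwards [hD, Ioc_mem_nhdsGT one_lt_two] with s hsD ⟨hs, hs'⟩
  rw [partialZeta, (hasSum_absNorm_rpow_of_mk0_eq hs hJ).tsum_eq, ← mul_sub, abs_mul,
    abs_of_pos hτ]
  exact mul_le_mul_of_nonneg_left (abs_rpow_mul_sub_le (Nat.one_le_cast.2 (one_le_absNorm J))
    hs.le hs' (tsum_nonneg fun z ↦ intKernel_nonneg s z) (hc s hs hs') hsD) hτ.le

/- The common part of the partial zeta functions, which carries their pole, cancels. -/
lemma exists_abs_tsum_class_mul_le {ψ : ClassGroup (𝓞 K) → ℝ} (hψ : ∑ C, ψ C = 0) :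
    ∃ B : ℝ, ∀ᶠ s in 𝓝[>] (1 : ℝ),
      |∑' I : (Ideal (𝓞 K))⁰,
        ψ (ClassGroup.mk0 I) * (Ideal.absNorm (I : Ideal (𝓞 K)) : ℝ) ^ (-s)| ≤ B := by
  choose B hB using exists_abs_partialZeta_sub_le (K := K)
  refine ⟨∑ C, |ψ C| * B C, ?_⟩
  filter_upwards [eventually_all.2 hB, self_mem_nhdsWithin] with s hsB hs
  have hcommon : ∑ C, ψ C * ((torsionOrder K : ℝ)⁻¹ * ∑' z : 𝓞 K, intKernel s z) = 0 := by
    rw [← Finset.sum_mul, hψ, zero_mul]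
  have hsum := (hasSum_comp_mul ClassGroup.mk0 ψ (summable_absNorm_rpow (K := K) hs)).tsum_eq
  calc |∑' I : (Ideal (𝓞 K))⁰,
        ψ (ClassGroup.mk0 I) * (Ideal.absNorm (I : Ideal (𝓞 K)) : ℝ) ^ (-s)|
      = |∑ C, ψ C * (partialZeta C s - (torsionOrder K : ℝ)⁻¹ * ∑' z : 𝓞 K, intKernel s z)| := by
        simp only [mul_sub, Finset.sum_sub_distrib, hcommon, sub_zero, partialZeta, hsum]
    _ ≤ ∑ C, |ψ C| * B C :=
        (Finset.abs_sum_le_sum_abs _ _).trans (Finset.sum_le_sum fun C _ ↦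
          (abs_mul _ _).trans_le (mul_le_mul_of_nonneg_left (hsB C) (abs_nonneg _)))

end PartialZeta

/-! ### Sums over prime ideals weighted by a class group character -/

section EulerProduct

open IsDedekindDomain Filter Topology
open scoped nonZeroDivisors

variable {R : Type*} [CommRing R] [IsDedekindDomain R]

/-- A height one prime, as an element of the monoid of nonzero ideals. -/
def primeIdeal (P : HeightOneSpectrum R) : (Ideal R)⁰ :=
  ⟨P.asIdeal, mem_nonZeroDivisors_of_ne_zero P.ne_bot⟩

lemma primeIdeal_injective : Function.Injective (primeIdeal (R := R)) := fun _ _ h ↦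
  HeightOneSpectrum.ext (congrArg Subtype.val h)

lemma primeIdeal_dvd_of_dvd {P : HeightOneSpectrum R} {I : (Ideal R)⁰}
    (h : P.asIdeal ∣ (I : Ideal R)) : primeIdeal P ∣ I := by
  obtain ⟨J, hJ⟩ := h
  refine ⟨⟨J, mem_nonZeroDivisors_of_ne_zero ?_⟩, Subtype.ext hJ⟩
  rintro rfl
  exact nonZeroDivisors.coe_ne_zero I (hJ.trans (mul_zero _))

lemma exists_asIdeal_dvd_of_ne_one {I : (Ideal R)⁰} (hI : I ≠ 1) :
    ∃ P : HeightOneSpectrum R, P.asIdeal ∣ (I : Ideal R) := by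
  obtain ⟨M, hM, hIM⟩ := Ideal.exists_le_maximal (I : Ideal R)
    fun h ↦ hI (Subtype.ext (h.trans Ideal.one_eq_top.symm))
  exact ⟨⟨M, hM.isPrime, fun h ↦ nonZeroDivisors.coe_ne_zero I (le_bot_iff.1 (hIM.trans h.le))⟩,
    Ideal.dvd_iff_le.2 hIM⟩

/-- The nonzero ideals divisible by no prime in `S`. -/
def coprimeIdeals (S : Finset (HeightOneSpectrum R)) : Set (Ideal R)⁰ :=
  {I | ∀ P ∈ S, ¬ P.asIdeal ∣ (I : Ideal R)}

variable {S : Finset (HeightOneSpectrum R)} {P : HeightOneSpectrum R} {g : (Ideal R)⁰ →* ℝ}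

lemma primeIdeal_mul_mem_coprimeIdeals (hP : P ∉ S) {J : (Ideal R)⁰} :
    primeIdeal P * J ∈ coprimeIdeals S ↔ J ∈ coprimeIdeals S := by
  refine ⟨fun h Q hQ hQJ ↦ h Q hQ (hQJ.mul_left _), fun h Q hQ hQJ ↦ ?_⟩
  rcases Q.prime.dvd_or_dvd hQJ with hQP | hQJ
  · exact hP (HeightOneSpectrum.ext
      (associated_iff_eq.1 (Q.prime.associated_of_dvd P.prime hQP)) ▸ hQ)
  · exact h Q hQ hQJ

lemma tsum_coprimeIdeals_inter_multiples (hP : P ∉ S) :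
    ∑' I, (coprimeIdeals S ∩ {I | primeIdeal P ∣ I}).indicator g I =
      g (primeIdeal P) * ∑' I, (coprimeIdeals S).indicator g I := by
  have hinj : Function.Injective fun J ↦ primeIdeal P * J := mul_right_injective _
  rw [← tsum_mul_left, ← hinj.tsum_eq]
  · refine tsum_congr fun J ↦ ?_
    by_cases hJ : J ∈ coprimeIdeals S
    · have hPJ : primeIdeal P * J ∈ coprimeIdeals S ∩ {I | primeIdeal P ∣ I} :=
        ⟨(primeIdeal_mul_mem_coprimeIdeals hP).2 hJ, dvd_mul_right _ _⟩
      rw [Set.indicator_of_mem hPJ, Set.indicator_of_mem hJ, map_mul]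
    · rw [Set.indicator_of_notMem fun h ↦ hJ ((primeIdeal_mul_mem_coprimeIdeals hP).1 h.1),
        Set.indicator_of_notMem hJ, mul_zero]
  · intro I hI
    obtain ⟨J, rfl⟩ := (Set.mem_of_indicator_ne_zero hI).2
    exact ⟨J, rfl⟩

lemma coprimeIdeals_insert [DecidableEq (HeightOneSpectrum R)] :
    coprimeIdeals (insert P S) = coprimeIdeals S \ (coprimeIdeals S ∩ {I | primeIdeal P ∣ I}) := by
  ext I
  rw [Set.sdiff_self_inter]
  have hdvd : primeIdeal P ∣ I ↔ P.asIdeal ∣ (I : Ideal R) :=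
    ⟨fun ⟨J, hJ⟩ ↦ ⟨J, congrArg Subtype.val hJ⟩, primeIdeal_dvd_of_dvd⟩
  simp only [coprimeIdeals, Set.mem_ofPred_eq, Finset.forall_mem_insert, Set.mem_sdiff, hdvd,
    and_comm]

lemma tsum_coprimeIdeals_eq_prod (hg : Summable g) (S : Finset (HeightOneSpectrum R)) :
    ∑' I, (coprimeIdeals S).indicator g I =
      (∏ P ∈ S, (1 - g (primeIdeal P))) * ∑' I, g I := by
  classical
  induction S using Finset.induction_on with
  | empty => simp [coprimeIdeals]
  | insert P S hP ih =>
    rw [coprimeIdeals_insert, Set.indicator_sdiff Set.inter_subset_left]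
    simp only [Pi.sub_apply]
    rw [(hg.indicator _).tsum_sub (hg.indicator _), tsum_coprimeIdeals_inter_multiples hP, ih,
      Finset.prod_insert hP]
    ring

lemma tendsto_prod_one_sub_mul_tsum (hg : Summable g) :
    Tendsto (fun S : Finset (HeightOneSpectrum R) ↦
      (∏ P ∈ S, (1 - g (primeIdeal P))) * ∑' I, g I) atTop (𝓝 1) := by
  classical
  have hlim : Tendsto (fun S : Finset (HeightOneSpectrum R) ↦
      ∑' I, (coprimeIdeals S).indicator g I) atTop (𝓝 (∑' I, if I = 1 then g I else 0)) := by
    refine tendsto_tsum_of_dominated_convergence hg.norm (fun I ↦ ?_)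
      (.of_forall fun S I ↦ norm_indicator_le_norm_self _ _)
    split_ifs with hI
    · subst hI
      have hmem (S : Finset (HeightOneSpectrum R)) : 1 ∈ coprimeIdeals S := fun P _ h ↦
        P.prime.not_isUnit (isUnit_of_dvd_one h)
      exact tendsto_const_nhds.congr fun S ↦ (Set.indicator_of_mem (hmem S) _).symm
    · obtain ⟨P, hP⟩ := exists_asIdeal_dvd_of_ne_one hI
      refine tendsto_const_nhds.congr' ?_
      filter_upwards [eventually_ge_atTop {P}] with S hS
      have hnotMem : I ∉ coprimeIdeals S := fun h ↦ h P (hS (Finset.mem_singleton_self P)) hP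
      exact (Set.indicator_of_notMem hnotMem _).symm
  simpa only [tsum_coprimeIdeals_eq_prod hg, tsum_ite_eq, map_one] using hlim

lemma exp_neg_add_sq_le_one_sub {y : ℝ} (hy : |y| ≤ 1 / 2) :
    Real.exp (-(y + 2 * y ^ 2)) ≤ 1 - y := by
  obtain ⟨hle, hge⟩ := abs_le.1 hy
  have hpos : 0 < 1 - y := by linarith
  rw [← Real.le_log_iff_exp_le hpos]
  refine le_trans ?_ (Real.one_sub_inv_le_log_of_pos hpos)
  rw [le_sub_iff_add_le, ← le_sub_iff_add_le', inv_le_iff_one_le_mul₀ hpos]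
  nlinarith [sq_nonneg y, hle, hge]

lemma tsum_pos_of_primeIdeal_lt_one (hg : Summable g) (hP : ∀ P, g (primeIdeal P) < 1) :
    0 < ∑' I, g I := by
  obtain ⟨S, hS⟩ := ((tendsto_prod_one_sub_mul_tsum hg).eventually (lt_mem_nhds one_pos)).exists
  exact pos_of_mul_pos_right hS (Finset.prod_nonneg fun P _ ↦ (sub_pos.2 (hP P)).le)

lemma tsum_primeIdeal_le_log_tsum (hg : Summable g) (hP : ∀ P, g (primeIdeal P) < 1) :
    ∑' P, g (primeIdeal P) ≤ Real.log (∑' I, g I) := by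
  have hL := tsum_pos_of_primeIdeal_lt_one hg hP
  have hexp : 1 ≤ Real.exp (-∑' P, g (primeIdeal P)) * ∑' I, g I := by
    refine le_of_tendsto_of_tendsto' (tendsto_prod_one_sub_mul_tsum hg)
      (((Real.continuous_exp.tendsto _).comp
        (hg.comp_injective primeIdeal_injective).hasSum.neg).mul_const _) fun S ↦ ?_
    rw [Function.comp_apply, Real.exp_sum]
    exact mul_le_mul_of_nonneg_right (Finset.prod_le_prod (fun P _ ↦ (sub_pos.2 (hP P)).le)
      fun P _ ↦ Real.one_sub_le_exp_neg _) hL.le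
  rw [Real.le_log_iff_exp_le hL]
  rwa [Real.exp_neg, inv_mul_eq_div, one_le_div (Real.exp_pos _)] at hexp

lemma log_tsum_le_tsum_primeIdeal (hg : Summable g) (hP : ∀ P, |g (primeIdeal P)| ≤ 1 / 2)
    (hsq : Summable fun P ↦ g (primeIdeal P) ^ 2) :
    Real.log (∑' I, g I) ≤ ∑' P, g (primeIdeal P) + 2 * ∑' P, g (primeIdeal P) ^ 2 := by
  have hL := tsum_pos_of_primeIdeal_lt_one hg
    fun P ↦ (le_abs_self _).trans_lt ((hP P).trans_lt one_half_lt_one)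
  have hexp : Real.exp (-(∑' P, g (primeIdeal P) + 2 * ∑' P, g (primeIdeal P) ^ 2)) *
      ∑' I, g I ≤ 1 := by
    refine le_of_tendsto_of_tendsto' (((Real.continuous_exp.tendsto _).comp
      ((hg.comp_injective primeIdeal_injective).hasSum.add (hsq.hasSum.mul_left 2)).neg).mul_const
        _) (tendsto_prod_one_sub_mul_tsum hg) fun S ↦ ?_
    rw [Function.comp_apply, Real.exp_sum]
    exact mul_le_mul_of_nonneg_right (Finset.prod_le_prod (fun P _ ↦ (Real.exp_pos _).le)
      fun P _ ↦ exp_neg_add_sq_le_one_sub (hP P)) hL.le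
  rw [Real.log_le_iff_le_exp hL]
  rwa [Real.exp_neg, inv_mul_eq_div, div_le_one (Real.exp_pos _)] at hexp

end EulerProduct

section PrimeSums

open NumberField IsDedekindDomain NumberField.Units Filter Topology
open scoped nonZeroDivisors

variable {K : Type*} [Field K] [NumberField K]

lemma two_le_absNorm (P : HeightOneSpectrum (𝓞 K)) : 2 ≤ Ideal.absNorm P.asIdeal := by
  have h0 : Ideal.absNorm P.asIdeal ≠ 0 := fun h ↦ P.ne_bot (Ideal.absNorm_eq_zero_iff.1 h)
  have h1 : Ideal.absNorm P.asIdeal ≠ 1 := fun h ↦ P.isPrime.ne_top (Ideal.absNorm_eq_one_iff.1 h)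
  lia

lemma summable_absNorm_prime_rpow {s : ℝ} (hs : 1 < s) :
    Summable fun P : HeightOneSpectrum (𝓞 K) ↦ (Ideal.absNorm P.asIdeal : ℝ) ^ (-s) := by
  have h := (summable_absNorm_rpow (K := K) hs).comp_injective primeIdeal_injective
  simp only [Function.comp_def] at h
  exact h

/-- The multiplicative function `I ↦ χ(I) N(I)⁻ˢ` on nonzero ideals, the terms of the `L`-series
of `χ`. -/
noncomputable def twistedNorm (χ : (Ideal (𝓞 K))⁰ →* ℝ) (s : ℝ) : (Ideal (𝓞 K))⁰ →* ℝ where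
  toFun I := χ I * (Ideal.absNorm (I : Ideal (𝓞 K)) : ℝ) ^ (-s)
  map_one' := by simp
  map_mul' I J := by
    rw [map_mul, Submonoid.coe_mul, map_mul, Nat.cast_mul,
      Real.mul_rpow (Nat.cast_nonneg _) (Nat.cast_nonneg _)]
    ring

section Twist

variable {χ : (Ideal (𝓞 K))⁰ →* ℝ} (hχ : ∀ I, |χ I| = 1)
include hχ

lemma abs_twistedNorm (s : ℝ) (I : (Ideal (𝓞 K))⁰) :
    |twistedNorm χ s I| = (Ideal.absNorm (I : Ideal (𝓞 K)) : ℝ) ^ (-s) := by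
  change |χ I * _| = _
  rw [abs_mul, hχ, one_mul, abs_of_nonneg (Real.rpow_nonneg (Nat.cast_nonneg _) _)]

variable {s : ℝ} (hs : 1 < s)
include hs

lemma summable_twistedNorm : Summable (twistedNorm χ s) :=
  .of_norm_bounded (summable_absNorm_rpow hs) fun I ↦ (abs_twistedNorm hχ s I).le

lemma abs_twistedNorm_primeIdeal_le (P : HeightOneSpectrum (𝓞 K)) :
    |twistedNorm χ s (primeIdeal P)| ≤ 1 / 2 := by
  have hN : (2 : ℝ) ≤ Ideal.absNorm P.asIdeal := Nat.ofNat_le_cast.2 (two_le_absNorm P)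
  calc |twistedNorm χ s (primeIdeal P)| = (Ideal.absNorm P.asIdeal : ℝ) ^ (-s) :=
        abs_twistedNorm hχ s _
    _ ≤ (Ideal.absNorm P.asIdeal : ℝ) ^ (-1 : ℝ) :=
        Real.rpow_le_rpow_of_exponent_le (one_le_two.trans hN) (neg_le_neg hs.le)
    _ ≤ 1 / 2 := by
        rw [Real.rpow_neg_one, one_div]
        exact inv_anti₀ two_pos hN

lemma twistedNorm_primeIdeal_lt_one (P : HeightOneSpectrum (𝓞 K)) :
    twistedNorm χ s (primeIdeal P) < 1 :=
  (le_abs_self _).trans_lt ((abs_twistedNorm_primeIdeal_le hχ hs P).trans_lt one_half_lt_one)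

lemma twistedNorm_primeIdeal_sq_le (P : HeightOneSpectrum (𝓞 K)) :
    twistedNorm χ s (primeIdeal P) ^ 2 ≤ (Ideal.absNorm P.asIdeal : ℝ) ^ (-2 : ℝ) := by
  have hN : (1 : ℝ) ≤ Ideal.absNorm P.asIdeal := Nat.one_le_cast.2 (one_le_absNorm (primeIdeal P))
  rw [← sq_abs, abs_twistedNorm hχ, ← Real.rpow_mul_natCast (Nat.cast_nonneg _)]
  exact Real.rpow_le_rpow_of_exponent_le hN (by push_cast; linarith)

lemma log_tsum_twistedNorm_le :
    Real.log (∑' I, twistedNorm χ s I) ≤ ∑' P, twistedNorm χ s (primeIdeal P) +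
      2 * ∑' P : HeightOneSpectrum (𝓞 K), (Ideal.absNorm P.asIdeal : ℝ) ^ (-2 : ℝ) := by
  have hsummable := summable_absNorm_prime_rpow (K := K) one_lt_two
  have hsq : Summable fun P ↦ twistedNorm χ s (primeIdeal P) ^ 2 :=
    .of_nonneg_of_le (fun _ ↦ sq_nonneg _) (twistedNorm_primeIdeal_sq_le hχ hs) hsummable
  exact (log_tsum_le_tsum_primeIdeal (summable_twistedNorm hχ hs)
    (abs_twistedNorm_primeIdeal_le hχ hs) hsq).trans (add_le_add le_rfl
      (mul_le_mul_of_nonneg_left (hsq.tsum_le_tsum (twistedNorm_primeIdeal_sq_le hχ hs) hsummable)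
        zero_le_two))

end Twist

variable (K) in
lemma exists_abs_tsum_prime_add_log_le :
    ∃ C : ℝ, ∀ᶠ s in 𝓝[>] (1 : ℝ),
      |∑' P : HeightOneSpectrum (𝓞 K), (Ideal.absNorm P.asIdeal : ℝ) ^ (-s) +
        Real.log (s - 1)| ≤ C := by
  have hχ (I : (Ideal (𝓞 K))⁰) : |(1 : (Ideal (𝓞 K))⁰ →* ℝ) I| = 1 := by simp
  have hlim := ((Real.continuousAt_log (dedekindZeta_residue_pos K).ne').tendsto.comp
    (tendsto_sub_one_mul_tsum_absNorm_rpow K)).abs.eventually_le_const (lt_add_one _)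
  refine ⟨|Real.log (dedekindZeta_residue K)| + 1 +
    2 * ∑' P : HeightOneSpectrum (𝓞 K), (Ideal.absNorm P.asIdeal : ℝ) ^ (-2 : ℝ), ?_⟩
  filter_upwards [hlim, self_mem_nhdsWithin] with s hlog (hs : 1 < s)
  have hpos := tsum_pos_of_primeIdeal_lt_one (summable_twistedNorm hχ hs)
    (twistedNorm_primeIdeal_lt_one hχ hs)
  have hlower := tsum_primeIdeal_le_log_tsum (summable_twistedNorm hχ hs)
    (twistedNorm_primeIdeal_lt_one hχ hs)
  have hupper := log_tsum_twistedNorm_le hχ hs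
  simp only [twistedNorm, MonoidHom.coe_mk, OneHom.coe_mk, MonoidHom.one_apply, one_mul,
    primeIdeal] at hpos hlower hupper
  rw [Function.comp_apply, Real.log_mul (sub_pos.2 hs).ne' hpos.ne'] at hlog
  have hsq : 0 ≤ ∑' P : HeightOneSpectrum (𝓞 K), (Ideal.absNorm P.asIdeal : ℝ) ^ (-2 : ℝ) :=
    tsum_nonneg fun _ ↦ Real.rpow_nonneg (Nat.cast_nonneg _) _
  rw [abs_le] at hlog ⊢
  constructor <;> linarith

lemma exists_tsum_prime_class_le {ψ : ClassGroup (𝓞 K) →* ℝ} (hψ : ∀ C, |ψ C| = 1) (hψ1 : ψ ≠ 1) :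
    ∃ B : ℝ, ∀ᶠ s in 𝓝[>] (1 : ℝ),
      ∑' P, ψ (ClassGroup.mk0 (primeIdeal P)) * (Ideal.absNorm P.asIdeal : ℝ) ^ (-s) ≤ B := by
  obtain ⟨B, hB⟩ := exists_abs_tsum_class_mul_le (sum_hom_units_eq_zero ψ hψ1)
  refine ⟨Real.log B, ?_⟩
  have hχ (I : (Ideal (𝓞 K))⁰) : |ψ.comp ClassGroup.mk0 I| = 1 := hψ _
  filter_upwards [hB, self_mem_nhdsWithin] with s hsB (hs : 1 < s)
  have hpos := tsum_pos_of_primeIdeal_lt_one (summable_twistedNorm hχ hs)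
    (twistedNorm_primeIdeal_lt_one hχ hs)
  exact (tsum_primeIdeal_le_log_tsum (summable_twistedNorm hχ hs)
    (twistedNorm_primeIdeal_lt_one hχ hs)).trans
      (Real.log_le_log hpos ((le_abs_self _).trans hsB))

end PrimeSums

/-! ### Prime ideals with prescribed quadratic symbols -/

section FiberCounting

open IsDedekindDomain

lemma tsum_le_mul_tsum_of_encard_fiber_le {ι κ : Type*} {φ : ι → κ} {d : ℕ}
    (hφ : ∀ y, (φ ⁻¹' {y}).encard ≤ d) {f : ι → ℝ} {h : κ → ℝ} (hf : ∀ x, 0 ≤ f x)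
    (hh : ∀ y, 0 ≤ h y) (hfh : ∀ x, f x ≤ h (φ x)) (hs : Summable h) :
    ∑' x, f x ≤ d * ∑' y, h y := by
  classical
  refine Real.tsum_le_of_sum_le hf fun t ↦ ?_
  have hcard (y : κ) : (t.filter fun x ↦ φ x = y).card ≤ d := by
    rw [← Nat.cast_le (α := ℕ∞), ← Set.encard_coe_eq_coe_finsetCard]
    exact (Set.encard_le_encard fun x hx ↦ (Finset.mem_filter.1 hx).2).trans (hφ y)
  calc ∑ x ∈ t, f x ≤ ∑ x ∈ t, h (φ x) := Finset.sum_le_sum fun x _ ↦ hfh x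
    _ = ∑ y ∈ t.image φ, (t.filter fun x ↦ φ x = y).card • h y := Finset.sum_comp h φ
    _ ≤ ∑ y ∈ t.image φ, d * h y := Finset.sum_le_sum fun y _ ↦ by
      rw [nsmul_eq_mul]
      exact mul_le_mul_of_nonneg_right (Nat.cast_le.2 (hcard y)) (hh y)
    _ = d * ∑ y ∈ t.image φ, h y := (Finset.mul_sum ..).symm
    _ ≤ d * ∑' y, h y :=
      mul_le_mul_of_nonneg_left (hs.sum_le_tsum _ fun y _ ↦ hh y) (Nat.cast_nonneg _)

lemma encard_primesOver_le_finrank {R S : Type*} [CommRing R] [IsDomain R] [CommRing S]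
    [Algebra R S] [Module.Finite R S] [Module.Flat R S] (p : Ideal R) [p.IsPrime] :
    (p.primesOver S).encard ≤ Module.finrank R S := by
  have := (Algebra.QuasiFinite.finite_primesOver (S := S) p).fintype
  rw [Set.encard_eq_coe_toFinset_card, Nat.cast_le, Set.toFinset_card, ← Finset.card_univ,
    ← Ideal.sum_ramification_inertia_eq_finrank p (S := S), Finset.card_eq_sum_ones]
  refine Finset.sum_le_sum fun Q _ ↦ ?_
  have := Q.2.1
  exact Nat.mul_pos (Ideal.ramificationIdx_pos _ _) (Ideal.inertiaDeg_pos _ _)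

lemma encard_setOfPred_under_eq_le_finrank {R S : Type*} [CommRing R] [IsDomain R] [CommRing S]
    [Algebra R S] [Module.Finite R S] [Module.Flat R S] (p : Ideal R) [p.IsPrime] :
    {P : HeightOneSpectrum S | P.asIdeal.under R = p}.encard ≤ Module.finrank R S :=
  (Set.encard_le_encard_of_injOn (t := p.primesOver S)
    (fun P hP ↦ ⟨P.isPrime, ⟨hP.symm⟩⟩) fun _ _ _ _ ↦ HeightOneSpectrum.ext).trans
      (encard_primesOver_le_finrank p)

end FiberCounting

section PrimeSum

open NumberField IsDedekindDomain

variable {K : Type*} [Field K] [NumberField K]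

/-- The sum of `N(P)⁻ˢ` over the primes `P ∈ A`, whose growth as `s → 1` measures the Dirichlet
density of `A`. -/
noncomputable def primeSum (A : Set (HeightOneSpectrum (𝓞 K))) (s : ℝ) : ℝ :=
  ∑' P, A.indicator (fun P ↦ (Ideal.absNorm P.asIdeal : ℝ) ^ (-s)) P

lemma indicator_absNorm_rpow_nonneg (A : Set (HeightOneSpectrum (𝓞 K))) (s : ℝ)
    (P : HeightOneSpectrum (𝓞 K)) :
    0 ≤ A.indicator (fun P ↦ (Ideal.absNorm P.asIdeal : ℝ) ^ (-s)) P :=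
  Set.indicator_nonneg (fun _ _ ↦ Real.rpow_nonneg (Nat.cast_nonneg _) _) P

lemma summable_indicator_absNorm_rpow (A : Set (HeightOneSpectrum (𝓞 K))) {s : ℝ} (hs : 1 < s) :
    Summable (A.indicator fun P ↦ (Ideal.absNorm P.asIdeal : ℝ) ^ (-s)) :=
  (summable_absNorm_prime_rpow hs).indicator A

lemma primeSum_mono {A B : Set (HeightOneSpectrum (𝓞 K))} (h : A ⊆ B) {s : ℝ} (hs : 1 < s) :
    primeSum A s ≤ primeSum B s :=
  (summable_indicator_absNorm_rpow A hs).tsum_le_tsum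
    (Set.indicator_le_indicator_of_subset h fun _ ↦ Real.rpow_nonneg (Nat.cast_nonneg _) _)
    (summable_indicator_absNorm_rpow B hs)

lemma primeSum_union {A B : Set (HeightOneSpectrum (𝓞 K))} (h : Disjoint A B) {s : ℝ}
    (hs : 1 < s) : primeSum (A ∪ B) s = primeSum A s + primeSum B s := by
  unfold primeSum
  rw [← (summable_indicator_absNorm_rpow A hs).tsum_add (summable_indicator_absNorm_rpow B hs),
    Set.indicator_union_of_disjoint h]

lemma primeSum_union_le (A B : Set (HeightOneSpectrum (𝓞 K))) {s : ℝ} (hs : 1 < s) :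
    primeSum (A ∪ B) s ≤ primeSum A s + primeSum B s := by
  rw [← Set.union_sdiff_self, primeSum_union Set.disjoint_sdiff_right hs]
  exact add_le_add_right (primeSum_mono Set.sdiff_subset hs) _

lemma primeSum_univ (s : ℝ) : primeSum (Set.univ : Set (HeightOneSpectrum (𝓞 K))) s =
    ∑' P : HeightOneSpectrum (𝓞 K), (Ideal.absNorm P.asIdeal : ℝ) ^ (-s) := by
  simp only [primeSum, Set.indicator_univ]

lemma absNorm_rpow_neg_le_of_le (P : HeightOneSpectrum (𝓞 K)) {s t : ℝ} (hst : s ≤ t) :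
    (Ideal.absNorm P.asIdeal : ℝ) ^ (-t) ≤ (Ideal.absNorm P.asIdeal : ℝ) ^ (-s) :=
  Real.rpow_le_rpow_of_exponent_le (Nat.one_le_cast.2 (one_le_absNorm (primeIdeal P)))
    (neg_le_neg hst)

lemma primeSum_le_primeSum_one_of_finite {A : Set (HeightOneSpectrum (𝓞 K))} (hA : A.Finite)
    {s : ℝ} (hs : 1 < s) : primeSum A s ≤ primeSum A 1 :=
  (summable_indicator_absNorm_rpow A hs).tsum_le_tsum
    (fun P ↦ Set.indicator_le_indicator (absNorm_rpow_neg_le_of_le P hs.le))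
    (summable_of_hasFiniteSupport (hA.subset Set.support_indicator_subset))

lemma absNorm_under_sq_le_of_not_prime {P : HeightOneSpectrum (𝓞 K)}
    (hP : ¬ (Ideal.absNorm P.asIdeal).Prime) :
    Ideal.absNorm (P.asIdeal.under ℤ) ^ 2 ≤ Ideal.absNorm P.asIdeal := by
  have : NeZero P.asIdeal := ⟨P.ne_bot⟩
  have hp := Nat.absNorm_under_prime P.asIdeal
  have hpow := Ideal.absNorm_pow_inertiaDeg (P.asIdeal.under ℤ) P.asIdeal
  have hpos := Ideal.inertiaDeg_pos P.asIdeal ℤ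
  have hne : P.asIdeal.inertiaDeg ℤ ≠ 1 := fun h ↦ by
    rw [h, pow_one] at hpow
    exact hP (hpow ▸ hp)
  rw [← hpow]
  exact pow_le_pow_right₀ hp.one_le (by lia)

lemma encard_setOfPred_absNorm_under_eq_le (y : ℕ) :
    ((fun P : HeightOneSpectrum (𝓞 K) ↦ Ideal.absNorm (P.asIdeal.under ℤ)) ⁻¹' {y}).encard ≤
      Module.finrank ℤ (𝓞 K) := by
  obtain hempty | ⟨P, hP⟩ := Set.eq_empty_or_nonempty
    ((fun P : HeightOneSpectrum (𝓞 K) ↦ Ideal.absNorm (P.asIdeal.under ℤ)) ⁻¹' {y})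
  · rw [hempty, Set.encard_empty]
    exact zero_le
  · refine (Set.encard_le_encard fun Q hQ ↦ ?_).trans
      (encard_setOfPred_under_eq_le_finrank (P.asIdeal.under ℤ))
    rw [Set.mem_preimage, Set.mem_singleton_iff] at hP hQ
    rw [Set.mem_ofPred_eq, ← Int.ideal_span_absNorm_eq_self (Q.asIdeal.under ℤ),
      ← Int.ideal_span_absNorm_eq_self (P.asIdeal.under ℤ), hP, hQ]

variable (K)

lemma primeSum_not_prime_le {s : ℝ} (hs : 1 < s) :
    primeSum {P : HeightOneSpectrum (𝓞 K) | ¬ (Ideal.absNorm P.asIdeal).Prime} s ≤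
      Module.finrank ℤ (𝓞 K) * ∑' y : ℕ, (y : ℝ) ^ (-2 : ℝ) := by
  refine tsum_le_mul_tsum_of_encard_fiber_le encard_setOfPred_absNorm_under_eq_le
    (indicator_absNorm_rpow_nonneg _ s) (fun y ↦ Real.rpow_nonneg (Nat.cast_nonneg y) _)
    (fun P ↦ ?_) (Real.summable_nat_rpow.2 (by norm_num))
  refine Set.indicator_apply_le' (fun hP ↦ ?_) fun _ ↦ Real.rpow_nonneg (Nat.cast_nonneg _) _
  have : NeZero P.asIdeal := ⟨P.ne_bot⟩
  have hpos : (0 : ℝ) < Ideal.absNorm (P.asIdeal.under ℤ) :=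
    Nat.cast_pos.2 (Nat.absNorm_under_prime P.asIdeal).pos
  calc (Ideal.absNorm P.asIdeal : ℝ) ^ (-s)
    _ ≤ (Ideal.absNorm P.asIdeal : ℝ) ^ (-1 : ℝ) := absNorm_rpow_neg_le_of_le P hs.le
    _ ≤ ((Ideal.absNorm (P.asIdeal.under ℤ) : ℝ) ^ 2) ^ (-1 : ℝ) :=
      Real.rpow_le_rpow_of_nonpos (by positivity)
        (by exact_mod_cast absNorm_under_sq_le_of_not_prime hP) (by norm_num)
    _ = (Ideal.absNorm (P.asIdeal.under ℤ) : ℝ) ^ (-2 : ℝ) := by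
      rw [← Real.rpow_natCast_mul hpos.le]
      norm_num

/-- The primes whose norm is a rational prime not dividing `m`. -/
def goodPrimes (m : ℤ) : Set (HeightOneSpectrum (𝓞 K)) :=
  {P | (Ideal.absNorm P.asIdeal).Prime ∧ ¬ (Ideal.absNorm P.asIdeal : ℤ) ∣ m}

lemma goodPrimes_subset_of_dvd {m n : ℤ} (h : m ∣ n) : goodPrimes K n ⊆ goodPrimes K m :=
  fun _ hP ↦ ⟨hP.1, fun hdvd ↦ hP.2 (hdvd.trans h)⟩

lemma finite_setOfPred_absNorm_dvd {m : ℤ} (hm : m ≠ 0) :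
    {P : HeightOneSpectrum (𝓞 K) | (Ideal.absNorm P.asIdeal : ℤ) ∣ m}.Finite :=
  ((Ideal.finite_setOfPred_absNorm_le (S := 𝓞 K) m.natAbs).preimage
    fun _ _ _ _ ↦ HeightOneSpectrum.ext).subset fun _ hP ↦
      Nat.le_of_dvd (Int.natAbs_pos.2 hm) (Int.natCast_dvd.1 hP)

lemma exists_primeSum_le_primeSum_inter_goodPrimes_add {m : ℤ} (hm : m ≠ 0) :
    ∃ C : ℝ, ∀ (A : Set (HeightOneSpectrum (𝓞 K))) (s : ℝ), 1 < s →
      primeSum A s ≤ primeSum (A ∩ goodPrimes K m) s + C := by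
  let dividing := {P : HeightOneSpectrum (𝓞 K) | (Ideal.absNorm P.asIdeal : ℤ) ∣ m}
  let notPrime := {P : HeightOneSpectrum (𝓞 K) | ¬ (Ideal.absNorm P.asIdeal).Prime}
  have hcover (A : Set (HeightOneSpectrum (𝓞 K))) :
      A ⊆ A ∩ goodPrimes K m ∪ (dividing ∪ notPrime) := fun P hP ↦ by
    simp only [goodPrimes, dividing, notPrime, Set.mem_union, Set.mem_inter_iff, Set.mem_ofPred_eq]
    tauto
  refine ⟨primeSum dividing 1 + Module.finrank ℤ (𝓞 K) * ∑' y : ℕ, (y : ℝ) ^ (-2 : ℝ),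
    fun A s hs ↦ ?_⟩
  calc primeSum A s
    _ ≤ primeSum (A ∩ goodPrimes K m) s + (primeSum dividing s + primeSum notPrime s) :=
      (primeSum_mono (hcover A) hs).trans ((primeSum_union_le _ _ hs).trans
        (add_le_add_right (primeSum_union_le _ _ hs) _))
    _ ≤ _ := add_le_add_right (add_le_add
      (primeSum_le_primeSum_one_of_finite (finite_setOfPred_absNorm_dvd K hm) hs)
      (primeSum_not_prime_le K hs)) _

section Extension

variable {L : Type*} [Field L] [NumberField L] [Algebra K L]

/-- The prime of `K` below a prime of `L`. -/
noncomputable def primeBelow (P : HeightOneSpectrum (𝓞 L)) : HeightOneSpectrum (𝓞 K) :=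
  ⟨P.asIdeal.under (𝓞 K), inferInstance, Ideal.IsIntegral.comap_ne_bot (𝓞 K) P.ne_bot⟩

lemma absNorm_primeBelow_pow (P : HeightOneSpectrum (𝓞 L)) :
    Ideal.absNorm (primeBelow K P).asIdeal ^ P.asIdeal.inertiaDeg (𝓞 K) =
      Ideal.absNorm P.asIdeal :=
  Ideal.absNorm_pow_inertiaDeg (P.asIdeal.under (𝓞 K)) P.asIdeal

lemma absNorm_primeBelow_of_prime {P : HeightOneSpectrum (𝓞 L)}
    (hP : (Ideal.absNorm P.asIdeal).Prime) :
    Ideal.absNorm (primeBelow K P).asIdeal = Ideal.absNorm P.asIdeal := by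
  have h := absNorm_primeBelow_pow K P
  rw [← h] at hP
  rw [← h, Nat.Prime.eq_one_of_pow hP, pow_one]

variable {K}

lemma primeSum_preimage_primeBelow_le (A : Set (HeightOneSpectrum (𝓞 K))) {s : ℝ} (hs : 1 < s) :
    primeSum {P : HeightOneSpectrum (𝓞 L) | (Ideal.absNorm P.asIdeal).Prime ∧
      primeBelow K P ∈ A} s ≤ Module.finrank (𝓞 K) (𝓞 L) * primeSum A s := by
  refine tsum_le_mul_tsum_of_encard_fiber_le (φ := primeBelow K) (fun Q ↦ ?_)
    (indicator_absNorm_rpow_nonneg _ s) (indicator_absNorm_rpow_nonneg A s) (fun P ↦ ?_)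
    (summable_indicator_absNorm_rpow A hs)
  · exact (Set.encard_le_encard fun P hP ↦ congrArg HeightOneSpectrum.asIdeal hP).trans
      (encard_setOfPred_under_eq_le_finrank Q.asIdeal)
  · by_cases hP : P ∈ {P : HeightOneSpectrum (𝓞 L) | (Ideal.absNorm P.asIdeal).Prime ∧
      primeBelow K P ∈ A}
    · rw [Set.indicator_of_mem hP, Set.indicator_of_mem hP.2, absNorm_primeBelow_of_prime K hP.1]
    · rw [Set.indicator_of_notMem hP]
      exact indicator_absNorm_rpow_nonneg _ _ _

omit [Algebra K L] in
lemma primeSum_image {A : Set (HeightOneSpectrum (𝓞 K))}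
    {f : HeightOneSpectrum (𝓞 K) → HeightOneSpectrum (𝓞 L)} (hf : Set.InjOn f A)
    (hN : ∀ P ∈ A, Ideal.absNorm (f P).asIdeal = Ideal.absNorm P.asIdeal) (s : ℝ) :
    primeSum (f '' A) s = primeSum A s := by
  unfold primeSum
  rw [← tsum_subtype, ← tsum_subtype, ← (Equiv.Set.imageOfInjOn f A hf).tsum_eq]
  exact tsum_congr fun P ↦ congrArg (fun n : ℕ ↦ (n : ℝ) ^ (-s)) (hN P P.2)

lemma absNorm_eq_of_ne_of_primeBelow_eq (h2 : Module.finrank K L = 2)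
    {P₁ P₂ : HeightOneSpectrum (𝓞 L)} (hne : P₁ ≠ P₂) (h : primeBelow K P₁ = primeBelow K P₂) :
    Ideal.absNorm P₁.asIdeal = Ideal.absNorm (primeBelow K P₁).asIdeal := by
  classical
  let p := P₁.asIdeal.under (𝓞 K)
  have := (Algebra.QuasiFinite.finite_primesOver (S := 𝓞 L) p).fintype
  let Q₁ : p.primesOver (𝓞 L) := ⟨P₁.asIdeal, P₁.isPrime, ⟨rfl⟩⟩
  let Q₂ : p.primesOver (𝓞 L) :=
    ⟨P₂.asIdeal, P₂.isPrime, ⟨congrArg HeightOneSpectrum.asIdeal h⟩⟩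
  have hQ : Q₁ ≠ Q₂ := fun hQ ↦ hne (HeightOneSpectrum.ext (congrArg Subtype.val hQ))
  have hsum := Ideal.sum_ramification_inertia_eq_finrank p (S := 𝓞 L)
  rw [(IsFractionRing.finrank_eq (𝓞 K) K (𝓞 L) L).symm, h2] at hsum
  have hle : P₁.asIdeal.ramificationIdx (𝓞 K) * P₁.asIdeal.inertiaDeg (𝓞 K) +
      P₂.asIdeal.ramificationIdx (𝓞 K) * P₂.asIdeal.inertiaDeg (𝓞 K) ≤ 2 := by
    rw [← hsum, ← Finset.sum_pair (f := fun Q : p.primesOver (𝓞 L) ↦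
      Q.1.ramificationIdx (𝓞 K) * Q.1.inertiaDeg (𝓞 K)) hQ]
    exact Finset.sum_le_sum_of_subset (Finset.subset_univ _)
  have hpos₁ := Ideal.ramificationIdx_pos P₁.asIdeal (𝓞 K)
  have hpos₂ := Nat.mul_pos (Ideal.ramificationIdx_pos P₂.asIdeal (𝓞 K))
    (Ideal.inertiaDeg_pos P₂.asIdeal (𝓞 K))
  have hdeg₁ := Ideal.inertiaDeg_pos P₁.asIdeal (𝓞 K)
  have hdeg : P₁.asIdeal.inertiaDeg (𝓞 K) = 1 := by nlinarith
  rw [← absNorm_primeBelow_pow K P₁, hdeg, pow_one]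

lemma two_mul_primeSum_le_of_split (h2 : Module.finrank K L = 2)
    {A : Set (HeightOneSpectrum (𝓞 K))}
    (hA : ∀ P ∈ A, ∃ P₁ P₂ : HeightOneSpectrum (𝓞 L), P₁ ≠ P₂ ∧ primeBelow K P₁ = P ∧
      primeBelow K P₂ = P) {s : ℝ} (hs : 1 < s) :
    2 * primeSum A s ≤ primeSum (Set.univ : Set (HeightOneSpectrum (𝓞 L))) s := by
  obtain rfl | ⟨P, hP⟩ := A.eq_empty_or_nonempty
  · simpa only [primeSum, Set.indicator_empty, tsum_zero, mul_zero] using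
      tsum_nonneg (indicator_absNorm_rpow_nonneg Set.univ s)
  have : Nonempty (HeightOneSpectrum (𝓞 L)) := ⟨(hA P hP).choose⟩
  choose! f₁ f₂ hne hf₁ hf₂ using hA
  have hinj {f : HeightOneSpectrum (𝓞 K) → HeightOneSpectrum (𝓞 L)}
      (hf : ∀ P ∈ A, primeBelow K (f P) = P) : Set.InjOn f A :=
    fun P hP Q hQ h ↦ by rw [← hf P hP, h, hf Q hQ]
  have hN₁ (P) (hP : P ∈ A) : Ideal.absNorm (f₁ P).asIdeal = Ideal.absNorm P.asIdeal := by
    rw [absNorm_eq_of_ne_of_primeBelow_eq h2 (hne P hP) ((hf₁ P hP).trans (hf₂ P hP).symm),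
      hf₁ P hP]
  have hN₂ (P) (hP : P ∈ A) : Ideal.absNorm (f₂ P).asIdeal = Ideal.absNorm P.asIdeal := by
    rw [absNorm_eq_of_ne_of_primeBelow_eq h2 (hne P hP).symm ((hf₂ P hP).trans (hf₁ P hP).symm),
      hf₂ P hP]
  have hdisj : Disjoint (f₁ '' A) (f₂ '' A) := by
    rw [Set.disjoint_left]
    rintro _ ⟨P, hP, rfl⟩ ⟨Q, hQ, hQP⟩
    obtain rfl : Q = P := by rw [← hf₂ Q hQ, hQP, hf₁ P hP]
    exact hne Q hQ hQP.symm
  calc 2 * primeSum A s = primeSum (f₁ '' A) s + primeSum (f₂ '' A) s := by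
        rw [primeSum_image (hinj hf₁) hN₁, primeSum_image (hinj hf₂) hN₂, two_mul]
    _ = primeSum (f₁ '' A ∪ f₂ '' A) s := (primeSum_union hdisj hs).symm
    _ ≤ primeSum Set.univ s := primeSum_mono (Set.subset_univ _) hs

end Extension

end PrimeSum

section SquarePrimes

open NumberField IsDedekindDomain Filter Topology

lemma comap_ne_self_of_map_eq_neg {S F : Type*} [CommRing S] [FunLike F S S] [RingHomClass F S S]
    {Q : Ideal S} [hQ : Q.IsPrime] {σ : F} {x r : S} (hx : σ x = -x) (hr : σ r = r)
    (hmem : x ^ 2 - r ^ 2 ∈ Q) (h2r : 2 * r ∉ Q) : Q.comap σ ≠ Q := by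
  intro hσ
  have hσ_mem {y : S} (hy : y ∈ Q) : σ y ∈ Q := Ideal.mem_comap.1 (hσ.symm ▸ hy)
  rw [sq_sub_sq] at hmem
  obtain h | h := hQ.mem_or_mem hmem
  · have hsum := Q.add_mem h (hσ_mem h)
    rw [map_add, hx, hr] at hsum
    exact h2r (by convert hsum using 1; ring)
  · have hsum := Q.add_mem h (hσ_mem h)
    rw [map_sub, hx, hr] at hsum
    exact h2r (by convert Q.neg_mem hsum using 1; ring)

/-- The primes whose norm is a rational prime `p` not dividing `2c` modulo which `c` is a
square. -/
def squarePrimes (K : Type*) [Field K] [NumberField K] (c : ℤ) : Set (HeightOneSpectrum (𝓞 K)) :=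
  goodPrimes K (2 * c) ∩ {P | jacobiSym c (Ideal.absNorm P.asIdeal) = 1}

section

variable {K : Type*} [Field K] [NumberField K]

lemma intCast_mem_iff_absNorm_dvd_of_prime {P : HeightOneSpectrum (𝓞 K)}
    (hP : (Ideal.absNorm P.asIdeal).Prime) {m : ℤ} :
    (m : 𝓞 K) ∈ P.asIdeal ↔ (Ideal.absNorm P.asIdeal : ℤ) ∣ m := by
  have hpow := Ideal.absNorm_pow_inertiaDeg (P.asIdeal.under ℤ) P.asIdeal
  rw [← hpow] at hP
  rw [Int.cast_mem_ideal_iff, ← hpow, Nat.Prime.eq_one_of_pow hP, pow_one]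

lemma exists_sub_sq_mem_of_mem_squarePrimes {c : ℤ} {P : HeightOneSpectrum (𝓞 K)}
    (hP : P ∈ squarePrimes K c) :
    ∃ r : ℤ, (c - r ^ 2 : 𝓞 K) ∈ P.asIdeal ∧ (2 * r : 𝓞 K) ∉ P.asIdeal := by
  obtain ⟨⟨hp, hc⟩, hj⟩ := hP
  have hmem_iff := fun m : ℤ ↦ intCast_mem_iff_absNorm_dvd_of_prime hp (m := m)
  set p := Ideal.absNorm P.asIdeal
  have := Fact.mk hp
  have hc0 : (c : ZMod p) ≠ 0 := fun h ↦
    hc (((ZMod.intCast_zmod_eq_zero_iff_dvd c p).1 h).mul_left 2)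
  rw [Set.mem_ofPred_eq, ← jacobiSym.legendreSym.to_jacobiSym, legendreSym.eq_one_iff p hc0] at hj
  obtain ⟨y, hy⟩ := hj
  obtain ⟨r, rfl⟩ := ZMod.intCast_surjective y
  have hdvd : (p : ℤ) ∣ c - r ^ 2 := by
    rw [← ZMod.intCast_zmod_eq_zero_iff_dvd]
    push_cast
    rw [hy]
    ring
  refine ⟨r, by exact_mod_cast (hmem_iff _).2 hdvd, fun h2r ↦ hc ?_⟩
  have h2r_dvd : (p : ℤ) ∣ 2 * r := (hmem_iff _).1 (by exact_mod_cast h2r)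
  have hsum : (2 * c : ℤ) = 2 * (c - r ^ 2) + 2 * r * r := by ring
  exact hsum ▸ dvd_add (hdvd.mul_left 2) (h2r_dvd.mul_right r)

variable {L : Type*} [Field L] [NumberField L] [Algebra K L]

lemma two_mul_primeSum_squarePrimes_le (h2 : Module.finrank K L = 2) {c : ℤ} {α : 𝓞 L}
    (hα : α ^ 2 = c) (σ : 𝓞 L ≃ₐ[𝓞 K] 𝓞 L) (hσ : σ α = -α) {s : ℝ} (hs : 1 < s) :
    2 * primeSum (squarePrimes K c) s ≤
      primeSum (Set.univ : Set (HeightOneSpectrum (𝓞 L))) s := by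
  refine two_mul_primeSum_le_of_split h2 (fun P hP ↦ ?_) hs
  obtain ⟨r, hr, h2r⟩ := exists_sub_sq_mem_of_mem_squarePrimes hP
  obtain ⟨⟨Q, hQ, hQP⟩⟩ := P.asIdeal.nonempty_primesOver (S := 𝓞 L)
  have hmem_iff (x : 𝓞 K) : algebraMap (𝓞 K) (𝓞 L) x ∈ Q ↔ x ∈ P.asIdeal :=
    (SetLike.ext_iff.1 hQP.over x).symm
  have hcomap_ne : Q.comap σ ≠ Q := by
    refine comap_ne_self_of_map_eq_neg (x := α) (r := r) hσ (map_intCast σ r) ?_ ?_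
    · simpa only [hα, map_sub, map_pow, map_intCast] using (hmem_iff _).2 hr
    · simpa only [map_mul, map_ofNat, map_intCast] using (hmem_iff _).not.2 h2r
  have hcomap_under : (Q.comap σ).under (𝓞 K) = P.asIdeal := by
    ext x
    rw [Ideal.under, Ideal.mem_comap, Ideal.mem_comap, AlgEquiv.commutes, hmem_iff]
  have : (Q.comap σ).LiesOver P.asIdeal := ⟨hcomap_under.symm⟩
  refine ⟨⟨Q, hQ, Ideal.ne_bot_of_liesOver_of_ne_bot P.ne_bot Q⟩,
    ⟨Q.comap σ, Ideal.comap_isPrime σ Q, Ideal.ne_bot_of_liesOver_of_ne_bot P.ne_bot _⟩,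
    fun h ↦ hcomap_ne (congrArg HeightOneSpectrum.asIdeal h).symm,
    HeightOneSpectrum.ext hQP.over.symm, HeightOneSpectrum.ext hcomap_under⟩

end

lemma fact_sq_ne_of_not_isSquare {K : Type*} [Field K] {c : K} (hc : ¬ IsSquare c) :
    Fact (∀ r : K, r ^ 2 ≠ c + 0 * r) :=
  ⟨fun r hr ↦ hc ⟨r, by rw [← sq, hr, zero_mul, add_zero]⟩⟩

lemma exists_ringOfIntegers_sq_eq {L : Type*} [Field L] {x : L} {c : ℤ} (hx : x ^ 2 = c) :
    ∃ α : 𝓞 L, (α : L) = x ∧ α ^ 2 = c := by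
  have hx_int : IsIntegral ℤ x := IsIntegral.of_pow two_pos (hx ▸ isIntegral_algebraMap (x := c))
  exact ⟨⟨x, hx_int⟩, rfl, RingOfIntegers.ext <|
    (map_pow (algebraMap (𝓞 L) L) _ 2).trans (hx.trans (map_intCast _ c).symm)⟩

lemma omega_sq_eq_algebraMap {R : Type*} [CommRing R] (c : R) :
    (QuadraticAlgebra.omega : QuadraticAlgebra R c 0) ^ 2 = algebraMap R _ c := by
  rw [sq, QuadraticAlgebra.omega_mul_omega_eq_mk]
  rfl

lemma exists_algEquiv_omega_eq_neg {R : Type*} [CommRing R] (c : R) :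
    ∃ σ : QuadraticAlgebra R c 0 ≃ₐ[R] QuadraticAlgebra R c 0,
      σ QuadraticAlgebra.omega = -QuadraticAlgebra.omega := by
  refine ⟨AlgEquiv.ofRingEquiv (f := starRingAut) fun r ↦ ?_, ?_⟩
  · ext <;> simp
  · change star QuadraticAlgebra.omega = _
    ext <;> simp

lemma exists_two_mul_primeSum_squarePrimes_le (K : Type*) [Field K] [NumberField K] {c : ℤ}
    (hc : ¬ IsSquare (c : K)) :
    ∃ C, ∀ᶠ s in 𝓝[>] (1 : ℝ), 2 * primeSum (squarePrimes K c) s ≤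
      primeSum (Set.univ : Set (HeightOneSpectrum (𝓞 K))) s + C := by
  have := fact_sq_ne_of_not_isSquare hc
  let L := QuadraticAlgebra K (c : K) 0
  have : NumberField L := of_module_finite K L
  have hω : (QuadraticAlgebra.omega : L) ^ 2 = c :=
    (omega_sq_eq_algebraMap _).trans (map_intCast _ c)
  obtain ⟨α, hαω, hα⟩ := exists_ringOfIntegers_sq_eq hω
  obtain ⟨σ, hσω⟩ := exists_algEquiv_omega_eq_neg (c : K)
  have hσα : RingOfIntegers.mapAlgEquiv σ α = -α := by
    refine RingOfIntegers.ext ?_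
    change σ (α : L) = -(α : L)
    rw [hαω, hσω]
  obtain ⟨C, hC⟩ := exists_abs_tsum_prime_add_log_le K
  obtain ⟨D, hD⟩ := exists_abs_tsum_prime_add_log_le L
  refine ⟨C + D, ?_⟩
  filter_upwards [hC, hD, self_mem_nhdsWithin] with s hC hD hs1
  have hle := two_mul_primeSum_squarePrimes_le (QuadraticAlgebra.finrank_eq_two (c : K) 0) hα
    (RingOfIntegers.mapAlgEquiv σ) hσα hs1
  rw [primeSum_univ] at hle ⊢
  linarith [(abs_le.1 hC).1, (abs_le.1 hD).2]

end SquarePrimes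

section SymbolPrimes

open NumberField IsDedekindDomain Filter Topology
open scoped nonZeroDivisors

/-- The primes whose norm is a rational prime `p` not dividing `2ab` with Legendre symbols
`(a/p) = ε` and `(b/p) = δ`. -/
def symbolPrimes (K : Type*) [Field K] [NumberField K] (a b ε δ : ℤ) :
    Set (HeightOneSpectrum (𝓞 K)) :=
  goodPrimes K (2 * (a * b)) ∩ {P | jacobiSym a (Ideal.absNorm P.asIdeal) = ε ∧
    jacobiSym b (Ideal.absNorm P.asIdeal) = δ}

lemma jacobiSym_absNorm_eq_one_of_sq_eq {L : Type*} [Field L] [NumberField L] {α : 𝓞 L} {c : ℤ}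
    (hα : α ^ 2 = c) {P : HeightOneSpectrum (𝓞 L)} (hP : P ∈ goodPrimes L c) :
    jacobiSym c (Ideal.absNorm P.asIdeal) = 1 := by
  obtain ⟨hp, hc⟩ := hP
  have hcard : Nat.card (𝓞 L ⧸ P.asIdeal) = Ideal.absNorm P.asIdeal := by
    rw [Ideal.absNorm_apply, Submodule.cardQuot_apply]
  have : Finite (𝓞 L ⧸ P.asIdeal) := Nat.finite_of_card_ne_zero (hcard ▸ hp.ne_zero)
  have := Fintype.ofFinite (𝓞 L ⧸ P.asIdeal)
  rw [Nat.card_eq_fintype_card] at hcard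
  have := Fact.mk hp
  let e := ZMod.ringEquivOfPrime (𝓞 L ⧸ P.asIdeal) hp hcard
  rw [← jacobiSym.legendreSym.to_jacobiSym, legendreSym.eq_one_iff _ fun h ↦
    hc ((ZMod.intCast_zmod_eq_zero_iff_dvd c _).1 h)]
  refine ⟨e.symm (Ideal.Quotient.mk _ α), ?_⟩
  rw [← map_mul, ← map_mul, ← sq, hα, map_intCast, map_intCast]

lemma exists_primeSum_univ_le_finrank_mul_primeSum_symbolPrimes {K L : Type*} [Field K]
    [NumberField K] [Field L] [NumberField L] [Algebra K L] {a b : ℤ} (ha : a ≠ 0) (hb : b ≠ 0)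
    {α β : 𝓞 L} (hα : α ^ 2 = a) (hβ : β ^ 2 = b) :
    ∃ C : ℝ, ∀ s : ℝ, 1 < s → primeSum (Set.univ : Set (HeightOneSpectrum (𝓞 L))) s ≤
      Module.finrank (𝓞 K) (𝓞 L) * primeSum (symbolPrimes K a b 1 1) s + C := by
  obtain ⟨C, hC⟩ := exists_primeSum_le_primeSum_inter_goodPrimes_add L (m := 2 * (a * b))
    (by positivity)
  refine ⟨C, fun s hs ↦ (hC Set.univ s hs).trans (add_le_add_left ?_ C)⟩
  refine le_trans (primeSum_mono ?_ hs) (primeSum_preimage_primeBelow_le _ hs)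
  rintro P ⟨-, hP⟩
  have hnorm := absNorm_primeBelow_of_prime K hP.1
  refine ⟨hP.1, ⟨hnorm ▸ hP.1, hnorm ▸ hP.2⟩, ?_⟩
  rw [Set.mem_ofPred_eq, hnorm]
  exact ⟨jacobiSym_absNorm_eq_one_of_sq_eq hα (goodPrimes_subset_of_dvd L ⟨2 * b, by ring⟩ hP),
    jacobiSym_absNorm_eq_one_of_sq_eq hβ (goodPrimes_subset_of_dvd L ⟨2 * a, by ring⟩ hP)⟩

lemma not_isSquare_algebraMap_quadraticAlgebra {K : Type*} [Field K] [NeZero (2 : K)] {a b : K}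
    (hb : ¬ IsSquare b) (hab : ¬ IsSquare (a * b)) :
    ¬ IsSquare (algebraMap K (QuadraticAlgebra K a 0) b) := by
  rintro ⟨x, hx⟩
  have hre : b = x.re * x.re + a * x.im * x.im := by
    simpa using congrArg QuadraticAlgebra.re hx
  have him : 0 = x.re * x.im + x.im * x.re := by
    simpa using congrArg QuadraticAlgebra.im hx
  rw [mul_comm x.im, ← two_mul, zero_eq_mul] at him
  obtain h | h := mul_eq_zero.1 (him.resolve_left two_ne_zero)
  · exact hab ⟨a * x.im, by rw [hre, h]; ring⟩
  · exact hb ⟨x.re, by rw [hre, h]; ring⟩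

lemma tendsto_log_sub_one_nhdsGT_one :
    Tendsto (fun s : ℝ ↦ Real.log (s - 1)) (𝓝[>] 1) atBot := by
  refine Real.tendsto_log_nhdsGT_zero.comp (tendsto_nhdsWithin_iff.2 ⟨?_, ?_⟩)
  · exact tendsto_nhdsWithin_of_tendsto_nhds
      (Continuous.tendsto' (by fun_prop) _ _ (sub_self 1))
  · filter_upwards [self_mem_nhdsWithin] with s hs using sub_pos.2 (Set.mem_Ioi.1 hs)

variable (K : Type*) [Field K] [NumberField K]

lemma not_exists_primeSum_univ_le : ¬ ∃ B : ℝ, ∀ᶠ s in 𝓝[>] (1 : ℝ),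
    primeSum (Set.univ : Set (HeightOneSpectrum (𝓞 K))) s ≤ B := by
  rintro ⟨B, hB⟩
  obtain ⟨C, hC⟩ := exists_abs_tsum_prime_add_log_le K
  have hlog := tendsto_log_sub_one_nhdsGT_one.eventually_lt_atBot (-(B + C))
  obtain ⟨s, hB, hC, hlog⟩ := (hB.and (hC.and hlog)).exists
  rw [primeSum_univ] at hB
  linarith [(abs_le.1 hC).1]

variable {a b : ℤ}

lemma not_exists_primeSum_symbolPrimes_one_one_le (ha : ¬ IsSquare (a : K))
    (hb : ¬ IsSquare (b : K)) (hab : ¬ IsSquare ((a * b : ℤ) : K)) :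
    ¬ ∃ B : ℝ, ∀ᶠ s in 𝓝[>] (1 : ℝ), primeSum (symbolPrimes K a b 1 1) s ≤ B := by
  have := fact_sq_ne_of_not_isSquare ha
  let L := QuadraticAlgebra K (a : K) 0
  have : NumberField L := of_module_finite K L
  have hω : (QuadraticAlgebra.omega : L) ^ 2 = a :=
    (omega_sq_eq_algebraMap _).trans (map_intCast _ a)
  have hbL : ¬ IsSquare (b : L) := map_intCast (algebraMap K L) b ▸
    not_isSquare_algebraMap_quadraticAlgebra hb (by exact_mod_cast hab)
  have := fact_sq_ne_of_not_isSquare hbL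
  let L' := QuadraticAlgebra L (b : L) 0
  have : NumberField L' := of_module_finite L L'
  have hω' : (QuadraticAlgebra.omega : L') ^ 2 = b :=
    (omega_sq_eq_algebraMap _).trans (map_intCast _ b)
  obtain ⟨α, -, hα⟩ := exists_ringOfIntegers_sq_eq (x := algebraMap L L' QuadraticAlgebra.omega)
    (c := a) (by rw [← map_pow, hω, map_intCast])
  obtain ⟨β, -, hβ⟩ := exists_ringOfIntegers_sq_eq hω'
  obtain ⟨C, hC⟩ := exists_primeSum_univ_le_finrank_mul_primeSum_symbolPrimes (K := K)
    (by rintro rfl; simp at ha) (by rintro rfl; simp at hb) hα hβ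
  rintro ⟨B, hB⟩
  refine not_exists_primeSum_univ_le L' ⟨Module.finrank (𝓞 K) (𝓞 L') * B + C, ?_⟩
  filter_upwards [hB, self_mem_nhdsWithin] with s hB hs
  exact (hC s hs).trans (by gcongr)

variable (a b) in
lemma disjoint_symbolPrimes {ε δ ε' δ' : ℤ} (h : ε ≠ ε' ∨ δ ≠ δ') :
    Disjoint (symbolPrimes K a b ε δ) (symbolPrimes K a b ε' δ') := by
  rw [Set.disjoint_left]
  rintro P ⟨-, hε, hδ⟩ ⟨-, hε', hδ'⟩
  exact h.elim (· (hε.symm.trans hε')) (· (hδ.symm.trans hδ'))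

variable (a b) in
lemma symbolPrimes_one_left_subset_squarePrimes (δ : ℤ) :
    symbolPrimes K a b 1 δ ⊆ squarePrimes K a :=
  fun _ hP ↦ ⟨goodPrimes_subset_of_dvd K ⟨b, by ring⟩ hP.1, hP.2.1⟩

variable (a b) in
lemma symbolPrimes_one_right_subset_squarePrimes (ε : ℤ) :
    symbolPrimes K a b ε 1 ⊆ squarePrimes K b :=
  fun _ hP ↦ ⟨goodPrimes_subset_of_dvd K ⟨a, by ring⟩ hP.1, hP.2.2⟩

variable (a b) in
lemma symbolPrimes_subset_squarePrimes_mul {ε δ : ℤ} (h : ε * δ = 1) :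
    symbolPrimes K a b ε δ ⊆ squarePrimes K (a * b) :=
  fun P hP ↦ ⟨hP.1, by rw [Set.mem_ofPred_eq, jacobiSym.mul_left, hP.2.1, hP.2.2, h]⟩

lemma goodPrimes_subset_symbolPrimes : goodPrimes K (2 * (a * b)) ⊆
    (symbolPrimes K a b 1 1 ∪ symbolPrimes K a b 1 (-1)) ∪
      (symbolPrimes K a b (-1) 1 ∪ symbolPrimes K a b (-1) (-1)) := by
  intro P hP
  have hsymbol (c : ℤ) (hc : c ∣ 2 * (a * b)) :=
    jacobiSym_eq_one_or_neg_one_of_not_dvd hP.1 fun h ↦ hP.2 (h.trans hc)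
  obtain hε | hε := hsymbol a ⟨2 * b, by ring⟩ <;>
  obtain hδ | hδ := hsymbol b ⟨2 * a, by ring⟩
  · exact .inl (.inl ⟨hP, hε, hδ⟩)
  · exact .inl (.inr ⟨hP, hε, hδ⟩)
  · exact .inr (.inl ⟨hP, hε, hδ⟩)
  · exact .inr (.inr ⟨hP, hε, hδ⟩)

variable {K} in
lemma exists_two_mul_primeSum_add_primeSum_le {c : ℤ} (hc : ¬ IsSquare (c : K))
    {A B : Set (HeightOneSpectrum (𝓞 K))} (hdisj : Disjoint A B) (hA : A ⊆ squarePrimes K c)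
    (hB : B ⊆ squarePrimes K c) :
    ∃ C : ℝ, ∀ᶠ s in 𝓝[>] (1 : ℝ), 2 * (primeSum A s + primeSum B s) ≤
      primeSum (Set.univ : Set (HeightOneSpectrum (𝓞 K))) s + C := by
  obtain ⟨C, hC⟩ := exists_two_mul_primeSum_squarePrimes_le K hc
  refine ⟨C, ?_⟩
  filter_upwards [hC, self_mem_nhdsWithin] with s hC hs
  rw [← primeSum_union hdisj hs]
  exact (mul_le_mul_of_nonneg_left (primeSum_mono (Set.union_subset hA hB) hs) two_pos.le).trans hC

lemma exists_primeSum_symbolPrimes_one_one_le (ha : ¬ IsSquare (a : K)) (hb : ¬ IsSquare (b : K)) :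
    ∃ C : ℝ, ∀ᶠ s in 𝓝[>] (1 : ℝ), primeSum (symbolPrimes K a b 1 1) s ≤
      primeSum (symbolPrimes K a b (-1) (-1)) s + C := by
  have hab : a * b ≠ 0 := mul_ne_zero (by rintro rfl; simp at ha) (by rintro rfl; simp at hb)
  obtain ⟨C, hC⟩ := exists_primeSum_le_primeSum_inter_goodPrimes_add K (m := 2 * (a * b))
    (by positivity)
  obtain ⟨D, hD⟩ := exists_two_mul_primeSum_add_primeSum_le ha
    (disjoint_symbolPrimes K a b (ε := 1) (δ := 1) (ε' := 1) (δ' := -1) (by decide))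
    (symbolPrimes_one_left_subset_squarePrimes K a b _)
    (symbolPrimes_one_left_subset_squarePrimes K a b _)
  obtain ⟨E, hE⟩ := exists_two_mul_primeSum_add_primeSum_le hb
    (disjoint_symbolPrimes K a b (ε := 1) (δ := 1) (ε' := -1) (δ' := 1) (by decide))
    (symbolPrimes_one_right_subset_squarePrimes K a b _)
    (symbolPrimes_one_right_subset_squarePrimes K a b _)
  refine ⟨C + (D + E) / 2, ?_⟩
  filter_upwards [hD, hE, self_mem_nhdsWithin] with s hD hE hs
  have htotal := hC Set.univ s hs
  rw [Set.univ_inter] at htotal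
  have hcover := primeSum_mono (goodPrimes_subset_symbolPrimes K (a := a) (b := b)) hs
  have hunion := primeSum_union_le
    (symbolPrimes K a b 1 1 ∪ symbolPrimes K a b 1 (-1))
    (symbolPrimes K a b (-1) 1 ∪ symbolPrimes K a b (-1) (-1)) hs
  have hunion₁ := primeSum_union_le (symbolPrimes K a b 1 1) (symbolPrimes K a b 1 (-1)) hs
  have hunion₂ := primeSum_union_le (symbolPrimes K a b (-1) 1) (symbolPrimes K a b (-1) (-1)) hs
  linarith

end SymbolPrimes

section IdealInertChar

open NumberField IsDedekindDomain Filter Topology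
open scoped nonZeroDivisors

lemma exists_classGroup_hom {R M : Type*} [CommRing R] [IsDedekindDomain R] [Monoid M]
    (χ : (Ideal R)⁰ →* M) (hχ : ∀ I, ClassGroup.mk0 I = 1 → χ I = 1) :
    ∃ ψ : ClassGroup R →* M, ∀ I, ψ (ClassGroup.mk0 I) = χ I := by
  choose r hr using ClassGroup.mk0_surjective (R := R)
  have hχ_congr (I J : (Ideal R)⁰) (h : ClassGroup.mk0 I = ClassGroup.mk0 J) : χ I = χ J := by
    let J' := r (ClassGroup.mk0 J)⁻¹
    have hIJ' : χ I * χ J' = 1 := by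
      rw [← map_mul, hχ]
      rw [map_mul, hr, h, mul_inv_cancel]
    have hJ'J : χ J' * χ J = 1 := by
      rw [← map_mul, hχ]
      rw [map_mul, hr, inv_mul_cancel]
    exact left_inv_eq_right_inv hIJ' hJ'J
  refine ⟨⟨⟨fun C ↦ χ (r C), hχ _ (hr 1)⟩, fun C D ↦ ?_⟩, fun I ↦ hχ_congr _ _ (hr _)⟩
  change χ (r (C * D)) = χ (r C) * χ (r D)
  rw [← map_mul]
  exact hχ_congr _ _ (by rw [map_mul, hr, hr, hr])

section

variable (K : Type*) [Field K] [NumberField K]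

/-- The character `I ↦ inertChar a b (N I)` of the monoid of nonzero ideals. -/
noncomputable def idealInertChar (a b : ℤ) : (Ideal (𝓞 K))⁰ →* ℤˣ where
  toFun I := inertChar a b (Ideal.absNorm (I : Ideal (𝓞 K)))
  map_one' := by simp
  map_mul' I J := by
    rw [Submonoid.coe_mul, map_mul, inertChar_mul (Ideal.absNorm_ne_zero_of_nonZeroDivisors I)
      (Ideal.absNorm_ne_zero_of_nonZeroDivisors J)]

variable {K} {a b : ℤ}

lemma idealInertChar_primeIdeal_eq_neg_one_iff {P : HeightOneSpectrum (𝓞 K)}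
    (hP : P ∈ goodPrimes K (2 * (a * b))) :
    idealInertChar K a b (primeIdeal P) = -1 ↔ P ∈ symbolPrimes K a b (-1) (-1) := by
  change inertChar a b (Ideal.absNorm P.asIdeal) = -1 ↔ _
  rw [inertChar_prime hP.1, inertSign, ite_eq_left_iff]
  exact ⟨fun h ↦ ⟨hP, by_contra fun h' ↦ absurd (h h') (by decide)⟩, fun h h' ↦ absurd h.2 h'⟩

lemma tsum_units_mul_absNorm_rpow (ε : HeightOneSpectrum (𝓞 K) → ℤˣ) {s : ℝ} (hs : 1 < s) :
    ∑' P, ((ε P : ℤ) : ℝ) * (Ideal.absNorm P.asIdeal : ℝ) ^ (-s) =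
      primeSum (Set.univ : Set (HeightOneSpectrum (𝓞 K))) s - 2 * primeSum {P | ε P = -1} s := by
  have hsum := summable_absNorm_prime_rpow (K := K) hs
  rw [primeSum_univ, primeSum, ← tsum_mul_left, ← hsum.tsum_sub ((hsum.indicator _).mul_left 2)]
  refine tsum_congr fun P ↦ ?_
  obtain hP | hP := Int.units_eq_one_or (ε P)
  · rw [Set.indicator_of_notMem (by rw [Set.mem_ofPred_eq, hP]; decide), hP]
    simp
  · rw [Set.indicator_of_mem (Set.mem_ofPred_eq ▸ hP), hP]
    push_cast
    ring

lemma exists_idealInertChar_primeIdeal_eq_neg_one (ha : ¬ IsSquare (a : K))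
    (hb : ¬ IsSquare (b : K)) (hab : ¬ IsSquare ((a * b : ℤ) : K)) :
    ∃ P, idealInertChar K a b (primeIdeal P) = -1 := by
  obtain hempty | ⟨P, hP⟩ := (symbolPrimes K a b (-1) (-1)).eq_empty_or_nonempty
  · refine absurd ?_ (not_exists_primeSum_symbolPrimes_one_one_le K ha hb hab)
    simpa [hempty, primeSum] using exists_primeSum_symbolPrimes_one_one_le K ha hb
  · exact ⟨P, (idealInertChar_primeIdeal_eq_neg_one_iff hP.1).2 hP⟩

lemma not_exists_tsum_idealInertChar_le (ha : ¬ IsSquare (a : K))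
    (hb : ¬ IsSquare (b : K)) (hab : ¬ IsSquare ((a * b : ℤ) : K)) :
    ¬ ∃ B : ℝ, ∀ᶠ s in 𝓝[>] (1 : ℝ), ∑' P : HeightOneSpectrum (𝓞 K),
      ((idealInertChar K a b (primeIdeal P) : ℤ) : ℝ) * (Ideal.absNorm P.asIdeal : ℝ) ^ (-s) ≤
        B := by
  rintro ⟨B, hB⟩
  have hab0 : a * b ≠ 0 := by rintro h; simp [h] at hab
  obtain ⟨C, hC⟩ := exists_primeSum_le_primeSum_inter_goodPrimes_add K (m := 2 * (a * b))
    (by positivity)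
  obtain ⟨D, hD⟩ := exists_two_mul_primeSum_add_primeSum_le hab
    (disjoint_symbolPrimes K a b (ε := 1) (δ := 1) (ε' := -1) (δ' := -1) (by decide))
    (symbolPrimes_subset_squarePrimes_mul K a b (by decide))
    (symbolPrimes_subset_squarePrimes_mul K a b (by decide))
  refine not_exists_primeSum_symbolPrimes_one_one_le K ha hb hab ⟨(B + D) / 2 + C, ?_⟩
  filter_upwards [hB, hD, self_mem_nhdsWithin] with s hB hD hs
  rw [tsum_units_mul_absNorm_rpow _ hs] at hB
  have hle := hC {P | idealInertChar K a b (primeIdeal P) = -1} s hs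
  have hinter : {P | idealInertChar K a b (primeIdeal P) = -1} ∩ goodPrimes K (2 * (a * b)) ⊆
      symbolPrimes K a b (-1) (-1) :=
    fun P hP ↦ (idealInertChar_primeIdeal_eq_neg_one_iff hP.2).1 hP.1
  linarith [primeSum_mono hinter hs]

end

lemma exists_inertChar_absNorm_eq_neg_one (K : Type*) [Field K] [NumberField K] {a b : ℤ}
    (ha : ¬ IsSquare (a : K)) (hb : ¬ IsSquare (b : K)) (hab : ¬ IsSquare ((a * b : ℤ) : K)) :
    ∃ z : 𝓞 K, z ≠ 0 ∧ inertChar a b (Ideal.absNorm (Ideal.span {z})) = -1 := by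
  by_contra! hcon
  obtain ⟨ψ, hψ⟩ := exists_classGroup_hom (idealInertChar K a b) fun I hI ↦ by
    obtain ⟨z, hz⟩ := (ClassGroup.mk0_eq_one_iff I.2).1 hI
    refine (Int.units_eq_one_or _).resolve_right ?_
    change inertChar a b (Ideal.absNorm (I : Ideal (𝓞 K))) ≠ -1
    rw [hz]
    refine hcon z ?_
    rintro rfl
    exact nonZeroDivisors.coe_ne_zero I (by simpa using hz)
  let φ : ClassGroup (𝓞 K) →* ℝ :=
    ((Int.castRingHom ℝ : ℤ →* ℝ).comp (Units.coeHom ℤ)).comp ψ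
  have hφ (I : (Ideal (𝓞 K))⁰) :
      φ (ClassGroup.mk0 I) = ((idealInertChar K a b I : ℤ) : ℝ) := by
    rw [← hψ]
    rfl
  have hφ_abs (C : ClassGroup (𝓞 K)) : |φ C| = 1 := by
    change |((ψ C : ℤ) : ℝ)| = 1
    exact_mod_cast Int.isUnit_iff_abs_eq.1 (ψ C).isUnit
  have hφ_ne : φ ≠ 1 := by
    obtain ⟨P, hP⟩ := exists_idealInertChar_primeIdeal_eq_neg_one ha hb hab
    intro h
    have hφP := hφ (primeIdeal P)
    rw [h, hP] at hφP
    norm_num at hφP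
  have hbounded := exists_tsum_prime_class_le hφ_abs hφ_ne
  simp only [hφ] at hbounded
  exact not_exists_tsum_idealInertChar_le ha hb hab hbounded

end IdealInertChar

/-! ### Norm forms outside the biquadratic norm subgroup -/

section NormForms

open NumberField

lemma algebra_norm_quadraticAlgebra {R : Type*} [CommRing R] {c : R} (z : QuadraticAlgebra R c 0) :
    Algebra.norm R z = z.re ^ 2 - c * z.im ^ 2 := by
  have h := QuadraticAlgebra.det_toLinearMap_eq_norm z
  rw [QuadraticAlgebra.norm_def] at h
  rw [Algebra.norm_apply]
  refine (congrArg LinearMap.det ?_).trans (h.trans (by ring))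
  ext w <;> simp

lemma exists_norm_sq_sub_mul_sq_eq {F K : Type*} [Field F] [Field K] [Algebra F K]
    {c : F} (hc : ¬ IsSquare c) (x y : K) :
    ∃ u v : F, Algebra.norm F (x ^ 2 - algebraMap F K c * y ^ 2) = u ^ 2 - c * v ^ 2 := by
  have := fact_sq_ne_of_not_isSquare hc
  let E := QuadraticAlgebra F c 0
  let L := QuadraticAlgebra K (algebraMap F K c) 0
  let φ : E →ₐ[F] L := QuadraticAlgebra.lift ⟨QuadraticAlgebra.omega, by
    rw [← sq, omega_sq_eq_algebraMap, zero_smul, add_zero, ← IsScalarTower.algebraMap_apply,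
      Algebra.algebraMap_eq_smul_one]⟩
  let : Algebra E L := φ.toRingHom.toAlgebra
  have : IsScalarTower F E L := .of_algebraMap_eq fun r ↦ (φ.commutes r).symm
  let z : L := ⟨x, y⟩
  refine ⟨(Algebra.norm E z).re, (Algebra.norm E z).im, ?_⟩
  have hz : Algebra.norm K z = x ^ 2 - algebraMap F K c * y ^ 2 := algebra_norm_quadraticAlgebra z
  rw [← algebra_norm_quadraticAlgebra, ← hz, Algebra.norm_norm]
  exact (Algebra.norm_norm (S := E)).symm

variable {k : Type*} [Field k] [NumberField k] {p q : ℕ}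

lemma ratInertChar_norm_eq_one_of_mem_normFormSubgroup {a b c : ℤ} (hc : ¬ IsSquare (c : k))
    (hchar : ∀ x y : ℤ, x ^ 2 - c * y ^ 2 ≠ 0 → inertChar a b (x ^ 2 - c * y ^ 2).natAbs = 1)
    {v : kˣ} (hv : v ∈ normFormSubgroup (c : k)) :
    ratInertChar a b (Algebra.norm ℚ (v : k)) = 1 := by
  have hcQ : ¬ IsSquare (c : ℚ) := fun h ↦ hc (by simpa using h.map (algebraMap ℚ k))
  obtain ⟨x, y, hxy⟩ := mem_normFormSubgroup.1 hv
  obtain ⟨X, Y, hXY⟩ := exists_norm_sq_sub_mul_sq_eq hcQ x y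
  rw [map_intCast] at hXY
  have h0 : Algebra.norm ℚ (v : k) ≠ 0 := Algebra.norm_ne_zero_iff.2 v.ne_zero
  rw [hxy, hXY] at h0 ⊢
  exact ratInertChar_sq_sub_mul_sq hchar h0

lemma ratInertChar_norm_eq_one_of_mem_biquadraticNormSubgroup (hpq : LinkedPrimes p q)
    (hp : ¬ IsSquare (p : k)) (hq : ¬ IsSquare (q : k)) (hmul : ¬ IsSquare (p * q : k)) {u : kˣ}
    (hu : u ∈ biquadraticNormSubgroup (p : k) q) :
    ratInertChar p q (Algebra.norm ℚ (u : k)) = 1 := by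
  have hnorm (v : kˣ) : Algebra.norm ℚ (v : k) ≠ 0 := Algebra.norm_ne_zero_iff.2 v.ne_zero
  obtain ⟨w, hw, v₃, hv₃, rfl⟩ := Subgroup.mem_sup.1 hu
  obtain ⟨v₁, hv₁, v₂, hv₂, rfl⟩ := Subgroup.mem_sup.1 hw
  have h₁ : ratInertChar p q (Algebra.norm ℚ (v₁ : k)) = 1 :=
    ratInertChar_norm_eq_one_of_mem_normFormSubgroup (c := p) (by simpa using hp)
      (fun x y _ ↦ inertChar_sq_sub_mul_sq_left x y) (by simpa using hv₁)
  have h₂ : ratInertChar p q (Algebra.norm ℚ (v₂ : k)) = 1 :=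
    ratInertChar_norm_eq_one_of_mem_normFormSubgroup (c := q) (by simpa using hq)
      (fun x y _ ↦ inertChar_sq_sub_mul_sq_right x y) (by simpa using hv₂)
  have h₃ : ratInertChar p q (Algebra.norm ℚ (v₃ : k)) = 1 :=
    ratInertChar_norm_eq_one_of_mem_normFormSubgroup (c := p * q) (by simpa using hmul)
      (fun _ _ ↦ hpq.inertChar_sq_sub_mul_sq) (by simpa using hv₃)
  rw [Units.val_mul, Units.val_mul, map_mul, map_mul, ratInertChar_mul
    (mul_ne_zero (hnorm _) (hnorm _)) (hnorm _), ratInertChar_mul (hnorm _) (hnorm _), h₁, h₂, h₃,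
    mul_one, mul_one]

lemma exists_ratInertChar_norm_eq_neg_one (hp : ¬ IsSquare (p : k)) (hq : ¬ IsSquare (q : k))
    (hmul : ¬ IsSquare (p * q : k)) :
    ∃ z : kˣ, ratInertChar p q (Algebra.norm ℚ (z : k)) = -1 := by
  obtain ⟨z, hz, hchar⟩ := exists_inertChar_absNorm_eq_neg_one k (a := p) (b := q)
    (by simpa using hp) (by simpa using hq) (by simpa using hmul)
  refine ⟨Units.mk0 _ (RingOfIntegers.coe_ne_zero_iff.2 hz), ?_⟩
  rw [Units.val_mk0, ← Algebra.coe_norm_int, ratInertChar_intCast, ← Ideal.absNorm_span_singleton,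
    hchar]

/-- The value produced is the relative norm of an element of `k(√(qt))`. -/
lemma exists_sq_sub_mul_sq_notMem_biquadraticNormSubgroup (hpq : LinkedPrimes p q)
    (hp : ¬ IsSquare (p : k)) (hq : ¬ IsSquare (q : k)) (hmul : ¬ IsSquare (p * q : k)) {t : k}
    (ht : ¬ IsSquare t) (hpt : ¬ IsSquare (p * t)) (hqt : ¬ IsSquare (q * t))
    (hpqt : ¬ IsSquare (p * q * t)) :
    ∃ x y : k, ∃ u : kˣ, (u : k) = x ^ 2 - q * t * y ^ 2 ∧
      u ∉ biquadraticNormSubgroup (p : k) q := by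
  have hq0 : (q : k) ≠ 0 := by rintro h; simp [h] at hq
  have hcancel {x : k} (hx : IsSquare (q ^ 2 * x)) : IsSquare x := by
    have := hx.div (IsSquare.sq (q : k))
    rwa [mul_div_cancel_left₀ _ (pow_ne_zero 2 hq0)] at this
  have := fact_sq_ne_of_not_isSquare hqt
  let M := QuadraticAlgebra k (q * t) 0
  have : NumberField M := of_module_finite k M
  have hpM : ¬ IsSquare (p : M) := map_natCast (algebraMap k M) p ▸
    not_isSquare_algebraMap_quadraticAlgebra hp fun h ↦ hpqt (by convert h using 1; ring)
  have hqM : ¬ IsSquare (q : M) := map_natCast (algebraMap k M) q ▸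
    not_isSquare_algebraMap_quadraticAlgebra hq fun h ↦ ht (hcancel (by convert h using 1; ring))
  have hmulM : ¬ IsSquare (p * q : M) := by
    rw [← map_natCast (algebraMap k M) p, ← map_natCast (algebraMap k M) q, ← map_mul]
    exact not_isSquare_algebraMap_quadraticAlgebra hmul fun h ↦
      hpt (hcancel (by convert h using 1; ring))
  obtain ⟨z, hz⟩ := exists_ratInertChar_norm_eq_neg_one hpM hqM hmulM
  have hz0 : Algebra.norm k (z : M) ≠ 0 := Algebra.norm_ne_zero_iff.2 z.ne_zero
  refine ⟨(z : M).re, (z : M).im, Units.mk0 _ hz0, algebra_norm_quadraticAlgebra _, fun hmem ↦ ?_⟩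
  have hone := ratInertChar_norm_eq_one_of_mem_biquadraticNormSubgroup hpq hp hq hmul hmem
  rw [Units.val_mk0, Algebra.norm_norm, hz] at hone
  exact absurd hone (by decide)

end NormForms

section ExistsLinkedPrimes

open NumberField IsDedekindDomain Filter Topology

lemma exists_prime_gt_and_modEq_and_modEq {m n a b : ℕ} (hm : m ≠ 0) (hn : n ≠ 0)
    (hmn : m.Coprime n) (ha : a.Coprime m) (hb : b.Coprime n) (N : ℕ) :
    ∃ p > N, p.Prime ∧ p ≡ a [MOD m] ∧ p ≡ b [MOD n] := by
  obtain ⟨x, hxa, hxb⟩ := Nat.chineseRemainder hmn a b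
  have : NeZero (m * n) := ⟨mul_ne_zero hm hn⟩
  have hx : IsUnit (x : ZMod (m * n)) := by
    rw [ZMod.isUnit_iff_coprime]
    exact Nat.Coprime.mul_right (hxa.gcd_eq.trans ha) (hxb.gcd_eq.trans hb)
  obtain ⟨p, hpN, hp, hpx⟩ := Nat.forall_exists_prime_gt_and_eq_mod hx N
  rw [ZMod.natCast_eq_natCast_iff] at hpx
  exact ⟨p, hpN, hp, (hpx.of_mul_right n).trans hxa, (hpx.of_mul_left m).trans hxb⟩

lemma exists_coprime_and_jacobiSym_eq_neg_one {l : ℕ} (hl : l.Prime) (h2 : l ≠ 2) :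
    ∃ g : ℕ, g.Coprime l ∧ jacobiSym g l = -1 := by
  have := Fact.mk hl
  obtain ⟨g, hg⟩ := FiniteField.exists_nonsquare (F := ZMod l) (by rwa [ZMod.ringChar_zmod_n])
  refine ⟨g.val, ?_, ?_⟩
  · rw [← ZMod.isUnit_iff_coprime, ZMod.natCast_zmod_val, isUnit_iff_ne_zero]
    rintro rfl
    exact hg .zero
  · rw [← jacobiSym.legendreSym.to_jacobiSym, legendreSym.eq_neg_one_iff]
    simpa using hg

lemma jacobiSym_eq_of_modEq {a b l : ℕ} (h : a ≡ b [MOD l]) : jacobiSym a l = jacobiSym b l :=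
  jacobiSym.mod_left' (Int.natCast_modEq_iff.2 h)

lemma jacobiSym_eq_one_of_modEq_one {a l : ℕ} (h : a ≡ 1 [MOD l]) : jacobiSym a l = 1 := by
  rw [jacobiSym_eq_of_modEq h, Nat.cast_one, jacobiSym.one_left]

lemma exists_prime_gt_and_modEq_one_and_jacobiSym_eq_neg_one {l m : ℕ} (hl : l.Prime) (h2 : l ≠ 2)
    (hm : m ≠ 0) (hml : m.Coprime l) (N : ℕ) :
    ∃ p > N, p.Prime ∧ p ≡ 1 [MOD m] ∧ jacobiSym p l = -1 := by
  obtain ⟨g, hg, hgl⟩ := exists_coprime_and_jacobiSym_eq_neg_one hl h2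
  obtain ⟨p, hpN, hp, hpm, hpg⟩ := exists_prime_gt_and_modEq_and_modEq hm hl.ne_zero hml
    (Nat.coprime_one_left m) hg N
  exact ⟨p, hpN, hp, hpm, (jacobiSym_eq_of_modEq hpg).trans hgl⟩

lemma exists_linkedPrimes_jacobiSym_eq {l₁ l₂ : ℕ} (hl₁ : l₁.Prime) (hl₂ : l₂.Prime) (h₁ : l₁ ≠ 2)
    (h₂ : l₂ ≠ 2) (h₁₂ : l₁ ≠ l₂) :
    ∃ p q : ℕ, LinkedPrimes p q ∧ jacobiSym p l₁ = -1 ∧ jacobiSym q l₁ = 1 ∧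
      jacobiSym q l₂ = -1 := by
  obtain ⟨p, hpl₂, hp, -, hpl₁⟩ := exists_prime_gt_and_modEq_one_and_jacobiSym_eq_neg_one hl₁ h₁
    one_ne_zero (Nat.coprime_one_left l₁) l₂
  have hcop : (8 * p * l₁).Coprime l₂ :=
    (((Nat.coprime_primes Nat.prime_two hl₂).2 h₂.symm |>.pow_left 3).mul_left
      ((Nat.coprime_primes hp hl₂).2 hpl₂.ne')).mul_left ((Nat.coprime_primes hl₁ hl₂).2 h₁₂)
  obtain ⟨q, -, hq, hq1, hql₂⟩ := exists_prime_gt_and_modEq_one_and_jacobiSym_eq_neg_one hl₂ h₂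
    (by simp [hp.ne_zero, hl₁.ne_zero]) hcop 0
  have hq8 : q % 8 = 1 := (hq1.of_mul_right l₁).of_mul_right p
  refine ⟨p, q, ⟨hp, hq, hq8, ?_⟩, hpl₁, jacobiSym_eq_one_of_modEq_one (hq1.of_mul_left _), hql₂⟩
  rw [jacobiSym_comm_of_prime hp hq8]
  exact jacobiSym_eq_one_of_modEq_one ((hq1.of_mul_right l₁).of_mul_left 8)

variable (K : Type*) [Field K] [NumberField K]

lemma goodPrimes_nonempty {m : ℤ} (hm : m ≠ 0) : (goodPrimes K m).Nonempty := by
  by_contra h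
  rw [Set.not_nonempty_iff_eq_empty] at h
  obtain ⟨C, hC⟩ := exists_primeSum_le_primeSum_inter_goodPrimes_add K hm
  refine not_exists_primeSum_univ_le K ⟨C, ?_⟩
  filter_upwards [self_mem_nhdsWithin] with s hs
  simpa [h, primeSum] using hC Set.univ s hs

variable {K}

lemma not_isSquare_intCast_of_jacobiSym_eq_neg_one {P : HeightOneSpectrum (𝓞 K)}
    (hP : (Ideal.absNorm P.asIdeal).Prime) {c : ℤ}
    (hc : jacobiSym c (Ideal.absNorm P.asIdeal) = -1) : ¬ IsSquare (c : K) := by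
  rintro ⟨x, hx⟩
  obtain ⟨α, -, hα⟩ := exists_ringOfIntegers_sq_eq ((sq x).trans hx.symm)
  have hndvd := not_dvd_of_jacobiSym_ne_zero hP (c := c) (by rw [hc]; decide)
  rw [jacobiSym_absNorm_eq_one_of_sq_eq hα ⟨hP, hndvd⟩] at hc
  exact absurd hc (by decide)

variable (K) in
lemma exists_linkedPrimes :
    ∃ p q : ℕ, LinkedPrimes p q ∧ ¬ IsSquare (p : K) ∧ ¬ IsSquare (q : K) ∧
      ¬ IsSquare (p * q : K) := by
  obtain ⟨P₁, hP₁, h₁⟩ := goodPrimes_nonempty K (m := 2) two_ne_zero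
  have hl₁ := hP₁.ne_zero
  obtain ⟨P₂, hP₂, h₂⟩ := goodPrimes_nonempty K (m := 2 * Ideal.absNorm P₁.asIdeal) (by positivity)
  obtain ⟨p, q, hpq, hp, hq₁, hq₂⟩ := exists_linkedPrimes_jacobiSym_eq hP₁ hP₂
    (fun h ↦ h₁ (by rw [h]; rfl)) (fun h ↦ h₂ (by rw [h]; exact dvd_mul_right _ _))
    (fun h ↦ h₂ (by rw [h]; exact dvd_mul_left _ _))
  have hmul : jacobiSym (p * q) (Ideal.absNorm P₁.asIdeal) = -1 := by
    rw [jacobiSym.mul_left, hp, hq₁, mul_one]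
  refine ⟨p, q, hpq, ?_, ?_, ?_⟩
  · exact_mod_cast not_isSquare_intCast_of_jacobiSym_eq_neg_one hP₁ hp
  · exact_mod_cast not_isSquare_intCast_of_jacobiSym_eq_neg_one hP₂ hq₂
  · exact_mod_cast not_isSquare_intCast_of_jacobiSym_eq_neg_one hP₁ hmul

end ExistsLinkedPrimes

/-! ### Non-squares and non-`2 ^ n`-th powers -/

namespace IsDiophantineIn

open MvPolynomial

variable {k σ : Type*} [Field k]

lemma isSquare_mul (c : k) (i : σ) : IsDiophantineIn {a : σ → k | IsSquare (c * a i)} := by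
  convert exists_zeroLocus (τ := Unit) (ι := Unit)
    (fun _ ↦ C c * X (Sum.inl i) - X (Sum.inr ()) * X (Sum.inr ()) :
      Unit → MvPolynomial (σ ⊕ Unit) k) using 1
  ext a
  simp only [Set.mem_ofPred_eq, map_sub, map_mul, eval_C, eval_X, Sum.elim_inl, Sum.elim_inr,
    forall_const, sub_eq_zero]
  exact ⟨fun ⟨r, h⟩ ↦ ⟨fun _ ↦ r, h⟩, fun ⟨b, h⟩ ↦ ⟨b (), h⟩⟩

/-- The nine auxiliary unknowns are `x`, `y`, three pairs of arguments of the norm forms whose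
product is `u`, and an inverse of `u`. -/
lemma exists_sq_sub_mul_sq_eq_mul_mem (a b d : k) (i : σ) :
    IsDiophantineIn {t : σ → k | ∃ x y : k, ∃ u ∈ biquadraticNormSubgroup a b,
      x ^ 2 - b * t i * y ^ 2 = d * u} := by
  let z (j : Fin 9) : MvPolynomial (σ ⊕ Fin 9) k := X (Sum.inr j)
  let v := (z 2 ^ 2 - C a * z 3 ^ 2) * (z 4 ^ 2 - C b * z 5 ^ 2) *
    (z 6 ^ 2 - C (a * b) * z 7 ^ 2)
  convert exists_zeroLocus ![z 0 ^ 2 - C b * X (Sum.inl i) * z 1 ^ 2 - C d * v, v * z 8 - 1] using 1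
  ext t
  simp only [Set.mem_ofPred_eq, Fin.forall_fin_two, Matrix.cons_val_zero, Matrix.cons_val_one,
    map_sub, map_mul, map_pow, map_one, eval_C, eval_X, Sum.elim_inl, Sum.elim_inr, z, v,
    sub_eq_zero]
  constructor
  · rintro ⟨x, y, u, hu, h⟩
    obtain ⟨w, hw, u₃, hu₃, rfl⟩ := Subgroup.mem_sup.1 hu
    obtain ⟨u₁, hu₁, u₂, hu₂, rfl⟩ := Subgroup.mem_sup.1 hw
    obtain ⟨x₁, y₁, h₁⟩ := mem_normFormSubgroup.1 hu₁
    obtain ⟨x₂, y₂, h₂⟩ := mem_normFormSubgroup.1 hu₂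
    obtain ⟨x₃, y₃, h₃⟩ := mem_normFormSubgroup.1 hu₃
    refine ⟨![x, y, x₁, y₁, x₂, y₂, x₃, y₃, ((u₁ * u₂ * u₃)⁻¹ : kˣ)], ?_, ?_⟩
    · simpa [h₁, h₂, h₃] using h
    · simpa [h₁, h₂, h₃] using (u₁ * u₂ * u₃).mul_inv
  · rintro ⟨c, h, hc⟩
    have h0 := left_ne_zero_of_mul_eq_one hc
    have h₃ := right_ne_zero_of_mul h0
    have h₂ := right_ne_zero_of_mul (left_ne_zero_of_mul h0)
    have h₁ := left_ne_zero_of_mul (left_ne_zero_of_mul h0)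
    refine ⟨c 0, c 1, Units.mk0 _ h₁ * Units.mk0 _ h₂ * Units.mk0 _ h₃,
      Subgroup.mul_mem_sup (Subgroup.mul_mem_sup ?_ ?_) ?_, h⟩ <;>
    exact mem_normFormSubgroup.2 ⟨_, _, rfl⟩

end IsDiophantineIn

section NonPowers

lemma mem_biquadraticNormSubgroup_of_isSquare {k : Type*} [Field k] {a b t x y : k} {d u : kˣ}
    (ht : IsSquare t) (hu : u ∈ biquadraticNormSubgroup a b)
    (h : x ^ 2 - b * t * y ^ 2 = d * u) : d ∈ biquadraticNormSubgroup a b := by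
  obtain ⟨s, rfl⟩ := ht
  refine (Subgroup.mul_mem_cancel_right _ hu).1
    (normFormSubgroup_right_le a b (mem_normFormSubgroup.2 ⟨x, s * y, ?_⟩))
  rw [Units.val_mul, ← h]
  ring

lemma not_isSquare_of_not_isSquare_left_of_isSquare_mul {G : Type*} [CommGroupWithZero G] {c t : G}
    (ht : t ≠ 0) (hc : ¬ IsSquare c) (hct : IsSquare (c * t)) : ¬ IsSquare t := fun h ↦
  hc <| by simpa only [mul_div_cancel_right₀ _ ht] using hct.div h

lemma exists_finite_forall_not_isSquare_iff (k : Type*) [Field k] [NumberField k] :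
    ∃ (a b : k) (D : Set kˣ), D.Finite ∧ ∀ t : k, t ≠ 0 → (¬ IsSquare t ↔
      (∃ c ∈ ({a, b, a * b} : Set k), IsSquare (c * t)) ∨
      ∃ d ∈ D, ∃ x y : k, ∃ u ∈ biquadraticNormSubgroup a b, x ^ 2 - b * t * y ^ 2 = d * u) := by
  obtain ⟨p, q, hpq, hp, hq, hmul⟩ := exists_linkedPrimes k
  set H := biquadraticNormSubgroup (p : k) q with hH
  have : H.FiniteIndex := by
    simpa [hH] using biquadraticNormSubgroup_finiteIndex (k := k) (a := p) (b := q)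
      (by simpa using hp) (by simpa using hq) (by simpa using hmul)
  have : Finite (kˣ ⧸ H) := Subgroup.finite_quotient_of_finiteIndex
  refine ⟨p, q, Set.range (Quotient.out : kˣ ⧸ H → kˣ) \ H, (Set.finite_range _).sdiff,
    fun t ht ↦ ⟨fun hsq ↦ ?_, ?_⟩⟩
  · by_contra! hcon
    obtain ⟨hc, hD⟩ := hcon
    obtain ⟨x, y, u, hu, huH⟩ := exists_sq_sub_mul_sq_notMem_biquadraticNormSubgroup hpq hp hq hmul
      hsq (hc _ (by simp)) (hc _ (by simp)) (hc _ (by simp))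
    have hmem : (u : kˣ ⧸ H).out⁻¹ * u ∈ H := by
      rw [← QuotientGroup.eq, QuotientGroup.out_eq']
    refine hD (u : kˣ ⧸ H).out ⟨⟨_, rfl⟩, fun hout ↦ huH ?_⟩ x y _ hmem ?_
    · simpa only [mul_inv_cancel_left] using H.mul_mem hout hmem
    · rw [← Units.val_mul, mul_inv_cancel_left, hu]
  · rintro (⟨c, hc, hct⟩ | ⟨d, ⟨-, hd⟩, x, y, u, hu, h⟩)
    · refine not_isSquare_of_not_isSquare_left_of_isSquare_mul ht ?_ hct
      obtain rfl | rfl | rfl := hc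
      exacts [hp, hq, hmul]
    · exact fun hsq ↦ hd (mem_biquadraticNormSubgroup_of_isSquare hsq hu h)

lemma isDiophantineIn_not_isSquare (k : Type*) [Field k] [NumberField k] {σ : Type*} (i : σ) :
    IsDiophantineIn {t : σ → k | t i ≠ 0 ∧ ¬ IsSquare (t i)} := by
  obtain ⟨a, b, D, hD, h⟩ := exists_finite_forall_not_isSquare_iff k
  convert (IsDiophantineIn.ne_zero i).inter
    ((IsDiophantineIn.biUnion (Set.toFinite {a, b, a * b})
      fun c _ ↦ IsDiophantineIn.isSquare_mul c i).union
    (IsDiophantineIn.biUnion hD fun d _ ↦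
      IsDiophantineIn.exists_sq_sub_mul_sq_eq_mul_mem a b (d : k) i)) using 1
  ext t
  simp only [Set.mem_ofPred_eq, Set.mem_inter_iff, Set.mem_union, Set.mem_iUnion, exists_prop]
  exact and_congr_right (h (t i))

lemma exists_pow_two_pow_succ_eq_sq_iff {R : Type*} [CommRing R] [NoZeroDivisors R] (n : ℕ)
    (s : R) :
    (∃ r : R, r ≠ 0 ∧ r ^ 2 ^ (n + 1) = s ^ 2) ↔
      (∃ r : R, r ≠ 0 ∧ r ^ 2 ^ n = s) ∨ ∃ r : R, r ≠ 0 ∧ r ^ 2 ^ n = -s := by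
  simp only [pow_succ (2 : ℕ), pow_mul, sq_eq_sq_iff_eq_or_eq_neg, and_or_left, exists_or]

lemma not_exists_pow_two_pow_succ_eq_iff {R : Type*} [CommRing R] [NoZeroDivisors R] (n : ℕ)
    (t : R) :
    (t ≠ 0 ∧ ¬ ∃ r : R, r ≠ 0 ∧ r ^ 2 ^ (n + 1) = t) ↔
      (t ≠ 0 ∧ ¬ IsSquare t) ∨ ∃ s : R, ((s ≠ 0 ∧ ¬ ∃ r : R, r ≠ 0 ∧ r ^ 2 ^ n = s) ∧
        (-s ≠ 0 ∧ ¬ ∃ r : R, r ≠ 0 ∧ r ^ 2 ^ n = -s)) ∧ t = s ^ 2 := by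
  constructor
  · rintro ⟨ht, h⟩
    by_cases hsq : IsSquare t
    · obtain ⟨s, rfl⟩ := hsq
      rw [← sq, exists_pow_two_pow_succ_eq_sq_iff, not_or] at h
      have hs : s ≠ 0 := left_ne_zero_of_mul ht
      exact .inr ⟨s, ⟨⟨hs, h.1⟩, neg_ne_zero.2 hs, h.2⟩, (sq s).symm⟩
    · exact .inl ⟨ht, hsq⟩
  · rintro (⟨ht, hsq⟩ | ⟨s, ⟨⟨hs, hpos⟩, -, hneg⟩, rfl⟩)
    · exact ⟨ht, fun ⟨r, _, hr⟩ ↦ hsq ⟨r ^ 2 ^ n, by rw [← hr, pow_succ 2, pow_mul, sq]⟩⟩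
    · rw [exists_pow_two_pow_succ_eq_sq_iff, not_or]
      exact ⟨pow_ne_zero 2 hs, hpos, hneg⟩

lemma isDiophantineIn_not_two_pow_powers (k : Type*) [Field k] [NumberField k] (n : ℕ) :
    IsDiophantineIn {t : Fin 1 → k | t 0 ≠ 0 ∧ ¬ ∃ s : k, s ≠ 0 ∧ s ^ 2 ^ n = t 0} := by
  induction n with
  | zero =>
    convert IsDiophantineIn.zeroLocus fun _ : Unit ↦ (1 : MvPolynomial (Fin 1) k) using 1
    ext t
    simp
  | succ n ih =>
    let s : MvPolynomial (Fin 1 ⊕ Unit) k := MvPolynomial.X (Sum.inr ())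
    convert (isDiophantineIn_not_isSquare k 0).union
      (((ih.preimage fun _ ↦ s).inter (ih.preimage fun _ ↦ -s)).inter
        (IsDiophantineIn.zeroLocus fun _ : Unit ↦
          MvPolynomial.X (Sum.inl 0) - s ^ 2)).projection using 1
    ext t
    simp only [not_exists_pow_two_pow_succ_eq_iff, Set.mem_ofPred_eq, Set.mem_union,
      Set.mem_inter_iff, map_neg, map_sub, map_pow, MvPolynomial.eval_X, Sum.elim_inl,
      Sum.elim_inr, forall_const, sub_eq_zero, s]
    exact or_congr_right ⟨fun ⟨s, h⟩ ↦ ⟨fun _ ↦ s, h⟩, fun ⟨b, h⟩ ↦ ⟨b (), h⟩⟩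

end NonPowers

/-- For any number field `k` and any `n ∈ ℤ_{≥0}`, the set `k^× − k^{×2^n}` of nonzero
elements that are not `2^n`-th powers is diophantine over `k`. -/
theorem non_two_pow_powers_isDiophantine (k : Type*) [Field k] [NumberField k] (n : ℕ) :
    IsDiophantineSet k {t : k | t ≠ 0 ∧ ¬ ∃ s : k, s ≠ 0 ∧ s ^ (2 ^ n) = t} :=
  (isDiophantineIn_not_two_pow_powers k n).isDiophantine
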